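/- Let $K$ be a field and $G$ a bicyclic graph, i.e., a graph consisting of two cycles $C_n$ and $C_m$ that either share exactly one vertex or are connected by a path. Then the arithmetical rank of the edge ideal $I(G)$ equals the projective dimension of $R/I(G)$; in particular, the projective dimension of $R/I(G)$ is independent of the characteristic of $K$. -/

import Mathlib

open MvPolynomial

/-- Arithmetical rank: the least number of elements of `R` generating `I` up to radical. -/
noncomputable def araRank {R : Type} [CommRing R] (I : Ideal R) : ℕ :=
  sInf {s : ℕ | ∃ f : Fin s → R, (Ideal.span (Set.range f)).radical = I.radical}


/-- Projective dimension of an `R`-module `M`, characterized via vanishing of the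
`Ext` functors: the least `d` such that `Ext^i(M, N) = 0` for all `i > d` and all `N`. -/
noncomputable def projDim (R : Type) [CommRing R] (M : Type) [AddCommGroup M]
    [Module R M] : ℕ∞ :=
  sInf {d : ℕ∞ | ∀ i : ℕ, d < i → ∀ N : ModuleCat R,
    Subsingleton (((Ext R (ModuleCat R) i).obj (Opposite.op (ModuleCat.of R M))).obj N)}

/-- The edge ideal of the graph consisting of two cycles `Cₙ` and `C_m` sharing exactly
one vertex.  The `N = n + m - 1` vertices are indexed by `ZMod N`: the cycle `Cₙ` has
vertices `0, 1, …, n-1` and the cycle `C_m` has vertices `0, n, n+1, …, n+m-2`, the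
common vertex being `0`. -/
noncomputable def vertexJoinIdeal (K : Type) [Field K] (n m : ℕ) :
    Ideal (MvPolynomial (ZMod (n + m - 1)) K) :=
  Ideal.span
    (((fun j : ℕ => (X ((j : ZMod (n + m - 1))) * X (((j + 1 : ℕ) : ZMod (n + m - 1))) :
        MvPolynomial (ZMod (n + m - 1)) K)) '' Set.Iio (n - 1))
      ∪ {X (((n - 1 : ℕ) : ZMod (n + m - 1))) * X 0}
      ∪ {X 0 * X (((n : ℕ) : ZMod (n + m - 1)))}
      ∪ ((fun j : ℕ => (X ((j : ZMod (n + m - 1))) * X (((j + 1 : ℕ) : ZMod (n + m - 1))) :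
          MvPolynomial (ZMod (n + m - 1)) K)) '' Set.Ico n (n + m - 2))
      ∪ {X (((n + m - 2 : ℕ) : ZMod (n + m - 1))) * X 0})

/-- The `j`-th vertex of the connecting path `x₁ z₁ z₂ ⋯ z_k y₁` in the graph made of two
cycles `Cₙ` and `C_m` joined by a path with `k` internal vertices.  The `N = n + m + k`
vertices are indexed by `ZMod N`: `Cₙ` has vertices `0,…,n-1` (with `y₁ = 0`), `C_m`
has vertices `n,…,n+m-1` (with `x₁ = n`), and `z₁,…,z_k` are `n+m,…,n+m+k-1`. -/
def pathJoinVertex (n m k : ℕ) (j : ℕ) : ZMod (n + m + k) :=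
  if j = 0 then ((n : ℕ) : ZMod (n + m + k))
  else if j = k + 1 then 0
  else ((n + m + j - 1 : ℕ) : ZMod (n + m + k))

/-- The edge ideal of the graph consisting of two cycles `Cₙ` (vertices `0,…,n-1`) and
`C_m` (vertices `n,…,n+m-1`) joined by the path `x₁ z₁ ⋯ z_k y₁` with `k` internal
vertices `n+m,…,n+m+k-1`, where `x₁ = n` and `y₁ = 0`. -/
noncomputable def pathJoinIdeal (K : Type) [Field K] (n m k : ℕ) :
    Ideal (MvPolynomial (ZMod (n + m + k)) K) :=
  Ideal.span
    (((fun j : ℕ => (X ((j : ZMod (n + m + k))) * X (((j + 1 : ℕ) : ZMod (n + m + k))) :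
        MvPolynomial (ZMod (n + m + k)) K)) '' Set.Iio (n - 1))
      ∪ {X (((n - 1 : ℕ) : ZMod (n + m + k))) * X 0}
      ∪ ((fun j : ℕ => (X ((j : ZMod (n + m + k))) * X (((j + 1 : ℕ) : ZMod (n + m + k))) :
          MvPolynomial (ZMod (n + m + k)) K)) '' Set.Ico n (n + m - 1))
      ∪ {X (((n + m - 1 : ℕ) : ZMod (n + m + k))) * X (((n : ℕ) : ZMod (n + m + k)))}
      ∪ ((fun j : ℕ => (X (pathJoinVertex n m k j) * X (pathJoinVertex n m k (j + 1)) :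
          MvPolynomial (ZMod (n + m + k)) K)) '' Set.Iio (k + 1)))

/-!
The arithmetical rank of each edge ideal `I` and the projective dimension of its quotient both
equal an explicit number that does not involve the field.

* `ara` is at most this number: two edges whose product is divisible by an edge already obtained
  can be replaced by their sum (Schmitt–Vogel), and along the cycles and the connecting path this
  saves about one generator in three.
* `ara` and `pd` are at least this number: the sets of edges covering a suitable set of vertices
  form a relative simplicial complex with nonzero cohomology in that degree over every field. This
  complex is a graded piece of the Čech complex of the edges, whose cohomology depends only on the
  radical of `I` and vanishes above the number of generators, and of the Taylor complex modulo the
  variables, which computes `Ext`.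
* `pd` is at most this number: the exact sequence relating `I : v`, `I + (v)` and `I` for a vertex
  `v` reduces the graph to those obtained by deleting `v` and by deleting `v` with its neighbours.
-/

section FaceSign

variable {ι : Type*} [LinearOrder ι]

/-- The sign `(-1) ^ r` of the face `S.erase k` of the simplex `S`, where `r` is the number of
elements of `S` below `k`. -/
def faceSign (k : ι) (S : Finset ι) : ℤ :=
  (-1) ^ (S.filter (· < k)).card

theorem faceSign_mul_self (k : ι) (S : Finset ι) : faceSign k S * faceSign k S = 1 := by
  rw [faceSign, ← mul_pow, neg_one_mul, neg_neg, one_pow]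

theorem faceSign_erase_self (k : ι) (S : Finset ι) : faceSign k (S.erase k) = faceSign k S := by
  rw [faceSign, faceSign, Finset.filter_erase, Finset.erase_eq_of_notMem (by simp)]

theorem faceSign_insert_self (k : ι) (S : Finset ι) : faceSign k (insert k S) = faceSign k S := by
  rw [faceSign, faceSign, Finset.filter_insert, if_neg (lt_irrefl k)]

theorem faceSign_erase_of_lt {j k : ι} {S : Finset ι} (hj : j ∈ S) (h : j < k) :
    faceSign k (S.erase j) = -faceSign k S := by
  have hmem : j ∈ S.filter (· < k) := Finset.mem_filter.2 ⟨hj, h⟩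
  rw [faceSign, faceSign, Finset.filter_erase, ← Finset.card_erase_add_one hmem, pow_succ,
    mul_neg_one, neg_neg]

theorem faceSign_erase_of_gt {j k : ι} (S : Finset ι) (h : k < j) :
    faceSign k (S.erase j) = faceSign k S := by
  rw [faceSign, faceSign, Finset.filter_erase, Finset.erase_eq_of_notMem (by simp [h.le])]

theorem faceSign_mul_faceSign_erase {j k : ι} {S : Finset ι} (hj : j ∈ S) (hk : k ∈ S)
    (h : j ≠ k) :
    faceSign k S * faceSign j (S.erase k) = -(faceSign j S * faceSign k (S.erase j)) := by
  rcases lt_or_gt_of_ne h with h | h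
  · rw [faceSign_erase_of_lt hj h, faceSign_erase_of_gt S h]; ring
  · rw [faceSign_erase_of_lt hk h, faceSign_erase_of_gt S h]; ring

theorem faceSign_map {κ : Type*} [LinearOrder κ] (f : κ ↪o ι) (k : κ) (S : Finset κ) :
    faceSign (f k) (S.map f.toEmbedding) = faceSign k S := by
  simp [faceSign, Finset.filter_map]

end FaceSign

section Coboundary

variable {ι M : Type*} [LinearOrder ι] [AddCommGroup M]

/-- The simplicial coboundary of a function on the finite subsets of `ι`. -/
def coboundary : (Finset ι → M) →+ (Finset ι → M) where
  toFun c S := ∑ k ∈ S, faceSign k S • c (S.erase k)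
  map_zero' := by ext S; simp
  map_add' c c' := by ext S; simp [Finset.sum_add_distrib]

theorem coboundary_apply (c : Finset ι → M) (S : Finset ι) :
    coboundary c S = ∑ k ∈ S, faceSign k S • c (S.erase k) := rfl

theorem coboundary_congr {c c' : Finset ι → M} {S : Finset ι}
    (h : ∀ k ∈ S, c (S.erase k) = c' (S.erase k)) : coboundary c S = coboundary c' S :=
  Finset.sum_congr rfl fun k hk => by rw [h k hk]

theorem exists_ne_zero_of_coboundary_ne_zero {c : Finset ι → M} {S : Finset ι}
    (h : coboundary c S ≠ 0) : ∃ k ∈ S, c (S.erase k) ≠ 0 := by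
  obtain ⟨k, hk, hne⟩ := Finset.exists_ne_zero_of_sum_ne_zero h
  exact ⟨k, hk, fun h0 => hne (by rw [h0, smul_zero])⟩

theorem coboundary_map {M' F : Type*} [AddCommGroup M'] [FunLike F M M']
    [AddMonoidHomClass F M M'] (f : F) (c : Finset ι → M) :
    coboundary (fun S => f (c S)) = fun S => f (coboundary c S) := by
  ext S; simp [coboundary_apply, map_sum, map_zsmul]

theorem coboundary_comp_map {κ : Type*} [LinearOrder κ] (f : κ ↪o ι) (c : Finset ι → M)
    (S : Finset κ) :
    coboundary c (S.map f.toEmbedding) = coboundary (fun T => c (T.map f.toEmbedding)) S := by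
  rw [coboundary_apply, Finset.sum_map]
  refine Finset.sum_congr rfl fun k _ => ?_
  beta_reduce
  rw [Finset.map_erase]
  exact congrArg (· • _) (faceSign_map f k S)

theorem coboundary_coboundary (c : Finset ι → M) : coboundary (coboundary c) = 0 := by
  ext S
  simp only [coboundary_apply, Finset.smul_sum, Pi.zero_apply]
  rw [Finset.sum_sigma']
  refine Finset.sum_involution (fun p _ => ⟨p.2, p.1⟩) ?_ ?_ ?_ fun _ _ => rfl
  all_goals
    rintro ⟨k, j⟩ h
    simp only [Finset.mem_sigma, Finset.mem_erase] at h
    obtain ⟨hk, hjk, hj⟩ := h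
  · simp only [smul_smul, Finset.erase_right_comm (a := k) (b := j)]
    rw [faceSign_mul_faceSign_erase hj hk hjk, neg_smul, neg_add_cancel]
  · exact fun _ e => hjk (congrArg Sigma.fst e)
  · simp [hjk.symm, hj, hk]

/-- Contraction with the vertex `k`, dual to `joinVertex k`; it is a contracting homotopy of the
full simplex (`coboundary_contractVertex_add`). -/
def contractVertex (k : ι) (c : Finset ι → M) (S : Finset ι) : M :=
  if k ∈ S then 0 else faceSign k S • c (insert k S)

/-- Exterior multiplication with the vertex `k`. -/
def joinVertex (k : ι) (c : Finset ι → M) (S : Finset ι) : M :=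
  if k ∈ S then faceSign k S • c (S.erase k) else 0

theorem contractVertex_ne_zero {k : ι} {c : Finset ι → M} {S : Finset ι}
    (h : contractVertex k c S ≠ 0) : k ∉ S ∧ c (insert k S) ≠ 0 := by
  rw [contractVertex, ne_eq, ite_eq_left_iff, not_forall] at h
  exact ⟨h.1, fun h0 => h.2 (by rw [h0, smul_zero])⟩

theorem joinVertex_ne_zero {k : ι} {c : Finset ι → M} {S : Finset ι}
    (h : joinVertex k c S ≠ 0) : k ∈ S ∧ c (S.erase k) ≠ 0 := by
  rw [joinVertex, ne_eq, ite_eq_right_iff, not_forall] at h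
  exact ⟨h.1, fun h0 => h.2 (by rw [h0, smul_zero])⟩

theorem joinVertex_contractVertex {k : ι} {c : Finset ι → M} (hc : ∀ S, c S ≠ 0 → k ∈ S) :
    joinVertex k (contractVertex k c) = c := by
  ext S
  by_cases hk : k ∈ S
  · rw [joinVertex, if_pos hk, contractVertex, if_neg (Finset.notMem_erase k S), smul_smul,
      faceSign_erase_self, faceSign_mul_self, one_smul, Finset.insert_erase hk]
  · rw [joinVertex, if_neg hk, not_ne_iff.1 (mt (hc S) hk)]

theorem contractVertex_joinVertex {k : ι} {c : Finset ι → M} (hc : ∀ S, c S ≠ 0 → k ∉ S) :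
    contractVertex k (joinVertex k c) = c := by
  ext S
  by_cases hk : k ∈ S
  · rw [contractVertex, if_pos hk, not_ne_iff.1 (mt (hc S) (not_not.2 hk))]
  · rw [contractVertex, if_neg hk, joinVertex, if_pos (Finset.mem_insert_self k S), smul_smul,
      faceSign_insert_self, faceSign_mul_self, one_smul, Finset.erase_insert hk]

theorem coboundary_joinVertex (k : ι) (c : Finset ι → M) :
    coboundary (joinVertex k c) = -joinVertex k (coboundary c) := by
  ext S
  by_cases hk : k ∈ S
  · rw [Pi.neg_apply, coboundary_apply, joinVertex, if_pos hk, coboundary_apply,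
      ← Finset.add_sum_erase _ _ hk, Finset.smul_sum, ← Finset.sum_neg_distrib]
    simp only [joinVertex, Finset.notMem_erase, if_false, smul_zero, zero_add]
    refine Finset.sum_congr rfl fun j hj => ?_
    obtain ⟨hjk, hj⟩ := Finset.mem_erase.1 hj
    rw [if_pos (Finset.mem_erase.2 ⟨hjk.symm, hk⟩), smul_smul, smul_smul,
      Finset.erase_right_comm (a := j), faceSign_mul_faceSign_erase hj hk hjk, neg_smul, neg_neg]
  · rw [Pi.neg_apply, joinVertex, if_neg hk, neg_zero]
    exact Finset.sum_eq_zero fun j _ => by simp [joinVertex, hk]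

theorem coboundary_contractVertex_add (k : ι) (c : Finset ι → M) (S : Finset ι) :
    coboundary (contractVertex k c) S + contractVertex k (coboundary c) S = c S := by
  by_cases hk : k ∈ S
  · rw [contractVertex, if_pos hk, add_zero, coboundary_apply, Finset.sum_eq_single_of_mem k hk]
    · rw [contractVertex, if_neg (Finset.notMem_erase k S), Finset.insert_erase hk, smul_smul,
        faceSign_erase_self, faceSign_mul_self, one_smul]
    · intro j _ hjk
      rw [contractVertex, if_pos (Finset.mem_erase.2 ⟨hjk.symm, hk⟩), smul_zero]
  · rw [contractVertex, if_neg hk, coboundary_apply c, Finset.sum_insert hk, smul_add, smul_smul,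
      faceSign_insert_self, faceSign_mul_self, one_smul, Finset.erase_insert hk, add_left_comm,
      Finset.smul_sum, coboundary_apply, ← Finset.sum_add_distrib, Finset.sum_eq_zero, add_zero]
    intro j hj
    have hjk : j ≠ k := fun h => hk (h ▸ hj)
    have hkj : k ∉ S.erase j := mt Finset.mem_of_mem_erase hk
    have hsign := faceSign_mul_faceSign_erase (Finset.mem_insert_of_mem hj)
      (Finset.mem_insert_self k S) hjk
    rw [Finset.erase_insert_of_ne hjk.symm, faceSign_insert_self, faceSign_insert_self,
      Finset.erase_insert hk] at hsign
    -- Both products of signs are `±1`, so the relation `hsign` can be solved for the other pair.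
    have hsign' : faceSign j S * faceSign k (S.erase j)
        = -(faceSign k S * faceSign j (insert k S)) := by
      linear_combination (faceSign k S * faceSign k (S.erase j)) * hsign
        - faceSign j S * faceSign k (S.erase j) * faceSign_mul_self k S
        - faceSign k S * faceSign j (insert k S) * faceSign_mul_self k (S.erase j)
    rw [contractVertex, if_neg hkj, Finset.erase_insert_of_ne hjk.symm, smul_smul, smul_smul,
      ← add_smul, hsign', neg_add_cancel, zero_smul]

end Coboundary

section RelativeCochains

variable {ι L : Type*} [LinearOrder ι] [AddCommGroup L] {M : Finset ι → AddSubgroup L}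
  {F F' P : Set (Finset ι)} {b c : Finset ι → L} {q : ℕ}

/-- The cochains supported on the family `F` with values in the coefficient system `M`. -/
def cochains (M : Finset ι → AddSubgroup L) (F : Set (Finset ι)) :
    AddSubgroup (Finset ι → L) where
  carrier := {c | Function.support c ⊆ F ∧ ∀ S, c S ∈ M S}
  zero_mem' := ⟨by simp, fun S => (M S).zero_mem⟩
  add_mem' ha hb := ⟨(Function.support_add _ _).trans (Set.union_subset ha.1 hb.1),
    fun S => (M S).add_mem (ha.2 S) (hb.2 S)⟩
  neg_mem' ha := ⟨(Function.support_neg _).subset.trans ha.1, fun S => (M S).neg_mem (ha.2 S)⟩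

omit [LinearOrder ι] in
theorem apply_eq_zero_of_mem_cochains (hc : c ∈ cochains M F) {S : Finset ι} (hS : S ∉ F) :
    c S = 0 :=
  Function.notMem_support.1 (mt (@hc.1 S) hS)

omit [LinearOrder ι] in
theorem cochains_mono (h : F ⊆ F') : cochains M F ≤ cochains M F' :=
  fun _ hc => ⟨hc.1.trans h, hc.2⟩

omit [LinearOrder ι] in
theorem indicator_mem_cochains (F' : Set (Finset ι)) (hc : c ∈ cochains M F) :
    F'.indicator c ∈ cochains M (F ∩ F') := by
  refine ⟨fun S hS => ?_, fun S => ?_⟩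
  · obtain ⟨hF', hne⟩ := Set.indicator_apply_ne_zero.1 hS
    exact ⟨hc.1 hne, hF'⟩
  · by_cases hS : S ∈ F'
    · exact Set.indicator_of_mem hS c ▸ hc.2 S
    · exact Set.indicator_of_notMem hS c ▸ (M S).zero_mem

omit [LinearOrder ι] in
theorem indicator_diff_mem_cochains (hc : c ∈ cochains M F) :
    (F \ P).indicator c ∈ cochains M (F \ P) :=
  cochains_mono Set.inter_subset_right (indicator_mem_cochains _ hc)

omit [LinearOrder ι] in
theorem mem_cochains_inter (hc : c ∈ cochains M F) (h : (F \ P).indicator c = 0) :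
    c ∈ cochains M (F ∩ P) :=
  ⟨fun S hS => ⟨hc.1 hS, not_not.1 fun hP =>
    hS ((Set.indicator_apply_eq_zero.1 (congrFun h S)) ⟨hc.1 hS, hP⟩)⟩, hc.2⟩

omit [LinearOrder ι] in
theorem indicator_diff_eq_zero (hb : b ∈ cochains M (F ∩ P)) : (F \ P).indicator b = 0 :=
  Set.indicator_eq_zero.2 (Set.disjoint_left.2 fun _ hS hd => hd.2 (hb.1 hS).2)

/-- The coboundary of the cochains supported on the family `F`. It squares to zero on such cochains
when `F` is order-connected, that is, a difference of two simplicial complexes. -/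
noncomputable def relCoboundary (F : Set (Finset ι)) : (Finset ι → L) →+ (Finset ι → L) :=
  (Set.indicatorHom L F).comp coboundary

theorem relCoboundary_apply (F : Set (Finset ι)) (c : Finset ι → L) :
    relCoboundary F c = F.indicator (coboundary c) := rfl

theorem relCoboundary_of_mem (c : Finset ι → L) {S : Finset ι} (hS : S ∈ F) :
    relCoboundary F c S = coboundary c S := Set.indicator_of_mem hS _

theorem support_relCoboundary_subset (F : Set (Finset ι)) (c : Finset ι → L) :
    Function.support (relCoboundary F c) ⊆ F := Set.support_indicator_subset

theorem card_eq_of_relCoboundary_ne_zero (hq : ∀ S, c S ≠ 0 → S.card = q) {S : Finset ι}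
    (hS : relCoboundary F c S ≠ 0) : S.card = q + 1 := by
  rw [relCoboundary_of_mem c (support_relCoboundary_subset F c hS)] at hS
  obtain ⟨k, hk, hne⟩ := exists_ne_zero_of_coboundary_ne_zero hS
  rw [← hq _ hne, Finset.card_erase_add_one hk]

theorem relCoboundary_map {L' Φ : Type*} [AddCommGroup L'] [FunLike Φ L L']
    [AddMonoidHomClass Φ L L'] (f : Φ) (F : Set (Finset ι)) (c : Finset ι → L) :
    relCoboundary F (fun S => f (c S)) = fun S => f (relCoboundary F c S) := by
  ext S
  by_cases hS : S ∈ F <;> simp [relCoboundary_apply, coboundary_map, hS]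

theorem relCoboundary_contractVertex_eq_self {k : ι} (hF : ∀ S ∈ F, insert k S ∈ F)
    (hc : Function.support c ⊆ F) (hz : relCoboundary F c = 0) :
    relCoboundary F (contractVertex k c) = c := by
  ext S
  by_cases hS : S ∈ F
  · have hins : coboundary c (insert k S) = 0 := by
      rw [← relCoboundary_of_mem c (hF S hS), hz, Pi.zero_apply]
    rw [relCoboundary_of_mem _ hS, ← coboundary_contractVertex_add k c S, left_eq_add]
    simp [contractVertex, hins]
  · rw [relCoboundary_apply, Set.indicator_of_notMem hS, Function.notMem_support.1 (mt (@hc S) hS)]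

theorem relCoboundary_relCoboundary (hF : F.OrdConnected) (hc : Function.support c ⊆ F) :
    relCoboundary F (relCoboundary F c) = 0 := by
  ext S
  by_cases hS : S ∈ F
  · rw [relCoboundary_of_mem _ hS, ← congrFun (coboundary_coboundary c) S]
    refine coboundary_congr fun k _ => ?_
    by_cases h0 : coboundary c (S.erase k) = 0
    · rw [h0, relCoboundary_apply, Set.indicator_apply_eq_zero.2 fun _ => h0]
    · obtain ⟨j, _, hj⟩ := exists_ne_zero_of_coboundary_ne_zero h0
      exact relCoboundary_of_mem c
        (hF.out (hc hj) hS ⟨Finset.erase_subset _ _, Finset.erase_subset _ _⟩)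
  · exact Set.indicator_of_notMem hS _

theorem relCoboundary_inter (hP : IsUpperSet P) (hb : Function.support b ⊆ F ∩ P) :
    relCoboundary (F ∩ P) b = relCoboundary F b := by
  ext S
  by_cases hS : S ∈ F \ P
  · rw [relCoboundary_of_mem _ hS.1, relCoboundary_apply, Set.indicator_of_notMem fun h => hS.2 h.2]
    by_contra hne
    obtain ⟨k, _, hk⟩ := exists_ne_zero_of_coboundary_ne_zero (Ne.symm hne)
    exact hS.2 (hP (Finset.erase_subset k S) (hb hk).2)
  · rw [relCoboundary_apply, relCoboundary_apply]
    have hiff : S ∈ F ∩ P ↔ S ∈ F := ⟨And.left, fun h => ⟨h, not_not.1 fun hP => hS ⟨h, hP⟩⟩⟩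
    by_cases hF : S ∈ F
    · rw [Set.indicator_of_mem (hiff.2 hF), Set.indicator_of_mem hF]
    · rw [Set.indicator_of_notMem (mt hiff.1 hF), Set.indicator_of_notMem hF]

theorem indicator_diff_relCoboundary (hP : IsUpperSet P) (hc : Function.support c ⊆ F) :
    relCoboundary (F \ P) ((F \ P).indicator c) = (F \ P).indicator (relCoboundary F c) := by
  ext S
  by_cases hS : S ∈ F \ P
  · rw [relCoboundary_of_mem _ hS, Set.indicator_of_mem hS, relCoboundary_of_mem _ hS.1]
    refine coboundary_congr fun k _ => Set.indicator_apply_eq_self.2 fun hk => ?_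
    by_contra hne
    exact hk ⟨hc hne, fun hkP => hS.2 (hP (Finset.erase_subset k S) hkP)⟩
  · rw [Set.indicator_of_notMem hS, relCoboundary_apply, Set.indicator_of_notMem hS]

theorem relCoboundary_mem_cochains (hM : Monotone M) (hc : ∀ S, c S ∈ M S) :
    relCoboundary F c ∈ cochains M F := by
  refine ⟨support_relCoboundary_subset F c, fun S => ?_⟩
  by_cases hS : S ∈ F
  · rw [relCoboundary_of_mem c hS, coboundary_apply]
    exact (M S).sum_mem fun k _ =>
      (M S).zsmul_mem (hM (Finset.erase_subset k S) (hc _)) _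
  · rw [relCoboundary_apply, Set.indicator_of_notMem hS]
    exact (M S).zero_mem

theorem relCoboundary_mem_cochains_inter (hM : Monotone M) (hP : IsUpperSet P)
    (hc : c ∈ cochains M F) (h : relCoboundary (F \ P) ((F \ P).indicator c) = 0) :
    relCoboundary F c ∈ cochains M (F ∩ P) :=
  mem_cochains_inter (relCoboundary_mem_cochains hM hc.2)
    (by rw [← indicator_diff_relCoboundary hP hc.1, h])

/-- The complex of cochains on `F` with values in `M` has nonzero cohomology in degree `q`, where
sets with `q` elements have degree `q`. -/
def HasCohomology (M : Finset ι → AddSubgroup L) (F : Set (Finset ι)) (q : ℕ) : Prop :=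
  ∃ c ∈ cochains M F, (∀ S, c S ≠ 0 → S.card = q) ∧ relCoboundary F c = 0 ∧
    ∀ b ∈ cochains M F, relCoboundary F b ≠ c

/-- The complex of cochains on `F` with values in `M` is exact. -/
def IsExactFamily (M : Finset ι → AddSubgroup L) (F : Set (Finset ι)) : Prop :=
  ∀ c ∈ cochains M F, relCoboundary F c = 0 → ∃ b ∈ cochains M F, relCoboundary F b = c

theorem isExactFamily_empty (M : Finset ι → AddSubgroup L) : IsExactFamily M ∅ := fun c hc _ =>
  ⟨c, hc, by rw [Function.support_eq_empty_iff.1 (Set.subset_empty_iff.1 hc.1), map_zero]⟩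

theorem exists_homogeneous_preimage (hq : ∀ S, c S ≠ 0 → S.card = q + 1)
    (hb : b ∈ cochains M F) (hbc : relCoboundary F b = c) :
    ∃ b' ∈ cochains M F, (∀ S, b' S ≠ 0 → S.card = q) ∧ relCoboundary F b' = c := by
  have hcard_of_ne (S : Finset ι) (hS : Set.indicator {S | S.card = q} b S ≠ 0) : S.card = q :=
    (Set.indicator_apply_ne_zero.1 hS).1
  refine ⟨Set.indicator {S | S.card = q} b,
    cochains_mono Set.inter_subset_left (indicator_mem_cochains _ hb), hcard_of_ne, ?_⟩
  ext S
  by_cases hcard : S.card = q + 1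
  · rw [← hbc, relCoboundary_apply, relCoboundary_apply]
    refine Set.indicator_eq_indicator Iff.rfl (coboundary_congr fun k hk => ?_)
    exact Set.indicator_of_mem (by simp [Finset.card_erase_of_mem hk, hcard]) _
  · rw [not_ne_iff.1 (mt (hq S) hcard)]
    exact not_ne_iff.1 (mt (card_eq_of_relCoboundary_ne_zero hcard_of_ne) hcard)

section LongExactSequence

variable (hM : Monotone M) (hF : F.OrdConnected) (hP : IsUpperSet P)
include hM hF hP

/-- One part of the long exact sequence of the subcomplex on `F ∩ P` of the complex on `F`. -/
theorem HasCohomology.of_diff (hex : IsExactFamily M (F ∩ P)) (h : HasCohomology M (F \ P) q) :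
    HasCohomology M F q := by
  obtain ⟨c, hc, hq, hz, hn⟩ := h
  have hcF : c ∈ cochains M F := cochains_mono Set.sdiff_subset hc
  have hrestrict : (F \ P).indicator c = c := Set.indicator_eq_self.2 hc.1
  have hδ : relCoboundary F c ∈ cochains M (F ∩ P) :=
    relCoboundary_mem_cochains_inter hM hP hcF (by rw [hrestrict, hz])
  obtain ⟨b', hb', hbc'⟩ := hex _ hδ
    (by rw [relCoboundary_inter hP hδ.1, relCoboundary_relCoboundary hF hcF.1])
  obtain ⟨b, hb, hbq, hbc⟩ := exists_homogeneous_preimage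
    (fun S => card_eq_of_relCoboundary_ne_zero hq) hb' hbc'
  rw [relCoboundary_inter hP hb.1] at hbc
  refine ⟨c - b, sub_mem hcF (cochains_mono Set.inter_subset_left hb), fun S hS => ?_,
    by rw [map_sub, hbc, sub_self], fun d hd hdc => ?_⟩
  · exact (Function.support_sub c b hS).elim (hq S) (hbq S)
  · refine hn _ (indicator_diff_mem_cochains hd) ?_
    rw [indicator_diff_relCoboundary hP hd.1, hdc, Set.indicator_sub', hrestrict,
      indicator_diff_eq_zero hb, sub_zero]

/-- The connecting map of the long exact sequence of the subcomplex on `F ∩ P`. -/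
theorem HasCohomology.inter_of_diff (hex : IsExactFamily M F) (h : HasCohomology M (F \ P) q) :
    HasCohomology M (F ∩ P) (q + 1) := by
  obtain ⟨c, hc, hq, hz, hn⟩ := h
  have hcF : c ∈ cochains M F := cochains_mono Set.sdiff_subset hc
  have hrestrict : (F \ P).indicator c = c := Set.indicator_eq_self.2 hc.1
  have hδ : relCoboundary F c ∈ cochains M (F ∩ P) :=
    relCoboundary_mem_cochains_inter hM hP hcF (by rw [hrestrict, hz])
  refine ⟨relCoboundary F c, hδ, fun S => card_eq_of_relCoboundary_ne_zero hq, ?_,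
    fun b hb hbc => ?_⟩
  · rw [relCoboundary_inter hP hδ.1, relCoboundary_relCoboundary hF hcF.1]
  · rw [relCoboundary_inter hP hb.1] at hbc
    obtain ⟨d, hd, hdc⟩ := hex (c - b) (sub_mem hcF (cochains_mono Set.inter_subset_left hb))
      (by rw [map_sub, hbc, sub_self])
    refine hn _ (indicator_diff_mem_cochains hd) ?_
    rw [indicator_diff_relCoboundary hP hd.1, hdc, Set.indicator_sub', hrestrict,
      indicator_diff_eq_zero hb, sub_zero]

theorem exists_relCoboundary_eq_of_diff (hex : IsExactFamily M (F ∩ P)) (hc : c ∈ cochains M F)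
    (hz : relCoboundary F c = 0) (hb : b ∈ cochains M (F \ P))
    (hbc : relCoboundary (F \ P) b = (F \ P).indicator c) :
    ∃ d ∈ cochains M F, relCoboundary F d = c := by
  have hbF : b ∈ cochains M F := cochains_mono Set.sdiff_subset hb
  have hδ : c - relCoboundary F b ∈ cochains M (F ∩ P) := by
    refine mem_cochains_inter (sub_mem hc (relCoboundary_mem_cochains hM hb.2)) ?_
    rw [Set.indicator_sub', ← indicator_diff_relCoboundary hP hbF.1, Set.indicator_eq_self.2 hb.1,
      hbc, sub_self]
  obtain ⟨d, hd, hdc⟩ := hex _ hδ (by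
    rw [relCoboundary_inter hP hδ.1, map_sub, hz, relCoboundary_relCoboundary hF hbF.1, sub_self])
  exact ⟨b + d, add_mem hbF (cochains_mono Set.inter_subset_left hd),
    by rw [map_add, ← relCoboundary_inter hP hd.1, hdc, add_sub_cancel]⟩

theorem IsExactFamily.of_inter_of_diff (hinter : IsExactFamily M (F ∩ P))
    (hdiff : IsExactFamily M (F \ P)) : IsExactFamily M F := by
  intro c hc hz
  obtain ⟨b, hb, hbc⟩ := hdiff _ (indicator_diff_mem_cochains hc)
    (by rw [indicator_diff_relCoboundary hP hc.1, hz, Set.indicator_zero'])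
  exact exists_relCoboundary_eq_of_diff hM hF hP hinter hc hz hb hbc

theorem hasCohomology_diff_iff (hex : IsExactFamily M (F ∩ P)) :
    HasCohomology M (F \ P) q ↔ HasCohomology M F q := by
  refine ⟨.of_diff hM hF hP hex, fun ⟨c, hc, hq, hz, hn⟩ => ?_⟩
  refine ⟨(F \ P).indicator c, indicator_diff_mem_cochains hc,
    fun S hS => hq S (Set.indicator_apply_ne_zero.1 hS).2, ?_, fun b hb hbc => ?_⟩
  · rw [indicator_diff_relCoboundary hP hc.1, hz, Set.indicator_zero']
  · obtain ⟨d, hd, hdc⟩ := exists_relCoboundary_eq_of_diff hM hF hP hex hc hz hb hbc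
    exact hn d hd hdc

end LongExactSequence

section Pullback

variable {κ : Type*} [LinearOrder κ] (f : κ ↪o ι)

theorem relCoboundary_comp_map (c : Finset ι → L) :
    relCoboundary {T | T.map f.toEmbedding ∈ F} (fun T => c (T.map f.toEmbedding))
      = fun T => relCoboundary F c (T.map f.toEmbedding) := by
  ext T
  by_cases hT : T.map f.toEmbedding ∈ F
  · rw [relCoboundary_of_mem _ hT, relCoboundary_of_mem _ (by exact hT), coboundary_comp_map]
  · rw [relCoboundary_apply, relCoboundary_apply, Set.indicator_of_notMem hT,
      Set.indicator_of_notMem (by exact hT)]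

theorem exists_cochain_comp_map_eq {b : Finset κ → L}
    (hb : b ∈ cochains (fun T => M (T.map f.toEmbedding)) {T | T.map f.toEmbedding ∈ F}) :
    ∃ e ∈ cochains M F, (fun T => e (T.map f.toEmbedding)) = b := by
  have hinj : Function.Injective (Finset.map f.toEmbedding) := Finset.map_injective _
  refine ⟨Function.extend (Finset.map f.toEmbedding) b 0, ⟨fun S hS => ?_, fun S => ?_⟩,
    funext fun T => hinj.extend_apply b 0 T⟩
  all_goals by_cases hST : ∃ T : Finset κ, T.map f.toEmbedding = S
  · obtain ⟨T, rfl⟩ := hST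
    exact hb.1 (by rwa [Function.mem_support, hinj.extend_apply] at hS)
  · exact absurd (Function.extend_apply' b (0 : Finset ι → L) S hST) hS
  · obtain ⟨T, rfl⟩ := hST
    exact (hinj.extend_apply b 0 T).symm ▸ hb.2 T
  · exact (Function.extend_apply' b (0 : Finset ι → L) S hST).symm ▸ (M S).zero_mem

theorem hasCohomology_preimage_map_iff (hf : ∀ S ∈ F, ∃ T : Finset κ, T.map f.toEmbedding = S) :
    HasCohomology (fun T => M (T.map f.toEmbedding)) {T | T.map f.toEmbedding ∈ F} q ↔
      HasCohomology M F q := by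
  have heq {c d : Finset ι → L} (hc : Function.support c ⊆ F) (hd : Function.support d ⊆ F)
      (h : (fun T : Finset κ => c (T.map f.toEmbedding)) = fun T => d (T.map f.toEmbedding)) :
      c = d := by
    ext S
    by_cases hS : S ∈ F
    · obtain ⟨T, rfl⟩ := hf S hS
      exact congrFun h T
    · rw [Function.notMem_support.1 (mt (@hc S) hS), Function.notMem_support.1 (mt (@hd S) hS)]
  constructor
  · rintro ⟨b, hb, hq, hz, hn⟩
    obtain ⟨c, hc, rfl⟩ := exists_cochain_comp_map_eq f hb
    refine ⟨c, hc, fun S hS => ?_, heq (support_relCoboundary_subset F c) (by simp) ?_,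
      fun d hd hdc => ?_⟩
    · obtain ⟨T, rfl⟩ := hf S (hc.1 hS)
      rw [Finset.card_map, hq T hS]
    · rw [← relCoboundary_comp_map, hz]; rfl
    · exact hn (fun T : Finset κ => d (T.map f.toEmbedding)) ⟨fun T hT => hd.1 hT,
        fun T => hd.2 _⟩ (by rw [relCoboundary_comp_map, hdc])
  · rintro ⟨c, hc, hq, hz, hn⟩
    refine ⟨fun T : Finset κ => c (T.map f.toEmbedding), ⟨fun T hT => hc.1 hT, fun T => hc.2 _⟩,
      fun T hT => by rw [← hq _ hT, Finset.card_map], ?_, fun b hb hbc => ?_⟩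
    · rw [relCoboundary_comp_map, hz]; rfl
    · obtain ⟨d, hd, rfl⟩ := exists_cochain_comp_map_eq f hb
      exact hn d hd (heq (support_relCoboundary_subset F d) hc.1
        (by rw [← relCoboundary_comp_map, hbc]))

end Pullback

end RelativeCochains

section ConstantCoefficients

variable {ι L : Type*} [LinearOrder ι] [AddCommGroup L] {F : Set (Finset ι)} {b c : Finset ι → L}
  {q : ℕ}

omit [LinearOrder ι] in
theorem mem_cochains_top : c ∈ cochains ⊤ F ↔ Function.support c ⊆ F :=
  and_iff_left fun _ => AddSubgroup.mem_top _

theorem hasCohomology_singleton_empty (L : Type*) [AddCommGroup L] [Nontrivial L] :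
    HasCohomology (⊤ : Finset ι → AddSubgroup L) {(∅ : Finset ι)} 0 := by
  obtain ⟨x, hx⟩ := exists_ne (0 : L)
  have hzero (b : Finset ι → L) : relCoboundary {∅} b = 0 := by
    ext S; by_cases hS : S = ∅ <;> simp [relCoboundary_apply, coboundary_apply, hS]
  refine ⟨Pi.single ∅ x, mem_cochains_top.2 Pi.support_single_subset, fun S hS => ?_, hzero _,
    fun b _ h => hx ?_⟩
  · rw [Finset.card_eq_zero]
    exact Pi.support_single_subset hS
  · rw [← Pi.single_eq_same (M := fun _ => L) (∅ : Finset ι) x, ← h, hzero, Pi.zero_apply]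

theorem IsExactFamily.of_toggle (k : ι) (h : ∀ S, insert k S ∈ F ↔ S ∈ F) :
    IsExactFamily (⊤ : Finset ι → AddSubgroup L) F := fun c hc hz =>
  ⟨contractVertex k c,
    mem_cochains_top.2 fun S hS => (h S).1 (hc.1 (contractVertex_ne_zero hS).2),
    relCoboundary_contractVertex_eq_self (fun S => (h S).2) hc.1 hz⟩

/-- The link of `k` in the family `F`. -/
def linkFamily (F : Set (Finset ι)) (k : ι) : Set (Finset ι) := {S | k ∉ S ∧ insert k S ∈ F}

theorem joinVertex_mem_cochains {k : ι} (hc : c ∈ cochains ⊤ (linkFamily F k)) :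
    joinVertex k c ∈ cochains ⊤ F := mem_cochains_top.2 fun S hS => by
  obtain ⟨hk, hne⟩ := joinVertex_ne_zero hS
  exact Finset.insert_erase hk ▸ (hc.1 hne).2

theorem contractVertex_mem_cochains {k : ι} (hc : c ∈ cochains ⊤ F) :
    contractVertex k c ∈ cochains ⊤ (linkFamily F k) := mem_cochains_top.2 fun _ hS =>
  ⟨(contractVertex_ne_zero hS).1, hc.1 (contractVertex_ne_zero hS).2⟩

theorem relCoboundary_joinVertex (k : ι) (c : Finset ι → L) :
    relCoboundary F (joinVertex k c) = joinVertex k (-relCoboundary (linkFamily F k) c) := by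
  rw [relCoboundary_apply, coboundary_joinVertex]
  ext S
  by_cases hk : k ∈ S <;> by_cases hS : S ∈ F <;>
    simp [joinVertex, relCoboundary_apply, linkFamily, hk, hS, Finset.insert_erase]

theorem relCoboundary_contractVertex {k : ι} (hk : ∀ S ∈ F, k ∈ S)
    (hc : Function.support c ⊆ F) :
    relCoboundary (linkFamily F k) (contractVertex k c)
      = -contractVertex k (relCoboundary F c) := by
  have h := relCoboundary_joinVertex (F := F) k (contractVertex k c)
  rw [joinVertex_contractVertex fun S hS => hk S (hc hS)] at h
  rw [h, contractVertex_joinVertex, neg_neg]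
  rw [← map_neg]
  exact fun S hS => (support_relCoboundary_subset _ _ hS).1

theorem HasCohomology.of_linkFamily {k : ι} (hk : ∀ S ∈ F, k ∈ S)
    (h : HasCohomology (⊤ : Finset ι → AddSubgroup L) (linkFamily F k) q) :
    HasCohomology (⊤ : Finset ι → AddSubgroup L) F (q + 1) := by
  obtain ⟨c, hc, hq, hz, hn⟩ := h
  refine ⟨joinVertex k c, joinVertex_mem_cochains hc, fun S hS => ?_, ?_, fun b hb hbc => ?_⟩
  · obtain ⟨hkS, hne⟩ := joinVertex_ne_zero hS
    rw [← hq _ hne, Finset.card_erase_add_one hkS]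
  · ext S; simp [relCoboundary_joinVertex, hz, joinVertex]
  · refine hn _ (neg_mem (contractVertex_mem_cochains hb)) ?_
    rw [map_neg, relCoboundary_contractVertex hk hb.1, hbc, neg_neg,
      contractVertex_joinVertex fun S hS => (hc.1 hS).1]

theorem IsExactFamily.of_linkFamily {k : ι} (hk : ∀ S ∈ F, k ∈ S)
    (h : IsExactFamily (⊤ : Finset ι → AddSubgroup L) (linkFamily F k)) :
    IsExactFamily (⊤ : Finset ι → AddSubgroup L) F := by
  intro c hc hz
  obtain ⟨b, hb, hbc⟩ := h _ (neg_mem (contractVertex_mem_cochains hc))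
    (by ext S; simp [relCoboundary_contractVertex hk hc.1, hz, contractVertex])
  refine ⟨joinVertex k b, joinVertex_mem_cochains hb, ?_⟩
  rw [relCoboundary_joinVertex, hbc, neg_neg, joinVertex_contractVertex fun S hS => hk S (hc.1 hS)]

end ConstantCoefficients

section CoveringFamilies

variable {ι V : Type*} [LinearOrder ι] {inc : ι → V → Prop} {A : Set ι} {W : Set V}

/-- The finite sets of hyperedges among `A` that cover every vertex of `W`, for the hypergraph with
incidence relation `inc`. -/
def coverings (inc : ι → V → Prop) (A : Set ι) (W : Set V) : Set (Finset ι) :=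
  {S | ↑S ⊆ A ∧ ∀ v ∈ W, ∃ k ∈ S, inc k v}

omit [LinearOrder ι] in
theorem ordConnected_coverings (inc : ι → V → Prop) (A : Set ι) (W : Set V) :
    (coverings inc A W).OrdConnected where
  out' _ hS _ hU _ hT := ⟨(Finset.coe_subset.2 hT.2).trans hU.1, fun v hv =>
    (hS.2 v hv).imp fun _ hk => ⟨hT.1 hk.1, hk.2⟩⟩

variable {K : Type*} [AddCommGroup K] {q : ℕ}

/-- The complex of `K`-valued cochains on the coverings of `W` by hyperedges in `A` has nonzero
cohomology in degree `q`. -/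
def HasCoverCohomology (K : Type*) [AddCommGroup K] (inc : ι → V → Prop) (A : Set ι) (W : Set V)
    (q : ℕ) : Prop :=
  HasCohomology (⊤ : Finset ι → AddSubgroup K) (coverings inc A W) q

/-- The complex of `K`-valued cochains on the coverings of `W` by hyperedges in `A` is exact. -/
def IsCoverExact (K : Type*) [AddCommGroup K] (inc : ι → V → Prop) (A : Set ι) (W : Set V) :
    Prop :=
  IsExactFamily (⊤ : Finset ι → AddSubgroup K) (coverings inc A W)

theorem IsCoverExact.of_uncovered {w : V} (hw : w ∈ W) (h : ∀ k ∈ A, ¬inc k w) :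
    IsCoverExact K inc A W := by
  have hempty : coverings inc A W = ∅ := Set.eq_empty_of_forall_notMem fun S hS => ?_
  · rw [IsCoverExact, hempty]
    exact isExactFamily_empty _
  obtain ⟨k, hk, hkw⟩ := hS.2 w hw
  exact h k (hS.1 hk) hkw

theorem hasCoverCohomology_empty (K : Type*) [AddCommGroup K] [Nontrivial K]
    (inc : ι → V → Prop) : HasCoverCohomology K inc ∅ ∅ 0 := by
  have hcov : coverings inc ∅ ∅ = {(∅ : Finset ι)} := by ext S; simp [coverings]
  rw [HasCoverCohomology, hcov]
  exact hasCohomology_singleton_empty K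

section Pendant

variable {w : V} {k : ι}

omit [LinearOrder ι] in
theorem mem_of_mem_coverings_of_pendant (hw : w ∈ W) (honly : ∀ j ∈ A, inc j w → j = k) :
    ∀ S ∈ coverings inc A W, k ∈ S := fun S hS => by
  obtain ⟨j, hj, hjw⟩ := hS.2 w hw
  exact honly j (hS.1 hj) hjw ▸ hj

theorem linkFamily_coverings (hk : k ∈ A) :
    linkFamily (coverings inc A W) k = coverings inc (A \ {k}) {v ∈ W | ¬inc k v} := by
  ext S
  simp only [linkFamily, coverings, Set.mem_ofPred_eq, Finset.coe_insert, Set.insert_subset_iff,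
    Set.subset_sdiff, Set.disjoint_singleton_right, Finset.mem_coe, Finset.exists_mem_insert]
  grind

variable (hk : k ∈ A) (hw : w ∈ W) (honly : ∀ j ∈ A, inc j w → j = k)
include hk hw honly

theorem HasCoverCohomology.of_pendant
    (h : HasCoverCohomology K inc (A \ {k}) {v ∈ W | ¬inc k v} q) :
    HasCoverCohomology K inc A W (q + 1) :=
  .of_linkFamily (mem_of_mem_coverings_of_pendant hw honly)
    (by rwa [linkFamily_coverings hk])

theorem IsCoverExact.of_pendant
    (h : IsCoverExact K inc (A \ {k}) {v ∈ W | ¬inc k v}) :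
    IsCoverExact K inc A W :=
  .of_linkFamily (mem_of_mem_coverings_of_pendant hw honly)
    (by rwa [linkFamily_coverings hk])

end Pendant

section Leaf

variable {w : V} {k : ι} (hk : k ∈ A) (hw : w ∈ W) (hkW : ∀ v ∈ W, inc k v ↔ v = w)

omit [LinearOrder ι] in
theorem isUpperSet_covered (P : ι → Prop) : IsUpperSet {S : Finset ι | ∃ j ∈ S, P j} :=
  fun _ _ hST => fun ⟨j, hj, h⟩ => ⟨j, hST hj, h⟩

include hk hkW in
/-- A leaf edge `k` at `w` does not contribute to coverings that cover `w` by another edge. -/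
theorem isExactFamily_coverings_inter_covered :
    IsExactFamily (⊤ : Finset ι → AddSubgroup K)
      (coverings inc A W ∩ {S | ∃ j ∈ S, j ≠ k ∧ inc j w}) := by
  refine .of_toggle k fun S => ?_
  simp only [coverings, Set.mem_inter_iff, Set.mem_ofPred_eq, Finset.coe_insert,
    Set.insert_subset_iff, Finset.exists_mem_insert]
  grind

omit [LinearOrder ι] in
theorem coverings_diff_covered : coverings inc A W \ {S | ∃ j ∈ S, j ≠ k ∧ inc j w}
    = coverings inc {j ∈ A | inc j w → j = k} W := by
  ext S
  simp only [coverings, Set.mem_sdiff, Set.mem_ofPred_eq, Set.subset_def, Finset.mem_coe]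
  grind

include hk hw hkW

theorem HasCoverCohomology.of_leaf
    (h : HasCoverCohomology K inc {j ∈ A | ¬inc j w} (W \ {w}) q) :
    HasCoverCohomology K inc A W (q + 1) := by
  refine .of_diff monotone_const (ordConnected_coverings inc A W) (isUpperSet_covered _)
    (isExactFamily_coverings_inter_covered hk hkW) ?_
  rw [coverings_diff_covered]
  refine HasCoverCohomology.of_pendant ⟨hk, fun _ => rfl⟩ hw (fun j hj => hj.2) ?_
  convert h using 3 <;> grind

theorem IsCoverExact.of_leaf
    (h : IsCoverExact K inc {j ∈ A | ¬inc j w} (W \ {w})) :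
    IsCoverExact K inc A W := by
  refine .of_inter_of_diff monotone_const (ordConnected_coverings inc A W) (isUpperSet_covered _)
    (isExactFamily_coverings_inter_covered hk hkW) ?_
  rw [coverings_diff_covered]
  refine IsCoverExact.of_pendant ⟨hk, fun _ => rfl⟩ hw (fun j hj => hj.2) ?_
  convert h using 3 <;> grind

end Leaf

theorem HasCoverCohomology.insert_vertex (w : V) (hex : IsCoverExact K inc A W)
    (h : HasCoverCohomology K inc {j ∈ A | ¬inc j w} W q) :
    HasCoverCohomology K inc A (insert w W) (q + 1) := by
  have hdiff : coverings inc A W \ {S | ∃ j ∈ S, inc j w} = coverings inc {j ∈ A | ¬inc j w} W := by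
    ext S
    simp only [coverings, Set.mem_sdiff, Set.mem_ofPred_eq, Set.subset_def, Finset.mem_coe]
    grind
  have hinter : coverings inc A W ∩ {S | ∃ j ∈ S, inc j w} = coverings inc A (insert w W) := by
    ext S
    simp only [coverings, Set.mem_inter_iff, Set.mem_ofPred_eq, Set.forall_mem_insert]
    tauto
  rw [HasCoverCohomology, ← hinter]
  exact .inter_of_diff monotone_const (ordConnected_coverings inc A W) (isUpperSet_covered _) hex
    (by rwa [hdiff])

end CoveringFamilies

section CechComplex

variable {R : Type*} [CommRing R]

/-- The elements of the field `L` over `R` that become integral after multiplication by a power of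
`r`; when `r ≠ 0` and `L` is the fraction field of `R`, this is the localization of `R` away from
`r`. -/
def locAt (L : Type*) [Field L] [Algebra R L] (r : R) : Submodule R L where
  carrier := {y | ∃ n : ℕ, ∃ p : R, algebraMap R L p = algebraMap R L r ^ n * y}
  zero_mem' := ⟨0, 0, by simp⟩
  add_mem' := by
    rintro x y ⟨n, p, hp⟩ ⟨m, q, hq⟩
    refine ⟨n + m, r ^ m * p + r ^ n * q, ?_⟩
    simp only [map_add, map_mul, map_pow, hp, hq]
    ring
  smul_mem' := by
    rintro a y ⟨n, p, hp⟩
    exact ⟨n, a * p, by rw [map_mul, hp, Algebra.smul_def]; ring⟩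

variable {L : Type*} [Field L] [Algebra R L]

theorem locAt_mono {r r' : R} (h : r ∣ r') : locAt L r ≤ locAt L r' := by
  rintro y ⟨n, p, hp⟩
  obtain ⟨t, rfl⟩ := h
  exact ⟨n, t ^ n * p, by simp only [map_mul, map_pow, hp]; ring⟩

theorem eventually_exists_of_mem_locAt {r : R} {y : L} (h : y ∈ locAt L r) :
    ∀ᶠ n in Filter.atTop, ∃ p : R, algebraMap R L p = algebraMap R L r ^ n * y := by
  obtain ⟨N, p, hp⟩ := h
  filter_upwards [Filter.eventually_ge_atTop N] with n hn
  refine ⟨r ^ (n - N) * p, ?_⟩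
  rw [map_mul, map_pow, hp, ← mul_assoc, ← pow_add, Nat.sub_add_cancel hn]

theorem div_mem_locAt {r g : R} (hg : algebraMap R L g ≠ 0) (hgr : g ∣ r) {y : L}
    (h : y ∈ locAt L r) (m : ℕ) : y / algebraMap R L g ^ m ∈ locAt L r := by
  obtain ⟨n, p, hp⟩ := h
  obtain ⟨t, rfl⟩ := hgr
  refine ⟨n + m, t ^ m * p, ?_⟩
  have := pow_ne_zero m hg
  simp only [map_mul, map_pow, hp]
  field_simp
  ring

variable {ι : Type*} {T T' : Finset ι} {q : ℕ}

/-- The coefficients of the Čech complex of the family `h`, the localizations at its products. -/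
def cechCoeff (L : Type*) [Field L] [Algebra R L] (h : ι → R) (S : Finset ι) : AddSubgroup L :=
  (locAt L (∏ k ∈ S, h k)).toAddSubgroup

theorem cechCoeff_mono (h : ι → R) : Monotone (cechCoeff L h) := fun _ _ hST =>
  locAt_mono (Finset.prod_dvd_prod_of_subset _ _ h hST)

theorem exists_sum_mul_pow_eq_pow {h : ι → R} {g : R}
    (hg : g ∈ (Ideal.span (h '' T)).radical) (n : ℕ) :
    ∃ (a : ι → R) (m : ℕ), ∑ k ∈ T, a k * h k ^ n = g ^ m := by
  have hle : Ideal.span (h '' T) ≤ (Ideal.span ((fun k => h k ^ n) '' T)).radical := by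
    rw [Ideal.span_le]
    rintro _ ⟨k, hk, rfl⟩
    exact ⟨n, Ideal.subset_span ⟨k, hk, rfl⟩⟩
  obtain ⟨m, hm⟩ := Ideal.radical_le_radical_iff.2 hle hg
  obtain ⟨a, ha⟩ := Submodule.mem_span_image_finset_iff_exists_fun' R |>.1 hm
  exact ⟨a, m, ha⟩

variable [LinearOrder ι] {h : ι → R} {g : ι}

theorem mul_contractVertex_mem_cechCoeff {c : Finset ι → L} {k : ι} {S : Finset ι} {n : ℕ}
    (hgS : g ∈ S) (hg : algebraMap R L (h g) ≠ 0)
    (hn : ∃ p : R, algebraMap R L p = algebraMap R L (∏ j ∈ insert k S, h j) ^ n * c (insert k S))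
    (a : R) (m : ℕ) :
    algebraMap R L (a * h k ^ n) / algebraMap R L (h g) ^ m * contractVertex k c S
      ∈ cechCoeff L h S := by
  by_cases hk : k ∈ S
  · rw [contractVertex, if_pos hk, mul_zero]
    exact zero_mem _
  obtain ⟨p, hp⟩ := hn
  have hmem : algebraMap R L (h k) ^ n * c (insert k S) ∈ locAt L (∏ j ∈ S, h j) :=
    ⟨n, p, by rw [hp, Finset.prod_insert hk, map_mul]; ring⟩
  have hdiv := div_mem_locAt hg (Finset.dvd_prod_of_mem h hgS) (Submodule.smul_mem _ a hmem) m
  rw [contractVertex, if_neg hk, mul_smul_comm]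
  refine zsmul_mem ?_ _
  rw [map_mul, map_pow, div_mul_eq_mul_div, mul_assoc, ← Algebra.smul_def]
  exact hdiv

/-- The homotopy is a combination of contractions, weighted by the partition of unity that a
relation `h g ^ m = ∑ a k * h k ^ n` provides once `h g` is inverted. -/
theorem isExactFamily_cech_inter (hgT : g ∉ T) (hg : algebraMap R L (h g) ≠ 0)
    (hrad : h g ∈ (Ideal.span (h '' T)).radical) :
    IsExactFamily (cechCoeff L h) (Set.Iic (insert g T) ∩ {S | g ∈ S}) := by
  intro c hc hz
  obtain ⟨n, hn⟩ := ((Filter.eventually_all_finset (insert g T).powerset).2 fun S _ =>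
    eventually_exists_of_mem_locAt (hc.2 S)).exists
  obtain ⟨a, m, ha⟩ := exists_sum_mul_pow_eq_pow hrad n
  let u (k : ι) : L := algebraMap R L (a k * h k ^ n) / algebraMap R L (h g) ^ m
  have hu : ∑ k ∈ T, u k = 1 := by
    rw [← Finset.sum_div, ← map_sum, ha, map_pow, div_self (pow_ne_zero m hg)]
  refine ⟨∑ k ∈ T, fun S => u k * contractVertex k c S, sum_mem fun k hk => ?_, ?_⟩
  · have hsupp {S : Finset ι} (hS : contractVertex k c S ≠ 0) :
        insert k S ⊆ insert g T ∧ g ∈ S := by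
      obtain ⟨hsub, hgS⟩ := hc.1 (contractVertex_ne_zero hS).2
      exact ⟨hsub, Finset.mem_of_mem_insert_of_ne hgS fun e => hgT (e ▸ hk)⟩
    refine ⟨fun S hS => ?_, fun S => ?_⟩
    · obtain ⟨hsub, hgS⟩ := hsupp (right_ne_zero_of_mul hS)
      exact ⟨(Finset.subset_insert k S).trans hsub, hgS⟩
    · by_cases hS : contractVertex k c S = 0
      · simp only [hS, mul_zero]
        exact zero_mem _
      · obtain ⟨hsub, hgS⟩ := hsupp hS
        exact mul_contractVertex_mem_cechCoeff hgS hg (hn _ (Finset.mem_powerset.2 hsub)) _ _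
  · have hcontract (k : ι) (hk : k ∈ T) : relCoboundary (Set.Iic (insert g T) ∩ {S | g ∈ S})
        (fun S => u k * contractVertex k c S) = fun S => u k * c S := by
      refine (relCoboundary_map (AddMonoidHom.mulLeft (u k)) _ _).trans ?_
      rw [relCoboundary_contractVertex_eq_self (fun S hS => ?_) hc.1 hz]
      · rfl
      · exact ⟨Finset.insert_subset (Finset.mem_insert_of_mem hk) hS.1,
          Finset.mem_insert_of_mem hS.2⟩
    rw [map_sum, Finset.sum_congr rfl hcontract]
    ext S
    rw [Finset.sum_apply, ← Finset.sum_mul, hu, one_mul]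

theorem hasCohomology_cech_insert_iff (hg : algebraMap R L (h g) ≠ 0)
    (hrad : h g ∈ (Ideal.span (h '' T)).radical) :
    HasCohomology (cechCoeff L h) (Set.Iic (insert g T)) q ↔
      HasCohomology (cechCoeff L h) (Set.Iic T) q := by
  by_cases hgT : g ∈ T
  · rw [Finset.insert_eq_of_mem hgT]
  have hdiff : Set.Iic (insert g T) \ {S | g ∈ S} = Set.Iic T := by
    ext S
    simp only [Set.mem_sdiff, Set.mem_Iic, Set.mem_ofPred_eq]
    grind
  rw [← hdiff]
  exact (hasCohomology_diff_iff (cechCoeff_mono h) Set.ordConnected_Iic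
    (fun _ _ hSS' hS => hSS' hS) (isExactFamily_cech_inter hgT hg hrad)).symm

theorem hasCohomology_cech_union_iff (hne : ∀ k, algebraMap R L (h k) ≠ 0)
    (hrad : ∀ k ∈ T', h k ∈ (Ideal.span (h '' T)).radical) :
    HasCohomology (cechCoeff L h) (Set.Iic (T' ∪ T)) q ↔
      HasCohomology (cechCoeff L h) (Set.Iic T) q := by
  induction T' using Finset.induction_on with
  | empty => rw [Finset.empty_union]
  | insert g T' _ ih =>
    rw [Finset.insert_union, hasCohomology_cech_insert_iff (hne g),
      ih fun k hk => hrad k (Finset.mem_insert_of_mem hk)]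
    refine Ideal.radical_mono (Ideal.span_mono (Set.image_mono ?_))
      (hrad g (Finset.mem_insert_self g T'))
    exact Finset.coe_subset.2 Finset.subset_union_right

theorem hasCohomology_cech_iff_of_radical_eq (hne : ∀ k, algebraMap R L (h k) ≠ 0)
    (hrad : (Ideal.span (h '' T)).radical = (Ideal.span (h '' T')).radical) :
    HasCohomology (cechCoeff L h) (Set.Iic T) q ↔
      HasCohomology (cechCoeff L h) (Set.Iic T') q := by
  have hmem {A : Finset ι} (k : ι) (hk : k ∈ A) : h k ∈ (Ideal.span (h '' A)).radical :=
    Ideal.le_radical (Ideal.subset_span (Set.mem_image_of_mem h hk))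
  rw [← hasCohomology_cech_union_iff hne fun k hk => hrad ▸ hmem k hk, Finset.union_comm,
    hasCohomology_cech_union_iff hne fun k hk => hrad ▸ hmem k hk]

theorem HasCohomology.le_card_of_Iic {M : Finset ι → AddSubgroup L}
    (hcoh : HasCohomology M (Set.Iic T) q) : q ≤ T.card := by
  obtain ⟨c, hc, hq, -, hn⟩ := hcoh
  obtain ⟨S, hS⟩ : ∃ S, c S ≠ 0 := by
    by_contra! h0
    exact hn 0 (zero_mem _) (by rw [map_zero]; exact (funext h0).symm)
  exact hq S hS ▸ Finset.card_le_card (hc.1 hS)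

theorem hasCohomology_cech_comp_iff {κ : Type*} [LinearOrder κ] [Fintype κ] (f : κ ↪o ι) :
    HasCohomology (cechCoeff L (h ∘ f)) Set.univ q ↔
      HasCohomology (cechCoeff L h) (Set.Iic (Finset.univ.map f.toEmbedding)) q := by
  rw [← hasCohomology_preimage_map_iff f fun S hS => ?_]
  · convert Iff.rfl using 2
    · ext T
      simp [cechCoeff]
    · simp [Finset.map_subset_map]
  · obtain ⟨T, -, hT⟩ := Finset.subset_map_iff.1 hS
    exact ⟨T, hT.symm⟩

theorem HasCohomology.le_card_of_radical_eq {κ μ : Type*} [LinearOrder κ] [Finite κ]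
    [LinearOrder μ] [Fintype μ] {e : κ → R} {f : μ → R} (he : ∀ k, algebraMap R L (e k) ≠ 0)
    (hf : ∀ k, algebraMap R L (f k) ≠ 0)
    (hrad : (Ideal.span (Set.range e)).radical = (Ideal.span (Set.range f)).radical)
    (hcoh : HasCohomology (cechCoeff L e) Set.univ q) : q ≤ Fintype.card μ := by
  have := Fintype.ofFinite κ
  let h : κ ⊕ₗ μ → R := Sum.elim e f ∘ ofLex
  let inl : κ ↪o κ ⊕ₗ μ := OrderEmbedding.ofStrictMono _ Sum.Lex.inl_strictMono
  let inr : μ ↪o κ ⊕ₗ μ := OrderEmbedding.ofStrictMono _ Sum.Lex.inr_strictMono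
  have hne (k : κ ⊕ₗ μ) : algebraMap R L (h k) ≠ 0 := by
    rcases k with k | k
    exacts [he k, hf k]
  have hl : h '' (Finset.univ.map inl.toEmbedding) = Set.range e := by
    simp only [Finset.coe_map, Finset.coe_univ, Set.image_univ, ← Set.range_comp]
    rfl
  have hr : h '' (Finset.univ.map inr.toEmbedding) = Set.range f := by
    simp only [Finset.coe_map, Finset.coe_univ, Set.image_univ, ← Set.range_comp]
    rfl
  have hcoh' := (hasCohomology_cech_comp_iff (h := h) inl).1 hcoh
  rw [hasCohomology_cech_iff_of_radical_eq hne (T' := Finset.univ.map inr.toEmbedding)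
    (by rw [hl, hr, hrad])] at hcoh'
  simpa using hcoh'.le_card_of_Iic

end CechComplex

section SquarefreeMonomials

variable {K σ ι : Type*} [Field K]

/-- The squarefree monomial with support `s`. -/
noncomputable def squarefreeMonomial (K : Type*) [Field K] (s : Finset σ) : MvPolynomial σ K :=
  ∏ v ∈ s, X v

theorem squarefreeMonomial_ne_zero (s : Finset σ) : squarefreeMonomial K s ≠ 0 :=
  Finset.prod_ne_zero_iff.2 fun v _ => X_ne_zero v

theorem squarefreeMonomial_dvd_of_forall {s : Finset σ} {r : MvPolynomial σ K}
    (h : ∀ v ∈ s, X v ∣ r) : squarefreeMonomial K s ∣ r := by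
  refine Finset.prod_dvd_of_isRelPrime (fun v _ w _ hvw => ?_) h
  refine ((X_prime (R := K) (i := v)).irreducible.isRelPrime_iff_not_dvd).2 fun h => hvw ?_
  simpa using h

theorem X_dvd_squarefreeMonomial {v : σ} {s : Finset σ} :
    (X v : MvPolynomial σ K) ∣ squarefreeMonomial K s ↔ v ∈ s := by
  simp [squarefreeMonomial, (X_prime (R := K) (i := v)).dvd_finsetProd_iff]

theorem coeff_eq_zero_of_X_pow_dvd {p : MvPolynomial σ K} {v : σ} {n : ℕ} {d : σ →₀ ℕ}
    (h : X v ^ n ∣ p) (hd : d v < n) : coeff d p = 0 := by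
  classical
  obtain ⟨r, rfl⟩ := h
  rw [X_pow_eq_monomial, coeff_monomial_mul', if_neg]
  intro hle
  have := hle v
  simp only [Finsupp.single_eq_same] at this
  omega

/-- The edge ideal of the hypergraph with hyperedges `e`. -/
noncomputable def hyperedgeIdeal (K : Type*) [Field K] (e : ι → Finset σ) :
    Ideal (MvPolynomial σ K) :=
  Ideal.span (Set.range fun k => squarefreeMonomial K (e k))

end SquarefreeMonomials

section ArithmeticalRankLowerBound

variable {K σ ι : Type*} [Field K] {e : ι → Finset σ} {W : Set σ} {S : Finset ι} {q : ℕ}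

/-- Incidence of the hyperedges `e` with the vertices. -/
def Incident (e : ι → Finset σ) (k : ι) (v : σ) : Prop := v ∈ e k

theorem exists_squarefreeMonomial_mul_monomial [Fintype σ] (W : Finset σ) {n : ℕ} (hn : 0 < n) :
    ∃ d : σ →₀ ℕ, (∀ v ∈ W, d v < n) ∧
      squarefreeMonomial K Finset.univ ^ n = squarefreeMonomial K W * monomial d 1 := by
  classical
  refine ⟨Finsupp.equivFunOnFinite.symm fun v => if v ∈ W then n - 1 else n, fun v hv => ?_, ?_⟩
  · simp only [Finsupp.equivFunOnFinite_symm_apply_apply, if_pos hv]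
    omega
  have hW : squarefreeMonomial K W = ∏ v, X v ^ if v ∈ W then 1 else 0 := by
    simp [squarefreeMonomial, Finset.prod_ite_mem, pow_ite]
  rw [monomial_eq, C_1, one_mul, Finsupp.prod_fintype _ _ fun _ => pow_zero _, hW,
    ← Finset.prod_mul_distrib, squarefreeMonomial, ← Finset.prod_pow]
  refine Finset.prod_congr rfl fun v _ => ?_
  rw [← pow_add, Finsupp.equivFunOnFinite_symm_apply_apply]
  split_ifs <;> congr 1 <;> omega

theorem locAt_pow_le {R : Type*} (L : Type*) [CommRing R] [Field L] [Algebra R L] (r : R) (m : ℕ) :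
    locAt L (r ^ m) ≤ locAt L r := by
  rintro y ⟨n, p, hp⟩
  exact ⟨m * n, p, by rw [hp, map_pow, pow_mul]⟩

theorem exists_forall_algebraMap_eq_pow_mul {R L : Type*} [CommRing R] [Field L] [Algebra R L]
    [Finite ι] {r : R} {y : Finset ι → L} (h : ∀ S, y S ∈ locAt L r) :
    ∃ n > 0, ∃ p : Finset ι → R, ∀ S, algebraMap R L (p S) = algebraMap R L r ^ n * y S := by
  have := (Filter.eventually_all.2 fun S => eventually_exists_of_mem_locAt (h S)).and
    (Filter.eventually_gt_atTop 0)
  obtain ⟨n, hp, hn⟩ := this.exists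
  choose p hp using hp
  exact ⟨n, hn, p, hp⟩

theorem prod_squarefreeMonomial_dvd_pow [Fintype σ] (S : Finset ι) :
    ∏ k ∈ S, squarefreeMonomial K (e k) ∣ squarefreeMonomial K Finset.univ ^ S.card := by
  rw [← Finset.prod_const]
  exact Finset.prod_dvd_prod_of_dvd _ _ fun k _ =>
    Finset.prod_dvd_prod_of_subset _ _ _ (Finset.subset_univ _)

theorem X_dvd_prod_squarefreeMonomial {v : σ} :
    (X v : MvPolynomial σ K) ∣ ∏ k ∈ S, squarefreeMonomial K (e k) ↔ ∃ k ∈ S, Incident e k v := by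
  simp [(X_prime (R := K) (i := v)).dvd_finsetProd_iff, X_dvd_squarefreeMonomial, Incident]

theorem X_pow_dvd_of_mem_locAt {L : Type*} [Field L] [Algebra (MvPolynomial σ K) L]
    [FaithfulSMul (MvPolynomial σ K) L] {g r p : MvPolynomial σ K} {y : L} {v : σ} {n : ℕ}
    (hy : y ∈ locAt L g) (hp : algebraMap _ L p = algebraMap _ L r ^ n * y) (hr : X v ∣ r)
    (hg : ¬X v ∣ g) : X v ^ n ∣ p := by
  obtain ⟨m, t, ht⟩ := hy
  have hmul : g ^ m * p = r ^ n * t := by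
    apply FaithfulSMul.algebraMap_injective (MvPolynomial σ K) L
    simp only [map_mul, map_pow, hp, ht]
    ring
  have hdvd : X v ^ n ∣ g ^ m * p := hmul ▸ (pow_dvd_pow_of_dvd hr n).mul_right t
  exact (X_prime (R := K) (i := v)).pow_dvd_of_dvd_mul_left n
    (fun h => hg (X_prime.dvd_of_dvd_pow h)) hdvd

theorem coboundary_coeff_eq {L : Type*} [Field L] [Algebra (MvPolynomial σ K) L]
    [FaithfulSMul (MvPolynomial σ K) L] [LinearOrder ι] {x P : MvPolynomial σ K} {n : ℕ}
    {d : σ →₀ ℕ} (hx : x ≠ 0) (hP : P ^ n = x * monomial d 1) {c : Finset ι → K}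
    {y : Finset ι → L} {p : Finset ι → MvPolynomial σ K}
    (hp : ∀ S, algebraMap (MvPolynomial σ K) L (p S) = algebraMap _ L P ^ n * y S)
    (hy : ∀ S, coboundary y S = algebraMap (MvPolynomial σ K) L (C (c S)) / algebraMap _ L x) :
    coboundary (fun S => coeff d (p S)) = c := by
  have hal := FaithfulSMul.algebraMap_injective (MvPolynomial σ K) L
  have hx : algebraMap _ L x ≠ 0 := (map_ne_zero_iff _ hal).2 hx
  classical
  ext S
  have hcob : coboundary p S = C (c S) * monomial d 1 := by
    apply hal
    calc algebraMap _ L (coboundary p S)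
        = coboundary (fun S => AddMonoidHom.mulLeft (algebraMap _ L P ^ n) (y S)) S := by
          simp only [AddMonoidHom.coe_mulLeft, ← hp, coboundary_map]
      _ = algebraMap _ L P ^ n *
            (algebraMap (MvPolynomial σ K) L (C (c S)) / algebraMap _ L x) := by
          rw [coboundary_map]; exact congrArg _ (hy S)
      _ = algebraMap _ L (C (c S) * monomial d 1) := by
          rw [← map_pow, hP, map_mul, map_mul]
          field_simp
  have hcoeff : coboundary (fun S => coeff d (p S)) S = coeff d (coboundary p S) :=
    congrFun (coboundary_map (coeffAddMonoidHom d) p) S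
  rw [hcoeff, hcob, coeff_C_mul, coeff_monomial, if_pos rfl, mul_one]

theorem isUpperSet_coverings_univ {V : Type*} (inc : ι → V → Prop) (W : Set V) :
    IsUpperSet (coverings inc Set.univ W) := fun _ _ hST hS =>
  ⟨Set.subset_univ _, fun v hv => (hS.2 v hv).imp fun _ hk => ⟨hST hk.1, hk.2⟩⟩

theorem relCoboundary_eq_coboundary [LinearOrder ι] {M : Type*} [AddCommGroup M]
    {F : Set (Finset ι)} (hF : IsUpperSet F) {c : Finset ι → M} (hc : Function.support c ⊆ F) :
    relCoboundary F c = coboundary c := by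
  ext S
  by_cases hS : S ∈ F
  · exact relCoboundary_of_mem c hS
  rw [relCoboundary_apply, Set.indicator_of_notMem hS, coboundary_apply]
  refine (Finset.sum_eq_zero fun k _ => ?_).symm
  rw [Function.notMem_support.1 fun h => hS (hF (Finset.erase_subset k S) (hc h)), smul_zero]

/-- The Čech class is `c / x_W`, and clearing denominators and extracting a coefficient turns a
Čech cochain bounding it into a cochain bounding `c`. -/
theorem HasCoverCohomology.hasCohomology_cechCoeff [Finite σ] [Finite ι] [LinearOrder ι]
    {W : Finset σ} (L : Type*) [Field L] [Algebra (MvPolynomial σ K) L]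
    [FaithfulSMul (MvPolynomial σ K) L] (h : HasCoverCohomology K (Incident e) Set.univ W q) :
    HasCohomology (cechCoeff L fun k => squarefreeMonomial K (e k)) Set.univ q := by
  have := Fintype.ofFinite σ
  obtain ⟨c, hc, hq, hdc, hb⟩ := h
  have hup := isUpperSet_coverings_univ (Incident e) (W : Set σ)
  let al := algebraMap (MvPolynomial σ K) L
  have hW := squarefreeMonomial_ne_zero (K := K) W
  have hne {r : MvPolynomial σ K} : r ≠ 0 → al r ≠ 0 :=
    (map_ne_zero_iff al (FaithfulSMul.algebraMap_injective _ L)).2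
  refine ⟨fun S => al (C (c S)) / al (squarefreeMonomial K W), ⟨Set.subset_univ _, fun S => ?_⟩,
    fun S hS => hq S fun h => hS (by simp [h]), ?_, fun y hy hyz => ?_⟩
  · by_cases hS : S ∈ coverings (Incident e) Set.univ W
    · have hdvd := squarefreeMonomial_dvd_of_forall fun v hv =>
        X_dvd_prod_squarefreeMonomial (K := K).2 (hS.2 v hv)
      have hmem : al (C (c S)) ∈ locAt L (∏ k ∈ S, squarefreeMonomial K (e k)) :=
        ⟨0, C (c S), by simp [al]⟩
      exact pow_one (al (squarefreeMonomial K W)) ▸ div_mem_locAt (hne hW) hdvd hmem 1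
    · simp [apply_eq_zero_of_mem_cochains hc hS]
  · let f := (AddMonoidHom.mulRight (al (squarefreeMonomial K W))⁻¹).comp
      (al.comp C).toAddMonoidHom
    rw [relCoboundary_eq_coboundary isUpperSet_univ (Set.subset_univ _)]
    rw [relCoboundary_eq_coboundary hup hc.1] at hdc
    refine (congrArg coboundary (funext fun S => div_eq_mul_inv _ _)).trans
      ((coboundary_map f c).trans (funext fun S => ?_))
    rw [hdc, Pi.zero_apply, map_zero, Pi.zero_apply]
  · obtain ⟨n, hn, p, hp⟩ := exists_forall_algebraMap_eq_pow_mul fun S =>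
      locAt_pow_le L _ _ (locAt_mono (prod_squarefreeMonomial_dvd_pow S) (hy.2 S))
    obtain ⟨d, hd, hPn⟩ := exists_squarefreeMonomial_mul_monomial (K := K) W hn
    rw [relCoboundary_eq_coboundary isUpperSet_univ (Set.subset_univ _)] at hyz
    have hsupp : (Function.support fun S => coeff d (p S)) ⊆ coverings (Incident e) Set.univ W := by
      refine fun S hS => ⟨Set.subset_univ _, fun v hv => ?_⟩
      by_contra hSv
      exact hS (coeff_eq_zero_of_X_pow_dvd (X_pow_dvd_of_mem_locAt (hy.2 S) (hp S)
        (X_dvd_squarefreeMonomial.2 (Finset.mem_univ v))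
        (mt X_dvd_prod_squarefreeMonomial.1 hSv)) (hd v hv))
    refine hb _ (mem_cochains_top.2 hsupp) ?_
    rw [relCoboundary_eq_coboundary hup hsupp]
    exact coboundary_coeff_eq hW hPn hp (congrFun hyz)

theorem HasCoverCohomology.le_card_of_radical_eq {μ : Type*} [LinearOrder μ] [Fintype μ] [Finite σ]
    [Finite ι] [LinearOrder ι] {W : Finset σ}
    (h : HasCoverCohomology K (Incident e) Set.univ W q) {f : μ → MvPolynomial σ K}
    (hf : (Ideal.span (Set.range f)).radical = (hyperedgeIdeal K e).radical) :
    q ≤ Fintype.card μ := by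
  classical
  have hrange : Ideal.span (Set.range fun j : {j // f j ≠ 0} => f j) =
      Ideal.span (Set.range f) := by
    rw [← Ideal.span_sdiff_singleton_zero (s := Set.range f)]
    congr 1
    ext p
    simp only [Set.mem_range, Subtype.exists, Set.mem_sdiff, Set.mem_singleton_iff]
    grind
  have hne {r : MvPolynomial σ K} : r ≠ 0 → algebraMap _ (FractionRing (MvPolynomial σ K)) r ≠ 0 :=
    (map_ne_zero_iff _ (FaithfulSMul.algebraMap_injective _ _)).2
  refine le_trans ?_ (Fintype.card_subtype_le fun j => f j ≠ 0)
  exact (h.hasCohomology_cechCoeff (FractionRing (MvPolynomial σ K))).le_card_of_radical_eq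
    (fun k => hne (squarefreeMonomial_ne_zero (e k))) (fun j => hne j.2) (by rw [hrange, hf]; rfl)

theorem HasCoverCohomology.le_araRank {K σ : Type} [Field K] [Finite σ] [Finite ι] [LinearOrder ι]
    {e : ι → Finset σ} {W : Finset σ} (h : HasCoverCohomology K (Incident e) Set.univ W q) :
    q ≤ araRank (hyperedgeIdeal K e) := by
  let g := Finite.equivFin ι
  refine le_csInf ⟨Nat.card ι, fun j => squarefreeMonomial K (e (g.symm j)), ?_⟩ ?_
  · rw [hyperedgeIdeal, ← g.symm.surjective.range_comp]
    rfl
  · rintro s ⟨f, hf⟩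
    exact (h.le_card_of_radical_eq hf).trans_eq (Fintype.card_fin s)

end ArithmeticalRankLowerBound

section ProjectiveDimension

open CategoryTheory

variable {R : Type} [CommRing R]

theorem subsingleton_ext_succ_iff (M N : ModuleCat.{0} R) (n : ℕ) :
    Subsingleton (((Ext R (ModuleCat.{0} R) (n + 1)).obj (Opposite.op M)).obj N) ↔
      Subsingleton (Abelian.Ext.{0} M N (n + 1)) := by
  let P := projectiveResolution M
  have hcocycle : Subsingleton (Abelian.Ext.{0} M N (n + 1)) ↔
      ∀ f : P.complex.X (n + 1) ⟶ N, P.complex.d (n + 2) (n + 1) ≫ f = 0 →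
        ∃ g : P.complex.X n ⟶ N, P.complex.d (n + 1) n ≫ g = f := by
    refine ⟨fun h f hf => (P.extMk_eq_zero_iff f (n + 2) rfl hf n rfl).1 (Subsingleton.elim _ _),
      fun h => subsingleton_of_forall_eq 0 fun x => ?_⟩
    obtain ⟨f, hf, rfl⟩ := P.extMk_surjective x (n + 2) rfl
    exact (P.extMk_eq_zero_iff f (n + 2) rfl hf n rfl).2 (h f hf)
  rw [hcocycle, (P.isoExt (n + 1) N).toLinearEquiv.toEquiv.subsingleton_congr,
    ← ModuleCat.isZero_iff_subsingleton, ← HomologicalComplex.exactAt_iff_isZero_homology,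
    HomologicalComplex.exactAt_iff' _ n (n + 1) (n + 2) (by simp) (by simp),
    ShortComplex.moduleCat_exact_iff]
  rfl

variable {L M N : Type} [AddCommGroup L] [AddCommGroup M] [AddCommGroup N]
  [Module R L] [Module R M] [Module R N]

theorem projDim_eq (q : ℕ) (h : HasProjectiveDimensionLT (ModuleCat.of R M) (q + 1))
    (h' : ¬HasProjectiveDimensionLT (ModuleCat.of R M) q) : projDim R M = q := by
  refine le_antisymm (sInf_le fun i hi N => ?_) (le_sInf fun d hd => ?_)
  · have hi : q < i := by exact_mod_cast hi
    obtain ⟨i, rfl⟩ := Nat.exists_eq_add_one_of_ne_zero (Nat.ne_zero_of_lt hi)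
    rw [subsingleton_ext_succ_iff]
    exact HasProjectiveDimensionLT.subsingleton _ (q + 1) _ hi _
  · by_contra! hlt
    lift d to ℕ using hlt.ne_top
    have : HasProjectiveDimensionLT (ModuleCat.of R M) (d + 1) := by
      refine HasProjectiveDimensionLT.mk fun i hi Y e => ?_
      obtain ⟨i, rfl⟩ := Nat.exists_eq_add_one_of_ne_zero (Nat.ne_zero_of_lt hi)
      have := (subsingleton_ext_succ_iff (ModuleCat.of R M) Y i).1
        (hd (i + 1) (by exact_mod_cast hi) Y)
      exact Subsingleton.elim _ _
    exact h' (hasProjectiveDimensionLT_of_ge _ (d + 1) q (by exact_mod_cast hlt))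

theorem hasProjectiveDimensionLT_one_iff_projective :
    HasProjectiveDimensionLT (ModuleCat.of R M) 1 ↔ Module.Projective R M := by
  rw [IsProjective.iff_projective, projective_iff_hasProjectiveDimensionLT_one]

theorem hasProjectiveDimensionLT_succ_of_projective [Module.Projective R M] (n : ℕ) :
    HasProjectiveDimensionLT (ModuleCat.of R M) (n + 1) :=
  have := hasProjectiveDimensionLT_one_iff_projective (R := R) (M := M).2 inferInstance
  hasProjectiveDimensionLT_of_ge _ 1 (n + 1) (Nat.le_add_left 1 n)

theorem shortExact_moduleCat {i : L →ₗ[R] M} {f : M →ₗ[R] N} (hi : Function.Injective i)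
    (hf : Function.Surjective f) (hex : Function.Exact i f) :
    (ShortComplex.mk (ModuleCat.ofHom i) (ModuleCat.ofHom f)
      (by ext x; exact hex.apply_apply_eq_zero x)).ShortExact where
  exact := (ShortComplex.moduleCat_exact_iff _).2 fun x => (hex x).1
  mono_f := (ModuleCat.mono_iff_injective _).2 hi
  epi_g := (ModuleCat.epi_iff_surjective _).2 hf

end ProjectiveDimension

section Boundary

variable {ι R M M' : Type*} [LinearOrder ι] [Ring R] [AddCommGroup M] [Module R M]
  [AddCommGroup M']

theorem contractVertex_map {Φ : Type*} [FunLike Φ M M'] [AddMonoidHomClass Φ M M'] (f : Φ) (k : ι)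
    (c : Finset ι → M) (S : Finset ι) :
    contractVertex k (fun S => f (c S)) S = f (contractVertex k c S) := by
  by_cases hk : k ∈ S <;> simp [contractVertex, hk]

theorem contractVertex_joinVertex_add (j k : ι) (c : Finset ι → M) (S : Finset ι) :
    contractVertex j (joinVertex k c) S + joinVertex k (contractVertex j c) S =
      if j = k then c S else 0 := by
  by_cases hj : j ∈ S <;> by_cases hk : k ∈ S <;> by_cases hjk : j = k
  all_goals try subst hjk
  all_goals try contradiction
  · simp [contractVertex, joinVertex, hj, Finset.insert_erase hj, smul_smul, faceSign_erase_self,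
      faceSign_mul_self]
  · simp [contractVertex, joinVertex, hj, hjk]
  · simp [contractVertex, joinVertex, hj, hjk]
  · have hsign :
        faceSign k (insert j S) * faceSign j S + faceSign k S * faceSign j (S.erase k) = 0 := by
      have h := faceSign_mul_faceSign_erase (S := insert j S) (Finset.mem_insert_of_mem hk)
        (Finset.mem_insert_self j S) (Ne.symm hjk)
      rw [Finset.erase_insert hj, faceSign_insert_self, Finset.erase_insert_of_ne hjk,
        faceSign_insert_self] at h
      linear_combination faceSign k S * faceSign k (insert j S) * h
        - faceSign k (insert j S) * faceSign j S * faceSign_mul_self k S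
        - faceSign k S * faceSign j (S.erase k) * faceSign_mul_self k (insert j S)
    simp [contractVertex, joinVertex, hj, hk, hjk, smul_smul, Finset.erase_insert_of_ne, ← add_smul,
      mul_comm (faceSign j S), hsign]
  · simp [contractVertex, joinVertex, hj, smul_smul, faceSign_insert_self, faceSign_mul_self]
  · simp [contractVertex, joinVertex, hj, hk, hjk, Ne.symm hjk]

variable [Fintype ι]

/-- The simplicial boundary of a function on finite subsets of `ι`, adjoint to `coboundary`
(`sum_smul_boundary`). -/
def boundary (R : Type*) [Ring R] [Module R M] : (Finset ι → M) →ₗ[R] (Finset ι → M) where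
  toFun φ S := ∑ k, contractVertex k φ S
  map_add' φ ψ := by
    ext S
    simp only [Pi.add_apply, ← Finset.sum_add_distrib]
    exact Finset.sum_congr rfl fun k _ => by by_cases hk : k ∈ S <;> simp [contractVertex, hk]
  map_smul' r φ := by
    ext S
    simp only [Pi.smul_apply, Finset.smul_sum, RingHom.id_apply]
    exact Finset.sum_congr rfl fun k _ => by
      by_cases hk : k ∈ S <;> simp [contractVertex, hk, smul_comm r]

theorem boundary_apply (φ : Finset ι → M) (S : Finset ι) :
    boundary R φ S = ∑ k, contractVertex k φ S := rfl

theorem boundary_map (R' : Type*) [Ring R'] [Module R' M'] (f : M →+ M') (φ : Finset ι → M) :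
    boundary R' (fun S => f (φ S)) = fun S => f (boundary R φ S) := by
  ext S
  rw [boundary_apply, boundary_apply, map_sum]
  exact Finset.sum_congr rfl fun k _ => contractVertex_map f k φ S

theorem sum_smul_boundary (c : Finset ι → R) (φ : Finset ι → M) :
    ∑ S, c S • boundary R φ S = ∑ S, coboundary c S • φ S := by
  simp only [boundary_apply, coboundary_apply, Finset.smul_sum, Finset.sum_smul, contractVertex]
  simp only [smul_ite, smul_zero, Finset.sum_ite, Finset.sum_const_zero, zero_add]
  rw [Finset.sum_sigma', Finset.sum_sigma']
  refine Finset.sum_bij' (fun p _ => ⟨insert p.2 p.1, p.2⟩) (fun p _ => ⟨p.1.erase p.2, p.2⟩)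
    ?_ ?_ ?_ ?_ ?_
  all_goals
    rintro ⟨S, k⟩ hk
    simp only [Finset.mem_sigma, Finset.mem_univ, true_and, Finset.mem_filter] at hk
    simp [Finset.insert_erase, faceSign_insert_self, hk, mul_smul, Int.cast_smul_eq_zsmul,
      smul_comm (c S)]

theorem boundary_boundary (φ : Finset ι → M) : boundary R (boundary R φ) = 0 := by
  ext S
  have hadj := sum_smul_boundary (Pi.single S (1 : R)) (boundary R φ)
  rw [sum_smul_boundary (coboundary _), coboundary_coboundary] at hadj
  simpa [Pi.single_apply] using hadj

/-- The homotopy joining each vertex `k` to the part of a chain picked out by `p k`. -/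
def joinHomotopy (p : ι → M →+ M) (φ : Finset ι → M) (S : Finset ι) : M :=
  ∑ k, joinVertex k (fun T => p k (φ T)) S

theorem boundary_joinHomotopy_add (p : ι → M →+ M) (φ : Finset ι → M) (S : Finset ι) :
    boundary R (joinHomotopy p φ) S + joinHomotopy p (boundary R φ) S = ∑ k, p k (φ S) := by
  have hboundary (k : ι) (T : Finset ι) :
      p k (boundary R φ T) = ∑ j, contractVertex j (fun T => p k (φ T)) T := by
    simp only [boundary_apply, map_sum, contractVertex_map]
  have hjoin (k : ι) : joinVertex k (fun T => p k (boundary R φ T)) S =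
      ∑ j, joinVertex k (contractVertex j fun T => p k (φ T)) S := by
    by_cases hk : k ∈ S <;> simp [joinVertex, hk, hboundary, Finset.smul_sum]
  have hcontract (j : ι) : contractVertex j (joinHomotopy p φ) S =
      ∑ k, contractVertex j (joinVertex k fun T => p k (φ T)) S := by
    by_cases hj : j ∈ S <;> simp [contractVertex, hj, joinHomotopy, Finset.smul_sum]
  rw [boundary_apply, Finset.sum_congr rfl fun j _ => hcontract j, Finset.sum_comm, joinHomotopy,
    Finset.sum_congr rfl fun k _ => hjoin k, ← Finset.sum_add_distrib]
  simp [← Finset.sum_add_distrib, contractVertex_joinVertex_add]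

end Boundary

section MonomialCriteria

variable {K σ ι : Type*} [Field K] {e : ι → Finset σ}

theorem squarefreeMonomial_eq_monomial (s : Finset σ) :
    squarefreeMonomial K s = monomial (Finsupp.indicator s fun _ _ => 1) 1 := by
  classical
  rw [monomial_eq, C_1, one_mul, Finsupp.prod, squarefreeMonomial]
  refine Finset.prod_subset_one_on_sdiff ?_ ?_ ?_
  all_goals simp +contextual [Finset.subset_iff, Finsupp.indicator_apply]

theorem indicator_one_le_iff {s : Finset σ} {d : σ →₀ ℕ} :
    (Finsupp.indicator s fun _ _ => 1) ≤ d ↔ s ⊆ d.support := by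
  classical
  simp only [Finsupp.le_def, Finsupp.indicator_apply, Finset.subset_iff, Finsupp.mem_support_iff]
  grind

theorem squarefreeMonomial_dvd_iff {s : Finset σ} {r : MvPolynomial σ K} :
    squarefreeMonomial K s ∣ r ↔ ∀ d ∈ r.support, s ⊆ d.support := by
  rw [← Ideal.mem_span_singleton, squarefreeMonomial_eq_monomial,
    ← Set.image_singleton (f := fun d => monomial d (1 : K)), mem_ideal_span_monomial_image]
  simp only [Set.mem_singleton_iff, exists_eq_left, indicator_one_le_iff]

theorem mem_hyperedgeIdeal_iff {r : MvPolynomial σ K} :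
    r ∈ hyperedgeIdeal K e ↔ ∀ d ∈ r.support, ∃ k, e k ⊆ d.support := by
  simp only [hyperedgeIdeal, squarefreeMonomial_eq_monomial]
  rw [Set.range_comp' (fun d => monomial d (1 : K)), mem_ideal_span_monomial_image]
  simp only [Set.exists_range_iff, indicator_one_le_iff]

theorem squarefreeMonomial_dvd_of_subset {s t : Finset σ} (h : s ⊆ t) :
    squarefreeMonomial K s ∣ squarefreeMonomial K t :=
  Finset.prod_dvd_prod_of_subset _ _ _ h

end MonomialCriteria

section EdgeProjection

variable {K σ ι : Type*} [Field K] [LinearOrder ι] {e : ι → Finset σ} {k : ι}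

open Classical in
/-- The projection onto the span of the monomials for which `k` is the least hyperedge contained in
the support. -/
noncomputable def edgeProj (K : Type*) [Field K] (e : ι → Finset σ) (k : ι) :
    MvPolynomial σ K →ₗ[K] MvPolynomial σ K :=
  (basisMonomials σ K).constr K fun d =>
    if IsLeast {k | e k ⊆ d.support} k then monomial d 1 else 0

open Classical in
theorem coeff_edgeProj (d : σ →₀ ℕ) (r : MvPolynomial σ K) :
    coeff d (edgeProj K e k r) = if IsLeast {k | e k ⊆ d.support} k then coeff d r else 0 := by
  induction r using MvPolynomial.induction_on' with
  | monomial d' x =>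
    have h : monomial d' x = x • basisMonomials σ K d' := by simp [smul_monomial]
    rw [h, map_smul, edgeProj, Module.Basis.constr_basis, coe_basisMonomials]
    split_ifs <;> simp [coeff_monomial] <;> grind
  | add p q hp hq =>
    rw [map_add, coeff_add, hp, hq, coeff_add]
    split_ifs <;> simp

theorem sum_edgeProj [Fintype ι] {r : MvPolynomial σ K} (hr : r ∈ hyperedgeIdeal K e) :
    ∑ k, edgeProj K e k r = r := by
  classical
  ext d
  simp only [coeff_sum, coeff_edgeProj]
  by_cases hd : d ∈ r.support
  · obtain ⟨k, hk⟩ : ∃ k, IsLeast {k | e k ⊆ d.support} k :=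
      Set.exists_min_image _ id (Set.toFinite _) (mem_hyperedgeIdeal_iff.1 hr d hd)
    rw [Finset.sum_eq_single_of_mem k (Finset.mem_univ k) fun j _ hj =>
      if_neg fun h => hj (h.unique hk), if_pos hk]
  · simp [notMem_support_iff.1 hd]

theorem squarefreeMonomial_union_dvd_edgeProj [DecidableEq σ] {s : Finset σ} {r : MvPolynomial σ K}
    (k : ι) (h : squarefreeMonomial K s ∣ r) :
    squarefreeMonomial K (e k ∪ s) ∣ edgeProj K e k r := by
  classical
  rw [squarefreeMonomial_dvd_iff] at h ⊢
  intro d hd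
  rw [mem_support_iff, coeff_edgeProj, ne_eq, ite_eq_right_iff, not_forall] at hd
  exact Finset.union_subset hd.1.1 (h d (mem_support_iff.2 hd.2))

end EdgeProjection

section TaylorResolution

variable {K σ ι : Type*} [Field K] [DecidableEq σ] {e : ι → Finset σ} {i : ℕ}
  {φ : Finset ι → MvPolynomial σ K}

/-- The `i`-th term of the Taylor resolution of `hyperedgeIdeal K e`. The free generator at a set
`S` of `i` hyperedges is realized as the least common multiple of `S`, so that the Taylor
differential becomes the restriction of the simplicial boundary. -/
noncomputable def taylorModule (K : Type*) [Field K] (e : ι → Finset σ) (i : ℕ) :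
    Submodule (MvPolynomial σ K) (Finset ι → MvPolynomial σ K) :=
  Submodule.pi Set.univ fun S =>
    if S.card = i then Ideal.span {squarefreeMonomial K (S.biUnion e)} else ⊥

theorem mem_taylorModule_iff : φ ∈ taylorModule K e i ↔
    ∀ S, squarefreeMonomial K (S.biUnion e) ∣ φ S ∧ (φ S ≠ 0 → S.card = i) := by
  simp only [taylorModule, Submodule.mem_pi, Set.mem_univ, true_imp_iff]
  refine forall_congr' fun S => ?_
  split_ifs with hS
  · simp [hS, Ideal.mem_span_singleton]
  · simp +contextual [hS]

/-- The map sending coordinates with respect to the free generators to an element of the `i`-th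
term of the Taylor resolution. -/
noncomputable def taylorCombination (K : Type*) [Field K] (e : ι → Finset σ) (i : ℕ) :
    ({S : Finset ι // S.card = i} → MvPolynomial σ K) →ₗ[MvPolynomial σ K]
      (Finset ι → MvPolynomial σ K) :=
  LinearMap.pi fun S =>
    if h : S.card = i then squarefreeMonomial K (S.biUnion e) • LinearMap.proj ⟨S, h⟩ else 0

theorem taylorCombination_injective (e : ι → Finset σ) (i : ℕ) :
    Function.Injective (taylorCombination K e i) := fun g g' h => funext fun ⟨S, hS⟩ => by
  have hS' := congrFun h S
  simp only [taylorCombination, LinearMap.pi_apply, dif_pos hS] at hS'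
  exact mul_left_cancel₀ (squarefreeMonomial_ne_zero _) hS'

theorem range_taylorCombination :
    LinearMap.range (taylorCombination K e i) = taylorModule K e i := by
  ext φ
  rw [mem_taylorModule_iff]
  constructor
  · rintro ⟨g, rfl⟩ S
    by_cases h : S.card = i <;> simp [taylorCombination, h]
  · intro hφ
    choose g hg using fun S => (hφ S).1
    refine ⟨fun S => g S, funext fun S => ?_⟩
    by_cases h : S.card = i
    · simp [taylorCombination, h, ← hg]
    · simp [taylorCombination, h, not_ne_iff.1 (mt (hφ S).2 h)]

theorem projective_taylorModule [Finite ι] (e : ι → Finset σ) (i : ℕ) :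
    Module.Projective (MvPolynomial σ K) (taylorModule K e i) := by
  rw [← range_taylorCombination]
  exact Module.Projective.of_equiv (LinearEquiv.ofInjective _ (taylorCombination_injective e i))

theorem apply_mem_hyperedgeIdeal (h : φ ∈ taylorModule K e (i + 1)) (S : Finset ι) :
    φ S ∈ hyperedgeIdeal K e := by
  by_cases h0 : φ S = 0
  · exact h0 ▸ zero_mem _
  · rw [mem_taylorModule_iff] at h
    obtain ⟨k, hk⟩ : S.Nonempty := Finset.card_pos.1 (by rw [(h S).2 h0]; exact i.succ_pos)
    exact mem_hyperedgeIdeal_iff.2 fun d hd => ⟨k, (Finset.subset_biUnion_of_mem e hk).trans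
      (squarefreeMonomial_dvd_iff.1 (h S).1 d hd)⟩

variable [LinearOrder ι] [Fintype ι]

theorem boundary_mem_taylorModule (h : φ ∈ taylorModule K e (i + 1)) :
    boundary (MvPolynomial σ K) φ ∈ taylorModule K e i := by
  rw [mem_taylorModule_iff] at h ⊢
  refine fun S => ⟨Finset.dvd_sum fun k _ => ?_, fun hS => ?_⟩
  · by_cases hk : k ∈ S
    · simp [contractVertex, hk]
    · rw [contractVertex, if_neg hk]
      exact dvd_smul_of_dvd _ ((squarefreeMonomial_dvd_of_subset
        (Finset.biUnion_subset_biUnion_of_subset_left e (Finset.subset_insert k S))).trans (h _).1)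
  · obtain ⟨k, -, hk⟩ := Finset.exists_ne_zero_of_sum_ne_zero hS
    obtain ⟨hkS, h0⟩ := contractVertex_ne_zero hk
    have := (h _).2 h0
    rw [Finset.card_insert_of_notMem hkS] at this
    omega

/-- The syzygies in the `i`-th term of the Taylor resolution. -/
noncomputable def taylorSyzygies (K : Type*) [Field K] (e : ι → Finset σ) (i : ℕ) :
    Submodule (MvPolynomial σ K) (Finset ι → MvPolynomial σ K) :=
  taylorModule K e i ⊓ LinearMap.ker (boundary (MvPolynomial σ K)) ⊓
    Submodule.pi Set.univ fun _ => hyperedgeIdeal K e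

theorem mem_taylorSyzygies_succ_iff : φ ∈ taylorSyzygies K e (i + 1) ↔
    φ ∈ taylorModule K e (i + 1) ∧ boundary (MvPolynomial σ K) φ = 0 := by
  rw [taylorSyzygies, Submodule.mem_inf, Submodule.mem_inf, LinearMap.mem_ker,
    and_iff_left_iff_imp, Submodule.mem_pi]
  exact fun h S _ => apply_mem_hyperedgeIdeal h.1 S

theorem boundary_mem_taylorSyzygies (h : φ ∈ taylorModule K e (i + 1)) :
    boundary (MvPolynomial σ K) φ ∈ taylorSyzygies K e i := by
  refine ⟨⟨boundary_mem_taylorModule h, boundary_boundary φ⟩, fun S _ => ?_⟩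
  refine Ideal.sum_mem _ fun k _ => ?_
  by_cases hk : k ∈ S
  · simp [contractVertex, hk]
  · rw [contractVertex, if_neg hk]
    exact Submodule.smul_of_tower_mem _ _ (apply_mem_hyperedgeIdeal h _)

/-- The contracting homotopy of the Taylor resolution. -/
noncomputable def taylorHomotopy (K : Type*) [Field K] (e : ι → Finset σ) :
    (Finset ι → MvPolynomial σ K) → Finset ι → MvPolynomial σ K :=
  joinHomotopy fun k => (edgeProj K e k).toAddMonoidHom

theorem taylorHomotopy_mem_taylorModule (h : φ ∈ taylorModule K e i) :
    taylorHomotopy K e φ ∈ taylorModule K e (i + 1) := by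
  rw [mem_taylorModule_iff] at h ⊢
  refine fun S => ⟨Finset.dvd_sum fun k _ => ?_, fun hS => ?_⟩
  · by_cases hk : k ∈ S
    · have := squarefreeMonomial_union_dvd_edgeProj (e := e) k (h (S.erase k)).1
      rw [← Finset.biUnion_insert, Finset.insert_erase hk] at this
      rw [joinVertex, if_pos hk]
      exact dvd_smul_of_dvd _ this
    · simp [joinVertex, hk]
  · obtain ⟨k, -, hk⟩ := Finset.exists_ne_zero_of_sum_ne_zero hS
    obtain ⟨hkS, h0⟩ := joinVertex_ne_zero hk
    rw [← (h (S.erase k)).2 fun h => h0 (by simp [h]), Finset.card_erase_add_one hkS]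

theorem boundary_taylorHomotopy (h : φ ∈ taylorSyzygies K e i) :
    boundary (MvPolynomial σ K) (taylorHomotopy K e φ) = φ := by
  have hzero : taylorHomotopy K e (0 : Finset ι → MvPolynomial σ K) = 0 :=
    funext fun S => Finset.sum_eq_zero fun k _ => by by_cases hk : k ∈ S <;> simp [joinVertex, hk]
  ext1 S
  have hsum : boundary (MvPolynomial σ K) (taylorHomotopy K e φ) S +
      taylorHomotopy K e (boundary (MvPolynomial σ K) φ) S = ∑ k, edgeProj K e k (φ S) :=
    boundary_joinHomotopy_add _ φ S
  rwa [LinearMap.mem_ker.1 h.1.2, hzero, Pi.zero_apply, add_zero,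
    sum_edgeProj (h.2 S (Set.mem_univ S))] at hsum

/-- The Taylor differential, with codomain restricted to the syzygies. -/
noncomputable def taylorDifferential (K : Type*) [Field K] (e : ι → Finset σ) (i : ℕ) :
    taylorModule K e (i + 1) →ₗ[MvPolynomial σ K] taylorSyzygies K e i :=
  (boundary (MvPolynomial σ K)).restrict fun _ => boundary_mem_taylorSyzygies

theorem taylorDifferential_surjective (e : ι → Finset σ) (i : ℕ) :
    Function.Surjective (taylorDifferential K e i) := fun φ =>
  ⟨⟨_, taylorHomotopy_mem_taylorModule φ.2.1.1⟩, Subtype.ext (boundary_taylorHomotopy φ.2)⟩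

theorem taylorSyzygies_le (e : ι → Finset σ) (i : ℕ) :
    taylorSyzygies K e i ≤ taylorModule K e i :=
  inf_le_left.trans inf_le_left

theorem exact_inclusion_taylorDifferential (e : ι → Finset σ) (i : ℕ) :
    Function.Exact (Submodule.inclusion (taylorSyzygies_le (K := K) e (i + 1)))
      (taylorDifferential K e i) := by
  refine fun φ => ⟨fun h => ⟨⟨φ, ?_⟩, rfl⟩, ?_⟩
  · exact mem_taylorSyzygies_succ_iff.2 ⟨φ.2, congrArg Subtype.val h⟩
  · rintro ⟨ψ, rfl⟩
    exact Subtype.ext ψ.2.1.2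

theorem single_empty_mem_taylorSyzygies {r : MvPolynomial σ K} (hr : r ∈ hyperedgeIdeal K e) :
    Pi.single ∅ r ∈ taylorSyzygies K e 0 := by
  refine ⟨⟨mem_taylorModule_iff.2 fun S => ?_, ?_⟩, fun S _ => ?_⟩
  · rcases eq_or_ne S ∅ with rfl | hS
    · simp [squarefreeMonomial]
    · simp [hS]
  · refine LinearMap.mem_ker.2 (funext fun S => Finset.sum_eq_zero fun k _ => ?_)
    by_cases hk : k ∈ S <;> simp [contractVertex, hk]
  · rcases eq_or_ne S ∅ with rfl | hS
    · simpa using hr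
    · simp [hS]

/-- The syzygies in degree `0` are the ideal itself. -/
noncomputable def taylorSyzygiesZeroEquiv (K : Type*) [Field K] (e : ι → Finset σ) :
    hyperedgeIdeal K e ≃ₗ[MvPolynomial σ K] taylorSyzygies K e 0 where
  toFun r := ⟨Pi.single ∅ r, single_empty_mem_taylorSyzygies r.2⟩
  map_add' r r' := Subtype.ext (Pi.single_add ..)
  map_smul' a r := Subtype.ext (Pi.single_smul ..)
  invFun φ := ⟨φ.1 ∅, φ.2.2 ∅ (Set.mem_univ _)⟩
  left_inv r := by simp
  right_inv φ := by
    refine Subtype.ext (funext fun S => ?_)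
    rcases eq_or_ne S ∅ with rfl | hS
    · simp
    · have h0 : φ.1 S = 0 := not_ne_iff.1 fun h => hS (Finset.card_eq_zero.1
        ((mem_taylorModule_iff.1 φ.2.1.1 S).2 h))
      simp [hS, h0]

end TaylorResolution

section TaylorSyzygies

open CategoryTheory

variable {K σ ι : Type} [Field K] [DecidableEq σ] [LinearOrder ι] [Fintype ι] {e : ι → Finset σ}

theorem hasProjectiveDimensionLT_taylorSyzygies (i n : ℕ)
    (h : HasProjectiveDimensionLT
      (ModuleCat.of (MvPolynomial σ K) (MvPolynomial σ K ⧸ hyperedgeIdeal K e)) (n + i + 2)) :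
    HasProjectiveDimensionLT (ModuleCat.of (MvPolynomial σ K) (taylorSyzygies K e i)) (n + 1) := by
  induction i generalizing n with
  | zero =>
    have hI := (shortExact_moduleCat (Submodule.subtype_injective (hyperedgeIdeal K e))
      (Submodule.mkQ_surjective _) (LinearMap.exact_subtype_mkQ _)).hasProjectiveDimensionLT_X₁
      (n + 1) (hasProjectiveDimensionLT_succ_of_projective n) h
    exact hasProjectiveDimensionLT_of_iso (taylorSyzygiesZeroEquiv K e).toModuleIso (n + 1)
  | succ i ih =>
    have := projective_taylorModule (K := K) e (i + 1)
    exact (shortExact_moduleCat (Submodule.inclusion_injective (taylorSyzygies_le e (i + 1)))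
      (taylorDifferential_surjective e i)
      (exact_inclusion_taylorDifferential e i)).hasProjectiveDimensionLT_X₁ (n + 1)
      (hasProjectiveDimensionLT_succ_of_projective n) (ih (n + 1) (by convert h using 1; omega))

theorem exists_taylorModule_retraction {n : ℕ}
    (h : HasProjectiveDimensionLT
      (ModuleCat.of (MvPolynomial σ K) (MvPolynomial σ K ⧸ hyperedgeIdeal K e)) (n + 2)) :
    ∃ ρ : taylorModule K e (n + 1) →ₗ[MvPolynomial σ K] taylorSyzygies K e (n + 1),
      ∀ φ, ρ (Submodule.inclusion (taylorSyzygies_le e (n + 1)) φ) = φ := by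
  have := hasProjectiveDimensionLT_one_iff_projective.1
    (hasProjectiveDimensionLT_taylorSyzygies (e := e) n 0 (by simpa using h))
  have hsurj := taylorDifferential_surjective (K := K) e n
  obtain ⟨ρ, hρ⟩ := ((exact_inclusion_taylorDifferential e n).split_tfae
    (Submodule.inclusion_injective _) hsurj).out 0 1 |>.1
    (LinearMap.exists_rightInverse_of_surjective _ (LinearMap.range_eq_top.2 hsurj))
  exact ⟨ρ, LinearMap.congr_fun hρ⟩

end TaylorSyzygies

section OnesCoefficient

variable {K σ : Type*} [Field K] {W s : Finset σ}

/-- The sum of the coefficients of the monomials that have exponent one at every vertex of `W`. -/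
noncomputable def onesCoeff (K : Type*) [Field K] (W : Finset σ) : MvPolynomial σ K →ₗ[K] K :=
  (basisMonomials σ K).constr K fun d => if ∀ w ∈ W, d w = 1 then 1 else 0

theorem onesCoeff_monomial (W : Finset σ) (d : σ →₀ ℕ) (x : K) :
    onesCoeff K W (monomial d x) = if ∀ w ∈ W, d w = 1 then x else 0 := by
  have h : monomial d x = x • basisMonomials σ K d := by simp [smul_monomial]
  rw [h, map_smul, onesCoeff, Module.Basis.constr_basis]
  split_ifs <;> simp

variable [DecidableEq σ]

/-- Evaluation at the indicator function of the complement of `W`. -/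
noncomputable def evalOff (K : Type*) [Field K] (W : Finset σ) : MvPolynomial σ K →+* K :=
  eval fun v => if v ∈ W then 0 else 1

theorem evalOff_monomial (W : Finset σ) (d : σ →₀ ℕ) (x : K) :
    evalOff K W (monomial d x) = if ∀ w ∈ W, d w = 0 then x else 0 := by
  rw [evalOff, eval_monomial, Finsupp.prod]
  split_ifs with h
  · rw [Finset.prod_eq_one, mul_one]
    intro v hv
    rw [if_neg fun hw => Finsupp.mem_support_iff.1 hv (h v hw), one_pow]
  · push Not at h
    obtain ⟨w, hw, hd⟩ := h
    rw [Finset.prod_eq_zero (Finsupp.mem_support_iff.2 hd), mul_zero]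
    rw [if_pos hw, zero_pow hd]

theorem evalOff_squarefreeMonomial (W s : Finset σ) :
    evalOff K W (squarefreeMonomial K s) = if Disjoint s W then 1 else 0 := by
  split_ifs with h
  · rw [squarefreeMonomial, map_prod]
    refine Finset.prod_eq_one fun v hv => ?_
    rw [evalOff, eval_X, if_neg (Finset.disjoint_left.1 h hv)]
  · obtain ⟨v, hv, hvW⟩ := Finset.not_disjoint_iff.1 h
    rw [squarefreeMonomial, map_prod]
    refine Finset.prod_eq_zero hv ?_
    rw [evalOff, eval_X, if_pos hvW]

theorem onesCoeff_squarefreeMonomial_mul (hs : W ⊆ s) (r : MvPolynomial σ K) :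
    onesCoeff K W (squarefreeMonomial K s * r) = evalOff K W r := by
  induction r using MvPolynomial.induction_on' with
  | monomial d x =>
    rw [squarefreeMonomial_eq_monomial, monomial_mul, one_mul, onesCoeff_monomial,
      evalOff_monomial]
    refine if_congr (forall₂_congr fun w hw => ?_) rfl rfl
    rw [Finsupp.add_apply, Finsupp.indicator_of_mem (hs hw), Nat.add_eq_left]
  | add p q hp hq => rw [mul_add, map_add, map_add, hp, hq]

theorem onesCoeff_mul_of_dvd (hs : W ⊆ s) {p : MvPolynomial σ K}
    (hp : squarefreeMonomial K s ∣ p) (r : MvPolynomial σ K) :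
    onesCoeff K W (r * p) = evalOff K W r * onesCoeff K W p := by
  obtain ⟨p, rfl⟩ := hp
  rw [mul_left_comm, onesCoeff_squarefreeMonomial_mul hs, onesCoeff_squarefreeMonomial_mul hs,
    map_mul]

end OnesCoefficient

section CochainPairing

variable {K σ ι : Type*} [Field K] [Fintype ι] {e : ι → Finset σ}
  {W : Finset σ} {c : Finset ι → K} {i : ℕ} {φ ψ : Finset ι → MvPolynomial σ K}

/-- The pairing of a cochain with the elements of the Taylor resolution. -/
noncomputable def cochainPairing (W : Finset σ) (c : Finset ι → K) :
    (Finset ι → MvPolynomial σ K) →ₗ[K] K :=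
  ∑ S, c S • onesCoeff K W ∘ₗ LinearMap.proj S

theorem cochainPairing_apply (W : Finset σ) (c : Finset ι → K)
    (φ : Finset ι → MvPolynomial σ K) :
    cochainPairing W c φ = ∑ S, c S • onesCoeff K W (φ S) := by
  simp [cochainPairing]

theorem cochainPairing_boundary [LinearOrder ι] (hdc : coboundary c = 0)
    (φ : Finset ι → MvPolynomial σ K) :
    cochainPairing W c (boundary (MvPolynomial σ K) φ) = 0 := by
  rw [cochainPairing_apply]
  refine (Finset.sum_congr rfl fun S _ => congrArg (c S • ·)
    (congrFun (boundary_map K (onesCoeff K W).toAddMonoidHom φ) S).symm).trans ?_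
  rw [sum_smul_boundary, hdc]
  simp

variable [DecidableEq σ]

omit [Fintype ι] in
theorem mem_coverings_incident_iff {S : Finset ι} :
    S ∈ coverings (Incident e) Set.univ (W : Set σ) ↔ W ⊆ S.biUnion e := by
  simp [coverings, Incident, Finset.subset_iff]

theorem cochainPairing_smul (hc : Function.support c ⊆ coverings (Incident e) Set.univ W)
    (hφ : φ ∈ taylorModule K e i) (r : MvPolynomial σ K) :
    cochainPairing W c (r • φ) = evalOff K W r * cochainPairing W c φ := by
  simp only [cochainPairing_apply, Finset.mul_sum, Pi.smul_apply, smul_eq_mul]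
  refine Finset.sum_congr rfl fun S _ => ?_
  by_cases hS : c S = 0
  · simp [hS]
  · rw [onesCoeff_mul_of_dvd (mem_coverings_incident_iff.1 (hc hS))
      (mem_taylorModule_iff.1 hφ S).1, mul_left_comm]

variable [LinearOrder ι]

theorem cochainPairing_eq_of_boundary_eq (hdc : coboundary c = 0)
    (hφ : φ ∈ taylorModule K e (i + 1)) (hψ : ψ ∈ taylorModule K e (i + 1))
    (h : boundary (MvPolynomial σ K) φ = boundary (MvPolynomial σ K) ψ) :
    cochainPairing W c φ = cochainPairing W c ψ := by
  have hsyz : φ - ψ ∈ taylorSyzygies K e (i + 1) :=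
    mem_taylorSyzygies_succ_iff.2 ⟨sub_mem hφ hψ, by rw [map_sub, h, sub_self]⟩
  rw [← sub_eq_zero, ← map_sub, ← boundary_taylorHomotopy hsyz, cochainPairing_boundary hdc]

/-- The map induced on syzygies by pairing a preimage under the boundary with a cocycle. -/
noncomputable def syzygyPairing (W : Finset σ) (e : ι → Finset σ) (i : ℕ)
    (hdc : coboundary c = 0) : taylorSyzygies K e i →+ K :=
  AddMonoidHom.mk' (fun φ => cochainPairing W c (taylorHomotopy K e φ)) fun φ ψ => by
    rw [← map_add]
    refine cochainPairing_eq_of_boundary_eq hdc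
      (taylorHomotopy_mem_taylorModule (taylorSyzygies_le e i (φ + ψ).2))
      (add_mem (taylorHomotopy_mem_taylorModule (taylorSyzygies_le e i φ.2))
        (taylorHomotopy_mem_taylorModule (taylorSyzygies_le e i ψ.2))) ?_
    rw [map_add, boundary_taylorHomotopy (φ + ψ).2, boundary_taylorHomotopy φ.2,
      boundary_taylorHomotopy ψ.2, Submodule.coe_add]

theorem syzygyPairing_eq (hdc : coboundary c = 0) {φ : taylorSyzygies K e i}
    (hψ : ψ ∈ taylorModule K e (i + 1)) (h : boundary (MvPolynomial σ K) ψ = φ) :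
    syzygyPairing W e i hdc φ = cochainPairing W c ψ :=
  cochainPairing_eq_of_boundary_eq hdc
    (taylorHomotopy_mem_taylorModule (taylorSyzygies_le e i φ.2)) hψ
    ((boundary_taylorHomotopy φ.2).trans h.symm)

theorem syzygyPairing_smul (hc : Function.support c ⊆ coverings (Incident e) Set.univ W)
    (hdc : coboundary c = 0) (r : MvPolynomial σ K) (φ : taylorSyzygies K e i) :
    syzygyPairing W e i hdc (r • φ) = evalOff K W r * syzygyPairing W e i hdc φ := by
  have hmem := taylorHomotopy_mem_taylorModule (taylorSyzygies_le e i φ.2)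
  rw [syzygyPairing_eq hdc (Submodule.smul_mem _ r hmem), cochainPairing_smul hc hmem]
  · rfl
  · rw [map_smul, boundary_taylorHomotopy φ.2, Submodule.coe_smul]

end CochainPairing

section TaylorGenerator

variable {K σ ι : Type*} [Field K] [DecidableEq σ] [DecidableEq ι] {e : ι → Finset σ} {i : ℕ}

/-- The generator at `S` of the `i`-th term of the Taylor resolution; it is `0` unless `S` has `i`
elements. -/
noncomputable def taylorGenerator (K : Type*) [Field K] (e : ι → Finset σ) (i : ℕ)
    (S : Finset ι) : taylorModule K e i :=
  ⟨Pi.single S (if S.card = i then squarefreeMonomial K (S.biUnion e) else 0),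
    mem_taylorModule_iff.2 fun T => by
      rcases eq_or_ne T S with rfl | hT
      · split_ifs with h <;> simp [h]
      · simp [hT]⟩

theorem coe_taylorGenerator (S : Finset ι) : (taylorGenerator K e i S : Finset ι → _) =
    Pi.single S (if S.card = i then squarefreeMonomial K (S.biUnion e) else 0) := rfl

/-- The quotient of the least common multiples of `S` and `S.erase k`. -/
noncomputable def lcmQuotient (K : Type*) [Field K] (e : ι → Finset σ) (k : ι) (S : Finset ι) :
    MvPolynomial σ K :=
  squarefreeMonomial K (S.biUnion e \ (S.erase k).biUnion e)

theorem lcmQuotient_mul (k : ι) (S : Finset ι) :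
    lcmQuotient K e k S * squarefreeMonomial K ((S.erase k).biUnion e) =
      squarefreeMonomial K (S.biUnion e) :=
  Finset.prod_sdiff (Finset.biUnion_subset_biUnion_of_subset_left e (Finset.erase_subset k S))

theorem evalOff_lcmQuotient {W : Finset σ} (k : ι) {S : Finset ι} (hS : W ⊆ S.biUnion e) :
    evalOff K W (lcmQuotient K e k S) = if W ⊆ (S.erase k).biUnion e then 1 else 0 := by
  rw [lcmQuotient, evalOff_squarefreeMonomial]
  refine if_congr ?_ rfl rfl
  simp only [Finset.disjoint_left, Finset.mem_sdiff, Finset.subset_iff] at hS ⊢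
  grind

end TaylorGenerator

section TaylorLowerBound

variable {K σ ι : Type*} [Field K] [DecidableEq σ] [LinearOrder ι] [Fintype ι]
  {e : ι → Finset σ} {W : Finset σ} {c : Finset ι → K} {n : ℕ}

theorem boundary_taylorGenerator (S : Finset ι) :
    boundary (MvPolynomial σ K) (taylorGenerator K e (n + 1) S : Finset ι → MvPolynomial σ K) =
      (∑ k ∈ S, faceSign k S • lcmQuotient K e k S • taylorGenerator K e n (S.erase k) :
        taylorModule K e n) := by
  ext1 T
  simp only [Submodule.coe_sum, Finset.sum_apply, boundary_apply, coe_taylorGenerator]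
  rw [← Finset.sum_subset (Finset.subset_univ S)]
  · refine Finset.sum_congr rfl fun k hk => ?_
    have hcard : (S.erase k).card = n ↔ S.card = n + 1 := by
      rw [← Finset.card_erase_add_one hk, Nat.add_right_cancel_iff]
    simp only [Submodule.coe_smul_of_tower, Pi.smul_apply, coe_taylorGenerator, hcard]
    rcases eq_or_ne T (S.erase k) with rfl | hT
    · simp [contractVertex, Finset.insert_erase hk, faceSign_erase_self, lcmQuotient_mul]
    · have hins : k ∉ T → insert k T ≠ S := by
        rintro hkT rfl
        exact hT (Finset.erase_insert hkT).symm
      by_cases hkT : k ∈ T <;> simp [contractVertex, hT, hkT, hins]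
  · intro k _ hk
    have hins : insert k T ≠ S := fun h => hk (h ▸ Finset.mem_insert_self k T)
    simp [contractVertex, hins]

theorem cochainPairing_taylorGenerator
    (hc : Function.support c ⊆ coverings (Incident e) Set.univ W)
    (hn : ∀ S, c S ≠ 0 → S.card = n) (S : Finset ι) :
    cochainPairing W c (taylorGenerator K e n S) = c S := by
  rw [cochainPairing_apply, coe_taylorGenerator,
    Finset.sum_eq_single_of_mem S (Finset.mem_univ S) fun T _ hT => by simp [hT]]
  by_cases hS : c S = 0
  · simp [hS]
  · have h1 := onesCoeff_squarefreeMonomial_mul (K := K) (mem_coverings_incident_iff.1 (hc hS)) 1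
    rw [mul_one, map_one] at h1
    simp [hn S hS, h1]

-- The boundary of a generator is a syzygy, so it is fixed by the retraction; expanding it in the
-- generators of the previous degree exhibits `c` as a coboundary.
theorem coboundary_syzygyPairing_retraction (hdc : coboundary c = 0)
    (hc : Function.support c ⊆ coverings (Incident e) Set.univ W)
    (hn : ∀ S, c S ≠ 0 → S.card = n + 1)
    {ρ : taylorModule K e n →ₗ[MvPolynomial σ K] taylorSyzygies K e n}
    (hρ : ∀ φ, ρ (Submodule.inclusion (taylorSyzygies_le e n) φ) = φ) :
    coboundary ((coverings (Incident e) Set.univ W).indicator fun S =>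
      syzygyPairing W e n hdc (ρ (taylorGenerator K e n S))) = c := by
  ext S
  by_cases hS : S ∈ coverings (Incident e) Set.univ W
  · let β : taylorSyzygies K e n := taylorDifferential K e n (taylorGenerator K e (n + 1) S)
    have hβ : Submodule.inclusion (taylorSyzygies_le e n) β =
        ∑ k ∈ S, faceSign k S • lcmQuotient K e k S • taylorGenerator K e n (S.erase k) :=
      Subtype.ext (boundary_taylorGenerator S)
    have hpair : syzygyPairing W e n hdc β = c S :=
      (syzygyPairing_eq hdc (taylorGenerator K e (n + 1) S).2 rfl).trans
        (cochainPairing_taylorGenerator hc hn S)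
    rw [← hpair, ← hρ β, hβ, map_sum, map_sum, coboundary_apply]
    refine Finset.sum_congr rfl fun k _ => ?_
    rw [map_zsmul, map_zsmul, map_smul, syzygyPairing_smul hc,
      evalOff_lcmQuotient k (mem_coverings_incident_iff.1 hS)]
    by_cases hk : W ⊆ (S.erase k).biUnion e
    · rw [Set.indicator_of_mem (mem_coverings_incident_iff.2 hk), if_pos hk, one_mul]
    · rw [Set.indicator_of_notMem (mt mem_coverings_incident_iff.1 hk), if_neg hk, zero_mul]
  · rw [Function.notMem_support.1 (mt (@hc S) hS)]
    by_contra hne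
    obtain ⟨k, _, hk⟩ := exists_ne_zero_of_coboundary_ne_zero hne
    exact hS (isUpperSet_coverings_univ _ _ (Finset.erase_subset k S)
      (Set.mem_of_indicator_ne_zero hk))

theorem HasCoverCohomology.not_hasProjectiveDimensionLT {K σ ι : Type} [Field K] [LinearOrder ι]
    [Finite ι] {e : ι → Finset σ} {W : Finset σ}
    (h : HasCoverCohomology K (Incident e) Set.univ W (n + 2)) :
    ¬CategoryTheory.HasProjectiveDimensionLT
      (ModuleCat.of (MvPolynomial σ K) (MvPolynomial σ K ⧸ hyperedgeIdeal K e)) (n + 2) := by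
  classical
  have := Fintype.ofFinite ι
  intro hpd
  obtain ⟨ρ, hρ⟩ := exists_taylorModule_retraction hpd
  obtain ⟨c, hc, hq, hdc, hb⟩ := h
  have hup := isUpperSet_coverings_univ (Incident e) (W : Set σ)
  rw [relCoboundary_eq_coboundary hup hc.1] at hdc
  refine hb ((coverings (Incident e) Set.univ W).indicator fun S =>
    syzygyPairing W e (n + 1) hdc (ρ (taylorGenerator K e (n + 1) S)))
    ⟨Set.support_indicator_subset, fun _ => trivial⟩ ?_
  rw [relCoboundary_eq_coboundary hup Set.support_indicator_subset]
  exact coboundary_syzygyPairing_retraction hdc hc.1 hq hρ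

end TaylorLowerBound

section ColonSequence

open CategoryTheory

variable {R : Type} [CommRing R] {I J L : Ideal R} {x : R}

theorem exists_shortExact_quotient (hJ : ∀ r, x * r ∈ I ↔ r ∈ J) (hL : L = I ⊔ Ideal.span {x}) :
    ∃ (f : ModuleCat.of R (R ⧸ J) ⟶ ModuleCat.of R (R ⧸ I))
      (g : ModuleCat.of R (R ⧸ I) ⟶ ModuleCat.of R (R ⧸ L)) (h : f ≫ g = 0),
      (ShortComplex.mk f g h).ShortExact := by
  have hIL : I ≤ L := hL ▸ le_sup_left
  have hxL : x ∈ L := hL ▸ Ideal.mem_sup_right (Ideal.mem_span_singleton_self x)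
  refine ⟨_, _, _, shortExact_moduleCat
    (i := Submodule.mapQ J I (LinearMap.mulLeft R x) fun r => (hJ r).2)
    (f := Submodule.factor hIL) ?_ (Submodule.factor_surjective hIL) ?_⟩
  · refine (injective_iff_map_eq_zero _).2 fun y hy => ?_
    obtain ⟨r, rfl⟩ := Submodule.Quotient.mk_surjective _ y
    exact (Submodule.Quotient.mk_eq_zero J).2 ((hJ r).1 ((Submodule.Quotient.mk_eq_zero I).1 hy))
  · intro y
    obtain ⟨r, rfl⟩ := Submodule.Quotient.mk_surjective _ y
    refine ⟨fun hr => ?_, ?_⟩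
    · have hrL : r ∈ L := (Submodule.Quotient.mk_eq_zero L).1 hr
      obtain ⟨a, ha, b, hb, rfl⟩ := Submodule.mem_sup.1 (hL ▸ hrL)
      obtain ⟨s, rfl⟩ := Ideal.mem_span_singleton.1 hb
      exact ⟨Submodule.Quotient.mk s, (Submodule.Quotient.eq I).2 (by simpa using ha)⟩
    · rintro ⟨z, hz⟩
      obtain ⟨s, rfl⟩ := Submodule.Quotient.mk_surjective _ z
      have hdiff : x * s - r ∈ L := hIL ((Submodule.Quotient.eq I).1 hz)
      refine (Submodule.Quotient.mk_eq_zero L).2 ?_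
      simpa using L.sub_mem (L.mul_mem_right s hxL) hdiff

theorem hasProjectiveDimensionLT_quotient_of_colon (hJ : ∀ r, x * r ∈ I ↔ r ∈ J)
    (hL : L = I ⊔ Ideal.span {x}) {n : ℕ}
    (hdJ : HasProjectiveDimensionLT (ModuleCat.of R (R ⧸ J)) n)
    (hdL : HasProjectiveDimensionLT (ModuleCat.of R (R ⧸ L)) n) :
    HasProjectiveDimensionLT (ModuleCat.of R (R ⧸ I)) n :=
  have ⟨_, _, _, hex⟩ := exists_shortExact_quotient hJ hL
  hex.hasProjectiveDimensionLT_X₂ n hdJ hdL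

theorem hasProjectiveDimensionLT_quotient_sup_span (hx : ∀ r, x * r ∈ I ↔ r ∈ I)
    (hL : L = I ⊔ Ideal.span {x}) {n : ℕ}
    (hdI : HasProjectiveDimensionLT (ModuleCat.of R (R ⧸ I)) n) :
    HasProjectiveDimensionLT (ModuleCat.of R (R ⧸ L)) (n + 1) :=
  have ⟨_, _, _, hex⟩ := exists_shortExact_quotient hx hL
  hex.hasProjectiveDimensionLT_X₃ n hdI (hasProjectiveDimensionLT_of_ge _ n _ n.le_succ)

end ColonSequence

section RestrictSupport

variable {K σ : Type*} [Field K] {s t : Set (σ →₀ ℕ)} {hs : IsUpperSet s} {ht : IsUpperSet t}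
  {v : σ}

theorem X_mul_mem_restrictSupportIdeal_iff (h : ∀ d, d + Finsupp.single v 1 ∈ s ↔ d ∈ t)
    (r : MvPolynomial σ K) :
    X v * r ∈ restrictSupportIdeal K s hs ↔ r ∈ restrictSupportIdeal K t ht := by
  change ((X v * r).support : Set _) ⊆ s ↔ (r.support : Set _) ⊆ t
  rw [mul_comm, support_mul_X]
  simp [Set.subset_def, h]

theorem restrictSupportIdeal_eq_sup_span_X (h : ∀ d, d ∈ t ↔ d ∈ s ∨ d v ≠ 0) :
    restrictSupportIdeal K t ht = restrictSupportIdeal K s hs ⊔ Ideal.span {X v} := by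
  refine le_antisymm (fun r hr => ?_) (sup_le (restrictSupport_mono K fun d hd => (h d).2 (.inl hd))
    ((Ideal.span_singleton_le_iff_mem _).2 ?_))
  · rw [← support_sum_monomial_coeff r]
    refine Ideal.sum_mem _ fun d hd => ?_
    rcases (h d).1 (hr hd) with hd | hd
    · exact Ideal.mem_sup_left ((monomial_mem_restrictSupport K).2 (.inl hd))
    · exact Ideal.mem_sup_right (Ideal.mem_span_singleton.2
        (X_dvd_monomial.2 (.inr hd)))
  · exact (monomial_mem_restrictSupport K).2 (.inl ((h _).2 (.inr (by simp))))

end RestrictSupport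

section Branching

variable {V : Type*} {E E' : V → V → Prop} {q q' : ℕ}

/-- `Branching E q` bounds the big height of the graph with edge relation `E` by `q` through a
recursion: choose a vertex `v`, and either remove the set `N` of its neighbours at the cost `#N`, or
remove `v` itself at the cost `1`. -/
inductive Branching : (V → V → Prop) → ℕ → Prop
  | nil {E : V → V → Prop} {q : ℕ} (hE : ∀ u v, ¬E u v) : Branching E q
  | branch {E E₁ E₂ : V → V → Prop} {q q₁ q₂ : ℕ} (v : V) (N : Finset V)
      (hN : ∀ u, u ∈ N ↔ E v u ∨ E u v) (hv : v ∉ N)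
      (hE₁ : ∀ x y, E₁ x y ↔ E x y ∧ x ∉ N ∧ y ∉ N)
      (hE₂ : ∀ x y, E₂ x y ↔ E x y ∧ x ≠ v ∧ y ≠ v)
      (hq₁ : N.card + q₁ ≤ q) (hq₂ : 1 + q₂ ≤ q) : Branching E₁ q₁ → Branching E₂ q₂ → Branching E q

theorem Branching.mono (h : Branching E q) (hq : q ≤ q') : Branching E q' := by
  cases h with
  | nil hE => exact .nil hE
  | branch v N hN hv hE₁ hE₂ hq₁ hq₂ h₁ h₂ =>
    exact .branch v N hN hv hE₁ hE₂ (hq₁.trans hq) (hq₂.trans hq) h₁ h₂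

theorem Branching.congr (h : Branching E q) (hE : ∀ u v, E' u v ↔ E u v) : Branching E' q := by
  rwa [show E' = E from funext₂ fun u v => propext (hE u v)]

theorem Branching.or (h : Branching E q) (h' : Branching E' q')
    (hd : ∀ u v u' v', E u v → E' u' v' → u ≠ u' ∧ u ≠ v' ∧ v ≠ u' ∧ v ≠ v') :
    Branching (fun u v => E u v ∨ E' u v) (q + q') := by
  induction h with
  | nil hE => exact (h'.congr fun u v => by simp [hE]).mono (Nat.le_add_left _ _)
  | @branch E E₁ E₂ q q₁ q₂ v N hN hv hE₁ hE₂ hq₁ hq₂ _ _ ih₁ ih₂ =>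
    have hb₁ := ih₁ fun u v u' v' h => hd _ _ _ _ ((hE₁ _ _).1 h).1
    have hb₂ := ih₂ fun u v u' v' h => hd _ _ _ _ ((hE₂ _ _).1 h).1
    by_cases hempty : ∀ u, u ∉ N
    · exact (hb₂.congr fun x y => by grind).mono (by omega)
    · exact .branch v N (by grind) hv (by grind) (by grind) (by omega) (by omega) hb₁ hb₂

end Branching

section BranchingBound

open CategoryTheory

variable {K σ : Type} [Field K] {V : Type*} {φ : σ → V} {W : Finset V} {E : V → V → Prop} {q : ℕ}

/-- The exponents of the monomials divisible by a variable with label in `W` or by the product of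
two variables whose labels are joined by `E`. -/
def labelledExponents (φ : σ → V) (W : Finset V) (E : V → V → Prop) : Set (σ →₀ ℕ) :=
  {d | (∃ s, φ s ∈ W ∧ d s ≠ 0) ∨ ∃ s t, E (φ s) (φ t) ∧ d s ≠ 0 ∧ d t ≠ 0}

theorem mem_labelledExponents {d : σ →₀ ℕ} : d ∈ labelledExponents φ W E ↔
    (∃ s, φ s ∈ W ∧ d s ≠ 0) ∨ ∃ s t, E (φ s) (φ t) ∧ d s ≠ 0 ∧ d t ≠ 0 := Iff.rfl

theorem isUpperSet_labelledExponents (φ : σ → V) (W : Finset V) (E : V → V → Prop) :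
    IsUpperSet (labelledExponents φ W E) := by
  intro d d' hdd' hd
  have hne (s : σ) (hs : d s ≠ 0) : d' s ≠ 0 := fun h => hs (Nat.le_zero.1 (h ▸ hdd' s))
  exact hd.imp (fun ⟨s, hs, h⟩ => ⟨s, hs, hne s h⟩)
    fun ⟨s, t, hst, hs, ht⟩ => ⟨s, t, hst, hne s hs, hne t ht⟩

theorem add_single_mem_labelledExponents [DecidableEq V] {s : σ} {N : Finset V}
    {E₁ : V → V → Prop} (hN : ∀ u, u ∈ N ↔ E (φ s) u ∨ E u (φ s)) (hs : φ s ∉ N) (hsW : φ s ∉ W)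
    (hE₁ : ∀ x y, E₁ x y ↔ E x y ∧ x ∉ N ∧ y ∉ N) (d : σ →₀ ℕ) :
    d + Finsupp.single s 1 ∈ labelledExponents φ W E ↔ d ∈ labelledExponents φ (W ∪ N) E₁ := by
  classical
  simp only [mem_labelledExponents, Finsupp.add_apply, Finsupp.single_apply, Finset.mem_union]
  grind

theorem mem_labelledExponents_insert [DecidableEq V] (hφ : Function.Injective φ) {s : σ}
    {E₂ : V → V → Prop} (hE₂ : ∀ x y, E₂ x y ↔ E x y ∧ x ≠ φ s ∧ y ≠ φ s) (d : σ →₀ ℕ) :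
    d ∈ labelledExponents φ (insert (φ s) W) E₂ ↔ d ∈ labelledExponents φ W E ∨ d s ≠ 0 := by
  simp only [mem_labelledExponents, Finset.mem_insert, hφ.eq_iff, hφ.ne_iff, hE₂]
  grind

variable (K φ W E) in
/-- The ideal generated by the variables with label in `W` and the products of two variables whose
labels are joined by `E`. -/
noncomputable abbrev labelledIdeal : Ideal (MvPolynomial σ K) :=
  restrictSupportIdeal K (labelledExponents φ W E) (isUpperSet_labelledExponents φ W E)

theorem labelledIdeal_congr {W' : Finset V} {E' : V → V → Prop}
    (h : labelledExponents φ W E = labelledExponents φ W' E') :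
    labelledIdeal K φ W E = labelledIdeal K φ W' E' := by
  simp only [labelledIdeal, h]

theorem hasProjectiveDimensionLT_of_no_edges (hφ : Function.Injective φ) (hE : ∀ u v, ¬E u v)
    (W : Finset V) : HasProjectiveDimensionLT
      (ModuleCat.of (MvPolynomial σ K) (MvPolynomial σ K ⧸ labelledIdeal K φ W E))
      (W.card + 1) := by
  classical
  induction W using Finset.induction_on with
  | empty =>
    have hbot : labelledIdeal K φ ∅ E = ⊥ := by
      refine (Submodule.eq_bot_iff _).2 fun r hr => ?_
      refine support_eq_empty.1 (Finset.eq_empty_of_forall_notMem fun d hd => ?_)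
      simpa [mem_labelledExponents, hE] using hr hd
    rw [hbot, Finset.card_empty, zero_add, hasProjectiveDimensionLT_one_iff_projective]
    exact .of_equiv (Submodule.quotEquivOfEqBot ⊥ rfl).symm
  | insert v W hv ih =>
    rw [Finset.card_insert_of_notMem hv]
    by_cases hs : ∃ s, φ s = v
    · obtain ⟨s, rfl⟩ := hs
      refine hasProjectiveDimensionLT_quotient_sup_span (x := X s)
        (X_mul_mem_restrictSupportIdeal_iff fun d => ?_) (restrictSupportIdeal_eq_sup_span_X
          (mem_labelledExponents_insert hφ fun x y => by simp [hE])) ih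
      rw [add_single_mem_labelledExponents (N := ∅) (E₁ := E) (by simp [hE]) (by simp) hv (by simp),
        Finset.union_empty]
    · rw [labelledIdeal_congr (W' := W) (E' := E) (by ext d; simp [mem_labelledExponents]; grind)]
      exact hasProjectiveDimensionLT_of_ge _ (W.card + 1) _ (Nat.le_succ _)

theorem Branching.hasProjectiveDimensionLT (hφ : Function.Injective φ) (h : Branching E q)
    (W : Finset V) : HasProjectiveDimensionLT
      (ModuleCat.of (MvPolynomial σ K) (MvPolynomial σ K ⧸ labelledIdeal K φ W E))
      (W.card + q + 1) := by
  classical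
  induction h generalizing W with
  | nil hE =>
    have h := hasProjectiveDimensionLT_of_no_edges (K := K) hφ hE W
    exact hasProjectiveDimensionLT_of_ge _ (W.card + 1) _ (by omega)
  | @branch E E₁ E₂ q q₁ q₂ v N hN hv hE₁ hE₂ hq₁ hq₂ _ _ ih₁ ih₂ =>
    by_cases hvW : v ∉ W ∧ ∃ s, φ s = v
    · obtain ⟨hvW, s, rfl⟩ := hvW
      have hcard₁ := Finset.card_union_le W N
      have hcard₂ := Finset.card_insert_le (φ s) W
      exact hasProjectiveDimensionLT_quotient_of_colon (x := X s)
        (X_mul_mem_restrictSupportIdeal_iff (add_single_mem_labelledExponents hN hv hvW hE₁))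
        (restrictSupportIdeal_eq_sup_span_X (mem_labelledExponents_insert hφ hE₂))
        (@hasProjectiveDimensionLT_of_ge _ _ _ _ _ _ (by omega) (ih₁ (W ∪ N)))
        (@hasProjectiveDimensionLT_of_ge _ _ _ _ _ _ (by omega) (ih₂ (insert (φ s) W)))
    · rw [labelledIdeal_congr (W' := W) (E' := E₂) (by
        ext d; simp only [mem_labelledExponents]; grind)]
      exact @hasProjectiveDimensionLT_of_ge _ _ _ _ _ _ (by omega) (ih₂ W)

end BranchingBound

section BicyclicBranching

/-- The path on the `j` vertices `lo, …, lo + j - 1`. -/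
def PathE (lo j u v : ℕ) : Prop := v = u + 1 ∧ lo ≤ u ∧ v < lo + j

/-- The cycle on the `n` vertices `lo, …, lo + n - 1`. -/
def CycleE (lo n u v : ℕ) : Prop := PathE lo n u v ∨ u = lo + n - 1 ∧ v = lo

/-- The cycle on `0, …, n - 1` with the path on the `k` vertices `lo, …, lo + k - 1` attached
at `0` by its last vertex. -/
def LolliE (n lo k u v : ℕ) : Prop :=
  CycleE 0 n u v ∨ PathE lo k u v ∨ 0 < k ∧ u = lo + k - 1 ∧ v = 0

/-- Two cycles sharing the vertex `0`. -/
def VertexJoinE (n m u v : ℕ) : Prop :=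
  CycleE 0 n u v ∨ u = 0 ∧ v = n ∨ PathE n (m - 1) u v ∨ u = n + m - 2 ∧ v = 0

/-- Two cycles joined by a path with `k` internal vertices from `n` to `0`. -/
def PathJoinE (n m k u v : ℕ) : Prop :=
  CycleE n m u v ∨ LolliE n (n + m) k u v ∨ 0 < k ∧ u = n ∧ v = n + m ∨ k = 0 ∧ u = n ∧ v = 0

/-- The common value of the invariants of two cycles sharing a vertex. -/
def vertexJoinRank (n m : ℕ) : ℕ :=
  max (2 * n / 3 + 2 * m / 3) (1 + 2 * (n - 1) / 3 + 2 * (m - 1) / 3)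

/-- The common value of the invariants of two cycles joined by a path with `k` internal
vertices. -/
def pathJoinRank (n m k : ℕ) : ℕ :=
  2 * (n - 1) / 3 + 2 * (m - 1) / 3 + 2 * (k / 3) +
    if k % 3 = 0 then 2
    else if k % 3 = 1 then (if n % 3 = 1 ∧ m % 3 = 1 then 2 else 3)
    else (if n % 3 = 1 ∨ m % 3 = 1 then 3 else 4)

theorem branching_path (lo j : ℕ) : Branching (PathE lo j) (2 * j / 3) := by
  induction j using Nat.strong_induction_on generalizing lo with
  | _ j ih =>
    by_cases h1 : j ≤ 1
    · exact .nil (by grind [PathE])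
    by_cases h2 : j = 2
    · exact .branch lo {lo + 1} (by grind [PathE]) (by grind) (by grind [PathE]) (by grind [PathE])
        (by grind) (by grind) (ih 0 (by omega) lo) (ih 0 (by omega) lo)
    · exact .branch (lo + 1) {lo, lo + 2} (by grind [PathE]) (by grind) (by grind [PathE])
        (by grind [PathE]) (by grind) (by omega) (ih (j - 3) (by omega) (lo + 3))
        (ih (j - 2) (by omega) (lo + 2))

variable {n m k lo : ℕ}

theorem branching_lolli (hn : 3 ≤ n) (hlo : n ≤ lo) {q : ℕ}
    (h₁ : (if k = 0 then 2 else 3) + 2 * (n - 3) / 3 + 2 * (k - 1) / 3 ≤ q)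
    (h₂ : 1 + 2 * (n - 1) / 3 + 2 * k / 3 ≤ q) : Branching (LolliE n lo k) q := by
  have hb₁ := (branching_path 2 (n - 3)).or (branching_path lo (k - 1)) (by grind [PathE])
  have hb₂ := (branching_path 1 (n - 1)).or (branching_path lo k) (by grind [PathE])
  refine .branch 0 (if k = 0 then {1, n - 1} else {1, n - 1, lo + k - 1}) ?_ ?_ ?_ ?_ ?_ ?_ hb₁ hb₂
  all_goals clear hb₁ hb₂
  all_goals grind (splits := 20) [LolliE, CycleE, PathE]

theorem branching_vertexJoin (hn : 3 ≤ n) (hm : 3 ≤ m) :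
    Branching (VertexJoinE n m) (vertexJoinRank n m) := by
  have hb₁ := (branching_path 2 (n - 3)).or (branching_path (n + 1) (m - 3)) (by grind [PathE])
  have hb₂ := (branching_path 1 (n - 1)).or (branching_path n (m - 1)) (by grind [PathE])
  have hcard := Finset.card_le_four (a := 1) (b := n - 1) (c := n) (d := n + m - 2)
  refine .branch 0 {1, n - 1, n, n + m - 2} ?_ ?_ ?_ ?_ ?_ ?_ hb₁ hb₂
  · clear hb₁ hb₂ hcard; grind (splits := 20) [VertexJoinE, CycleE, PathE]
  · grind
  · clear hb₁ hb₂ hcard; grind (splits := 20) [VertexJoinE, CycleE, PathE]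
  · clear hb₁ hb₂ hcard; grind (splits := 20) [VertexJoinE, CycleE, PathE]
  · have hn3 : 2 * n / 3 = 2 + 2 * (n - 3) / 3 := by omega
    have hm3 : 2 * m / 3 = 2 + 2 * (m - 3) / 3 := by omega
    unfold vertexJoinRank; omega
  · unfold vertexJoinRank; omega

theorem branching_pathJoin_zero (hn : 3 ≤ n) (hm : 3 ≤ m) :
    Branching (PathJoinE n m 0) (pathJoinRank n m 0) := by
  have hb₁ := (branching_path (n + 2) (m - 3)).or (branching_path 1 (n - 1)) (by grind [PathE])
  have hb₂ := (branching_path (n + 1) (m - 1)).or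
    (branching_lolli (k := 0) hn (Nat.le_add_right n m) (le_max_left _ _) (le_max_right _ _))
    (by grind [LolliE, CycleE, PathE])
  have hcard := Finset.card_le_three (a := n + 1) (b := n + m - 1) (c := 0)
  refine .branch n {n + 1, n + m - 1, 0} ?_ ?_ ?_ ?_ ?_ ?_ hb₁ hb₂
  · clear hb₁ hb₂ hcard; grind (splits := 20) [PathJoinE, LolliE, CycleE, PathE]
  · grind
  · clear hb₁ hb₂ hcard; grind (splits := 20) [PathJoinE, LolliE, CycleE, PathE]
  · clear hb₁ hb₂ hcard; grind (splits := 20) [PathJoinE, LolliE, CycleE, PathE]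
  · simp only [pathJoinRank]; grind
  · simp only [pathJoinRank]; grind

theorem branching_pathJoin_of_pos (hn : 3 ≤ n) (hm : 3 ≤ m) (hk : 0 < k) :
    Branching (PathJoinE n m k) (pathJoinRank n m k) := by
  have hb₁ := (branching_path (n + 2) (m - 3)).or
    (branching_lolli (lo := n + m + 1) (k := k - 1) hn (by omega) (le_max_left _ _)
      (le_max_right _ _)) (by grind [LolliE, CycleE, PathE])
  have hb₂ := (branching_path (n + 1) (m - 1)).or
    (branching_lolli (k := k) hn (Nat.le_add_right n m) (le_max_left _ _) (le_max_right _ _))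
    (by grind [LolliE, CycleE, PathE])
  have hcard := Finset.card_le_three (a := n + 1) (b := n + m - 1) (c := n + m)
  refine .branch n {n + 1, n + m - 1, n + m} ?_ ?_ ?_ ?_ ?_ ?_ hb₁ hb₂
  · clear hb₁ hb₂ hcard; grind (splits := 20) [PathJoinE, LolliE, CycleE, PathE]
  · grind
  · clear hb₁ hb₂ hcard; grind (splits := 20) [PathJoinE, LolliE, CycleE, PathE]
  · clear hb₁ hb₂ hcard; grind (splits := 20) [PathJoinE, LolliE, CycleE, PathE]
  · unfold pathJoinRank; split_ifs <;> omega
  · unfold pathJoinRank; split_ifs <;> omega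

theorem branching_pathJoin (hn : 3 ≤ n) (hm : 3 ≤ m) :
    Branching (PathJoinE n m k) (pathJoinRank n m k) := by
  rcases k.eq_zero_or_pos with rfl | hk
  · exact branching_pathJoin_zero hn hm
  · exact branching_pathJoin_of_pos hn hm hk

end BicyclicBranching

section EdgeCovers

variable {V : Type*}

/-- Incidence between vertices and edges, an edge being encoded as an ordered pair so that edges
are linearly ordered. -/
def EdgeIncident (k : V ×ₗ V) (v : V) : Prop := v = (ofLex k).1 ∨ v = (ofLex k).2

/-- The edges of `E` as ordered pairs. -/
def edgePairs (E : V → V → Prop) : Set (V ×ₗ V) := {k | E (ofLex k).1 (ofLex k).2}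

theorem forall_mem_edgePairs {E : V → V → Prop} {P : V ×ₗ V → Prop} :
    (∀ k ∈ edgePairs E, P k) ↔ ∀ u v, E u v → P (toLex (u, v)) :=
  ⟨fun h u v => h (toLex (u, v)), fun h k => h (ofLex k).1 (ofLex k).2⟩

theorem edgePairs_ext_iff {E : V → V → Prop} {A : Set (V ×ₗ V)} :
    A = edgePairs E ↔ ∀ u v, toLex (u, v) ∈ A ↔ E u v :=
  Set.ext_iff.trans ⟨fun h u v => h (toLex (u, v)), fun h k => h (ofLex k).1 (ofLex k).2⟩

variable [LinearOrder V]

/-- The complex of cochains on the sets of edges of `E` covering `W` has nonzero cohomology in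
degree `q`. -/
def HasEdgeCoverCohomology (K : Type*) [AddCommGroup K] (E : V → V → Prop) (W : Set V) (q : ℕ) :
    Prop :=
  HasCoverCohomology K EdgeIncident (edgePairs E) W q

/-- The complex of cochains on the sets of edges of `E` covering `W` is exact. -/
def IsEdgeCoverExact (K : Type*) [AddCommGroup K] (E : V → V → Prop) (W : Set V) : Prop :=
  IsCoverExact K EdgeIncident (edgePairs E) W

variable {K : Type*} [AddCommGroup K] {E E' : V → V → Prop} {W W' : Set V} {q : ℕ} {w x y : V}

theorem hasEdgeCoverCohomology_empty (K : Type*) [AddCommGroup K] [Nontrivial K] :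
    HasEdgeCoverCohomology K (fun _ _ : V => False) ∅ 0 :=
  hasCoverCohomology_empty K EdgeIncident

theorem HasEdgeCoverCohomology.congr {q' : ℕ} (h : HasEdgeCoverCohomology K E W q)
    (hE : ∀ u v, E' u v ↔ E u v) (hq : q' = q) : HasEdgeCoverCohomology K E' W q' := by
  obtain rfl : E' = E := funext₂ fun u v => propext (hE u v)
  exact hq ▸ h

theorem IsEdgeCoverExact.of_uncovered (hw : w ∈ W) (h : ∀ u v, E u v → w ≠ u ∧ w ≠ v) :
    IsEdgeCoverExact K E W :=
  IsCoverExact.of_uncovered hw <| forall_mem_edgePairs.2 fun u v he hi =>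
    hi.elim (h u v he).1 (h u v he).2

section Pendant

variable (he : E x y) (hx : x ∈ W) (honly : ∀ u v, E u v → x = u ∨ x = v → u = x ∧ v = y)
  (hE : ∀ u v, E' u v ↔ E u v ∧ ¬(u = x ∧ v = y)) (hW : ∀ v, v ∈ W' ↔ v ∈ W ∧ v ≠ x ∧ v ≠ y)

omit [LinearOrder V] in
include hE in
theorem edgePairs_sdiff_singleton : edgePairs E \ {toLex (x, y)} = edgePairs E' := by
  rw [edgePairs_ext_iff]
  exact fun u v => (and_congr Iff.rfl (not_congr (by simp))).trans (hE u v).symm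

omit [LinearOrder V] in
include hW in
theorem setOf_not_edgeIncident : {v ∈ W | ¬EdgeIncident (toLex (x, y)) v} = W' := by
  ext v
  simp only [EdgeIncident, ofLex_toLex, Set.mem_ofPred_eq, not_or, hW, ne_eq]

include he hx honly hE hW

theorem HasEdgeCoverCohomology.of_pendant (h : HasEdgeCoverCohomology K E' W' q) :
    HasEdgeCoverCohomology K E W (q + 1) := by
  refine HasCoverCohomology.of_pendant (k := toLex (x, y)) he hx
    (forall_mem_edgePairs.2 fun u v h hi => congrArg toLex (Prod.ext_iff.2 (honly u v h hi))) ?_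
  rwa [edgePairs_sdiff_singleton hE, setOf_not_edgeIncident hW]

theorem IsEdgeCoverExact.of_pendant (h : IsEdgeCoverExact K E' W') :
    IsEdgeCoverExact K E W := by
  refine IsCoverExact.of_pendant (k := toLex (x, y)) he hx
    (forall_mem_edgePairs.2 fun u v h hi => congrArg toLex (Prod.ext_iff.2 (honly u v h hi))) ?_
  rwa [edgePairs_sdiff_singleton hE, setOf_not_edgeIncident hW]

end Pendant

section Leaf

variable (he : E w x ∨ E x w) (hw : w ∈ W) (hx : x ∉ W) (hE : ∀ u v, E' u v ↔ E u v ∧ u ≠ w ∧ v ≠ w)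
  (hW : ∀ v, v ∈ W' ↔ v ∈ W ∧ v ≠ w)

omit [LinearOrder V] in
include hE in
theorem edgePairs_delete_vertex : {k ∈ edgePairs E | ¬EdgeIncident k w} = edgePairs E' := by
  rw [edgePairs_ext_iff]
  simp only [edgePairs, EdgeIncident, Set.mem_ofPred_eq, ofLex_toLex, hE]
  grind

omit [LinearOrder V] in
include he hx in
theorem exists_leaf_edge :
    ∃ k ∈ edgePairs E, ∀ v ∈ W, EdgeIncident k v ↔ v = w := by
  obtain he | he := he
  · exact ⟨toLex (w, x), he, fun v hv => or_iff_left (ne_of_mem_of_not_mem hv hx)⟩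
  · exact ⟨toLex (x, w), he, fun v hv => or_iff_right (ne_of_mem_of_not_mem hv hx)⟩

include he hw hx hE hW

theorem HasEdgeCoverCohomology.of_leaf (h : HasEdgeCoverCohomology K E' W' q) :
    HasEdgeCoverCohomology K E W (q + 1) := by
  obtain ⟨k, hk, hkW⟩ := exists_leaf_edge he hx
  refine HasCoverCohomology.of_leaf hk hw hkW ?_
  rwa [edgePairs_delete_vertex hE, ← show W' = W \ {w} from Set.ext hW]

theorem IsEdgeCoverExact.of_leaf (h : IsEdgeCoverExact K E' W') : IsEdgeCoverExact K E W := by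
  obtain ⟨k, hk, hkW⟩ := exists_leaf_edge he hx
  refine IsCoverExact.of_leaf hk hw hkW ?_
  rwa [edgePairs_delete_vertex hE, ← show W' = W \ {w} from Set.ext hW]

end Leaf

theorem HasEdgeCoverCohomology.insert_vertex (w : V) (hex : IsEdgeCoverExact K E W)
    (hE : ∀ u v, E' u v ↔ E u v ∧ u ≠ w ∧ v ≠ w) (h : HasEdgeCoverCohomology K E' W q) :
    HasEdgeCoverCohomology K E (insert w W) (q + 1) :=
  HasCoverCohomology.insert_vertex w hex (by rwa [edgePairs_delete_vertex hE])

theorem HasEdgeCoverCohomology.insert_leaf (hw : w ∉ W) (hx : x ∉ W) (hxw : x ≠ w)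
    (he : E w x ∨ E x w) (hE : ∀ u v, E' u v ↔ E u v ∧ u ≠ w ∧ v ≠ w)
    (h : HasEdgeCoverCohomology K E' W q) : HasEdgeCoverCohomology K E (insert w W) (q + 1) :=
  .of_leaf he (Set.mem_insert w W) (by simp [hxw, hx]) hE (by grind) h

end EdgeCovers

section PathsAndEars

/-- The vertices to be covered on the path `lo, …, lo + j - 1`. -/
def pathCover (lo j : ℕ) : Set ℕ := {v | lo ≤ v ∧ v < lo + j ∧ (j % 3 = 1 → v + 1 ≠ lo + j)}

/-- The cycle through `x` and the consecutive vertices `lo, …, lo + j - 1`. -/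
def EarE (x lo j u v : ℕ) : Prop :=
  PathE lo j u v ∨ u = x ∧ v = lo ∨ u = lo + j - 1 ∧ v = x

/-- The vertices to be covered on a cycle through the consecutive vertices `lo, …, lo + j - 1` and
a further vertex that is not to be covered. -/
def earCover (lo j : ℕ) : Set ℕ := insert lo (insert (lo + j - 1) (pathCover (lo + 1) (j - 2)))

/-- The path `lo, …, lo + k - 1` whose last vertex is joined to `x`. -/
def TailE (x lo k u v : ℕ) : Prop := PathE lo k u v ∨ 0 < k ∧ u = lo + k - 1 ∧ v = x

/-- The vertices to be covered on a path `lo, …, lo + k - 1` whose last vertex is joined to a vertex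
that is not to be covered. -/
def tailCover (lo k : ℕ) : Set ℕ := {v | 0 < k ∧ v = lo + k - 1 ∨ v ∈ pathCover lo (k - 1)}

theorem earCover_subset_Ico {lo j : ℕ} (hj : 0 < j) : earCover lo j ⊆ Set.Ico lo (lo + j) := by
  intro v
  grind [earCover, pathCover]

theorem tailCover_subset_Ico (lo k : ℕ) : tailCover lo k ⊆ Set.Ico lo (lo + k) := by
  intro v
  grind [tailCover, pathCover]

variable {K : Type*} [AddCommGroup K] {E : ℕ → ℕ → Prop} {W : Set ℕ} {q : ℕ}

theorem HasEdgeCoverCohomology.path (lo j : ℕ) (h : HasEdgeCoverCohomology K E W q)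
    (hE : ∀ u v, E u v → (u < lo ∨ lo + j ≤ u) ∧ (v < lo ∨ lo + j ≤ v))
    (hW : ∀ v ∈ W, v < lo ∨ lo + j ≤ v) :
    HasEdgeCoverCohomology K (fun u v => PathE lo j u v ∨ E u v) (pathCover lo j ∪ W)
      (q + 2 * j / 3) := by
  induction j using Nat.strong_induction_on generalizing lo with
  | _ j ih =>
  obtain hj | rfl | hj : j ≤ 1 ∨ j = 2 ∨ 3 ≤ j := by omega
  · convert h using 1
    · ext; grind [PathE]
    · ext; grind [pathCover]
    · omega
  · refine .of_pendant (x := lo) (y := lo + 1) ?_ ?_ ?_ ?_ ?_ h <;> grind [PathE, pathCover]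
  · have ih := ih (j - 3) (by omega) (lo + 3) (by grind) (by grind)
    rw [show q + 2 * j / 3 = q + 2 * (j - 3) / 3 + 1 + 1 by omega]
    refine .of_pendant (x := lo) (y := lo + 1) ?_ ?_ ?_ (fun _ _ => Iff.rfl)
      (W' := (pathCover lo j ∪ W) \ {lo, lo + 1}) ?_
      (.of_leaf (w := lo + 2) (x := lo + 1) ?_ ?_ ?_ ?_ ?_ ih) <;>
    grind (splits := 20) [PathE, pathCover]

theorem IsEdgeCoverExact.path (lo j : ℕ) (hj : j % 3 = 1)
    (hE : ∀ u v, lo ≤ u ∧ u < lo + j ∨ lo ≤ v ∧ v < lo + j → (E u v ↔ PathE lo j u v))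
    (hW : ∀ v, lo ≤ v → v < lo + j → v ∈ W) : IsEdgeCoverExact K E W := by
  induction j using Nat.strong_induction_on generalizing lo E W with
  | _ j ih =>
  obtain rfl | hj : j = 1 ∨ 4 ≤ j := by omega
  · exact .of_uncovered (w := lo) (by grind) (by grind [PathE])
  · refine .of_pendant (x := lo) (y := lo + 1) ?_ ?_ ?_ (fun _ _ => Iff.rfl)
      (W' := W \ {lo, lo + 1}) ?_
      (.of_leaf (w := lo + 2) (x := lo + 1) ?_ ?_ ?_ (fun _ _ => Iff.rfl)
      (W' := W \ {lo, lo + 1, lo + 2}) ?_ (ih (j - 3) (by omega) (lo + 3) (by omega) ?_ ?_)) <;>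
    clear ih <;> grind (splits := 20) [PathE]

theorem IsEdgeCoverExact.ear (x lo j : ℕ) (hj : j % 3 = 0) (h0 : 0 < j) (hxW : x ∉ W)
    (hE : ∀ u v, lo ≤ u ∧ u < lo + j ∨ lo ≤ v ∧ v < lo + j → (E u v ↔ EarE x lo j u v))
    (hW : ∀ v, lo ≤ v → v < lo + j → v ∈ W) : IsEdgeCoverExact K E W := by
  refine .of_leaf (w := lo) (x := x) ?_ ?_ hxW (fun _ _ => Iff.rfl) (W' := W \ {lo}) ?_
    (.of_leaf (w := lo + j - 1) (x := x) ?_ ?_ ?_ (fun _ _ => Iff.rfl)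
      (W' := W \ {lo, lo + j - 1}) ?_ (.path (lo + 1) (j - 2) ?_ ?_ ?_)) <;>
  grind (splits := 20) [PathE, EarE]

theorem HasEdgeCoverCohomology.tail (x lo k : ℕ) (hx : x < lo ∨ lo + k ≤ x) (hxW : x ∉ W)
    (hE : ∀ u v, E u v → (u < lo ∨ lo + k ≤ u) ∧ (v < lo ∨ lo + k ≤ v))
    (hW : ∀ v ∈ W, v < lo ∨ lo + k ≤ v) (h : HasEdgeCoverCohomology K E W q) :
    HasEdgeCoverCohomology K (fun u v => TailE x lo k u v ∨ E u v) (tailCover lo k ∪ W)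
      (q + if k = 0 then 0 else 1 + 2 * (k - 1) / 3) := by
  obtain rfl | hk := Nat.eq_zero_or_pos k
  · convert h using 1
    · ext; grind [TailE, PathE]
    · ext; grind [tailCover, pathCover]
    · simp
  · have hp := h.path lo (k - 1) (by grind) (by grind)
    rw [if_neg hk.ne', add_comm 1, ← add_assoc]
    refine .of_leaf (w := lo + k - 1) (x := x) ?_ ?_ ?_ ?_ ?_ hp <;>
    grind (splits := 20) [PathE, TailE, tailCover, pathCover]

theorem HasEdgeCoverCohomology.ear (x lo j : ℕ) (hj : 2 ≤ j) (hx : x < lo ∨ lo + j ≤ x)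
    (hxW : x ∉ W) (hE : ∀ u v, E u v → (u < lo ∨ lo + j ≤ u) ∧ (v < lo ∨ lo + j ≤ v))
    (hW : ∀ v ∈ W, v < lo ∨ lo + j ≤ v) (h : HasEdgeCoverCohomology K E W q) :
    HasEdgeCoverCohomology K (fun u v => EarE x lo j u v ∨ E u v) (earCover lo j ∪ W)
      (q + 2 * (j + 1) / 3) := by
  have hp := h.path (lo + 1) (j - 2) (by grind) (by grind)
  rw [show q + 2 * (j + 1) / 3 = q + 2 * (j - 2) / 3 + 1 + 1 by omega]
  refine .of_leaf (w := lo) (x := x) ?_ ?_ ?_ (fun _ _ => Iff.rfl)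
    (W' := (earCover lo j ∪ W) \ {lo}) ?_
    (.of_leaf (w := lo + j - 1) (x := x) ?_ ?_ ?_ ?_ ?_ hp) <;>
  grind (splits := 20) [PathE, EarE, earCover, pathCover]

end PathsAndEars

section BicyclicCovers

variable (K : Type*) [AddCommGroup K] [Nontrivial K] {n m k : ℕ}

theorem exists_hasEdgeCoverCohomology_vertexJoin (hn : 3 ≤ n) (hm : 3 ≤ m) :
    ∃ W : Set ℕ, (∀ v ∈ W, v < n + m - 1) ∧
      HasEdgeCoverCohomology K (VertexJoinE n m) W (vertexJoinRank n m) := by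
  by_cases h : n % 3 = 1 ∧ m % 3 = 1
  · have hp := ((hasEdgeCoverCohomology_empty K).path n (m - 1) (by grind) (by grind)).path 1
      (n - 1) (by grind [PathE]) (by grind [pathCover])
    have hex : IsEdgeCoverExact K (VertexJoinE n m)
        (pathCover 1 (n - 1) ∪ (pathCover n (m - 1) ∪ ∅)) := by
      apply IsEdgeCoverExact.ear 0 1 (n - 1) <;>
      grind (splits := 20) [VertexJoinE, CycleE, EarE, PathE, pathCover]
    rw [show vertexJoinRank n m = 0 + 2 * (m - 1) / 3 + 2 * (n - 1) / 3 + 1 by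
      unfold vertexJoinRank; omega]
    refine ⟨_, ?_, hp.insert_vertex 0 hex ?_⟩ <;>
    grind (splits := 20) [VertexJoinE, CycleE, PathE, pathCover]
  · have hp := ((hasEdgeCoverCohomology_empty K).ear 0 n (m - 1) (by omega) (by omega) (by grind)
      (by grind) (by grind)).ear 0 1 (n - 1) (by omega) (by omega) (by grind [earCover, pathCover])
      (by grind [EarE, PathE]) (by grind [earCover, pathCover])
    refine ⟨_, ?_, hp.congr ?_ (by unfold vertexJoinRank; omega)⟩ <;>
    grind (splits := 20) [VertexJoinE, CycleE, EarE, PathE, earCover, pathCover]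

theorem exists_hasEdgeCoverCohomology_lolli (lo k : ℕ) (hn : 3 ≤ n) (hlo : n ≤ lo) :
    ∃ W : Set ℕ, (∀ v ∈ W, v < n ∨ lo ≤ v ∧ v < lo + k) ∧
      HasEdgeCoverCohomology K (LolliE n lo k) W
        (if n % 3 = 1 then 1 + 2 * (n - 1) / 3 + 2 * k / 3
        else 2 * n / 3 + if k = 0 then 0 else 1 + 2 * (k - 1) / 3) := by
  split_ifs with h hk
  · have hp := ((hasEdgeCoverCohomology_empty K).path lo k (by grind) (by grind)).path 1 (n - 1)
      (by grind [PathE]) (by grind [pathCover])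
    have hex : IsEdgeCoverExact K (LolliE n lo k) (pathCover 1 (n - 1) ∪ (pathCover lo k ∪ ∅)) := by
      apply IsEdgeCoverExact.ear 0 1 (n - 1) <;>
      grind (splits := 20) [LolliE, CycleE, EarE, PathE, pathCover]
    rw [show 1 + 2 * (n - 1) / 3 + 2 * k / 3 = 0 + 2 * k / 3 + 2 * (n - 1) / 3 + 1 by omega]
    refine ⟨_, ?_, hp.insert_vertex 0 hex ?_⟩ <;>
    grind (splits := 20) [LolliE, CycleE, PathE, pathCover]
  all_goals
    have hp := ((hasEdgeCoverCohomology_empty K).tail 0 lo k (by omega) (by grind) (by grind)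
      (by grind)).ear 0 1 (n - 1) (by omega) (by omega) (by grind [tailCover, pathCover])
      (by grind [TailE, PathE]) (by grind [tailCover, pathCover])
    refine ⟨_, ?_, hp.congr ?_ (by grind)⟩ <;>
    grind (splits := 20) [LolliE, CycleE, TailE, EarE, PathE, earCover, tailCover, pathCover]

theorem exists_hasEdgeCoverCohomology_pathJoin_of_right (k : ℕ) (hn : 3 ≤ n) (hm : 3 ≤ m)
    (h : m % 3 = 1) :
    ∃ W : Set ℕ, (∀ v ∈ W, v < n + m + k) ∧
      HasEdgeCoverCohomology K (PathJoinE n m k) W (pathJoinRank n m k) := by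
  obtain ⟨W, hW, hl⟩ := exists_hasEdgeCoverCohomology_lolli K (n + m) k hn (by omega)
  have hp := hl.path (n + 1) (m - 1) (by grind [LolliE, CycleE, PathE]) (by grind)
  have hex : IsEdgeCoverExact K (PathJoinE n m k) (pathCover (n + 1) (m - 1) ∪ W) := by
    apply IsEdgeCoverExact.ear n (n + 1) (m - 1) <;>
    grind (splits := 20) [PathJoinE, LolliE, CycleE, EarE, PathE, pathCover]
  refine ⟨_, ?_, (hp.insert_vertex (E := PathJoinE n m k) n hex ?_).congr (fun _ _ => Iff.rfl) ?_⟩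
  · grind [pathCover]
  · grind (splits := 20) [PathJoinE, LolliE, CycleE, PathE]
  · unfold pathJoinRank
    split_ifs <;> omega

theorem exists_hasEdgeCoverCohomology_cycle_tail (k : ℕ) (hm : 3 ≤ m) :
    ∃ W : Set ℕ, (∀ v ∈ W, n < v ∧ v < n + m + k) ∧
      HasEdgeCoverCohomology K
        (fun u v => CycleE n m u v ∨ PathE (n + m) k u v ∨ 0 < k ∧ u = n ∧ v = n + m) W
        (2 * m / 3 + if k = 0 then 0 else 1 + 2 * (k - 1) / 3) := by
  obtain ⟨W, hW, ht⟩ : ∃ W : Set ℕ, (∀ v ∈ W, n + m ≤ v ∧ v < n + m + k) ∧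
      HasEdgeCoverCohomology K (fun u v => PathE (n + m) k u v ∨ 0 < k ∧ u = n ∧ v = n + m) W
        (if k = 0 then 0 else 1 + 2 * (k - 1) / 3) := by
    obtain rfl | hk := Nat.eq_zero_or_pos k
    · exact ⟨∅, by simp, (hasEdgeCoverCohomology_empty K).congr (by grind [PathE]) rfl⟩
    · have hp := (hasEdgeCoverCohomology_empty K).path (n + m + 1) (k - 1) (by simp) (by simp)
      rw [if_neg hk.ne', show 1 + 2 * (k - 1) / 3 = 0 + 2 * (k - 1) / 3 + 1 by omega]
      refine ⟨_, ?_, hp.insert_leaf (w := n + m) (x := n) ?_ ?_ ?_ ?_ ?_⟩ <;>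
      grind (splits := 20) [PathE, pathCover]
  have hp := ht.ear n (n + 1) (m - 1) (by omega) (by omega) (by grind) (by grind [PathE]) (by grind)
  refine ⟨_, ?_, hp.congr ?_ (by grind)⟩ <;>
  grind (splits := 20) [CycleE, EarE, PathE, earCover, pathCover]

theorem exists_hasEdgeCoverCohomology_pathJoin_of_left (k : ℕ) (hn : 3 ≤ n) (hm : 3 ≤ m)
    (h : n % 3 = 1) (h' : m % 3 ≠ 1) :
    ∃ W : Set ℕ, (∀ v ∈ W, v < n + m + k) ∧
      HasEdgeCoverCohomology K (PathJoinE n m k) W (pathJoinRank n m k) := by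
  obtain ⟨W, hW, hc⟩ := exists_hasEdgeCoverCohomology_cycle_tail K (n := n) k hm
  have hp := hc.path 1 (n - 1) (by grind [CycleE, PathE]) (by grind)
  have hex : IsEdgeCoverExact K (PathJoinE n m k) (pathCover 1 (n - 1) ∪ W) := by
    apply IsEdgeCoverExact.ear 0 1 (n - 1) <;>
    grind (splits := 20) [PathJoinE, LolliE, CycleE, EarE, PathE, pathCover]
  refine ⟨_, ?_, (hp.insert_vertex (E := PathJoinE n m k) 0 hex ?_).congr (fun _ _ => Iff.rfl) ?_⟩
  · grind [pathCover]
  · grind (splits := 20) [PathJoinE, LolliE, CycleE, PathE]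
  · unfold pathJoinRank
    split_ifs <;> omega

theorem exists_hasEdgeCoverCohomology_pathJoin_zero (hn : 3 ≤ n) (hm : 3 ≤ m)
    (h : n % 3 ≠ 1) (h' : m % 3 ≠ 1) :
    ∃ W : Set ℕ, (∀ v ∈ W, v < n + m) ∧
      HasEdgeCoverCohomology K (PathJoinE n m 0) W (pathJoinRank n m 0) := by
  have hp := (hasEdgeCoverCohomology_empty K).path (n + 1) (m - 1) (by simp) (by simp)
  have hl := hp.insert_leaf (E := fun u v => CycleE n m u v ∨ u = n ∧ v = 0) (w := n) (x := 0)
    (by grind [pathCover]) (by grind [pathCover]) (by omega) (by simp) (by grind [CycleE, PathE])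
  have he := hl.ear 0 1 (n - 1) (by omega) (by omega) (by grind [pathCover])
    (by grind [CycleE, PathE]) (by grind [pathCover])
  refine ⟨_, ?_, he.congr ?_ (by unfold pathJoinRank; split_ifs <;> omega)⟩
  · grind (splits := 20) [earCover, pathCover]
  · grind (splits := 20) [PathJoinE, LolliE, CycleE, EarE, PathE]

theorem exists_hasEdgeCoverCohomology_pathJoin_of_pos (hn : 3 ≤ n) (hm : 3 ≤ m)
    (hk : 0 < k) (h : n % 3 ≠ 1) (h' : m % 3 ≠ 1) :
    ∃ W : Set ℕ, (∀ v ∈ W, v < n + m + k) ∧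
      HasEdgeCoverCohomology K (PathJoinE n m k) W (pathJoinRank n m k) := by
  have htail := tailCover_subset_Ico (n + m + 1) (k - 1)
  have hear := earCover_subset_Ico (lo := n + 1) (j := m - 1) (by omega)
  have hear' := earCover_subset_Ico (lo := 1) (j := n - 1) (by omega)
  have ht := (hasEdgeCoverCohomology_empty K).tail 0 (n + m + 1) (k - 1) (by omega) (by simp)
    (by simp) (by simp)
  have hl := ht.insert_leaf (E := fun u v => TailE 0 (n + m) k u v ∨ u = n ∧ v = n + m)
    (w := n + m) (x := n) (by grind) (by grind)
    (by omega) (by simp) (by grind (splits := 20) [TailE, PathE])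
  have he := hl.ear n (n + 1) (m - 1) (by omega) (by omega) (by grind)
    (by grind [TailE, PathE]) (by grind)
  have he' := he.ear 0 1 (n - 1) (by omega) (by omega) (by grind)
    (by grind [EarE, TailE, PathE]) (by grind)
  refine ⟨_, ?_, he'.congr ?_ (by unfold pathJoinRank; split_ifs <;> omega)⟩
  · grind
  · grind (splits := 20) [PathJoinE, LolliE, TailE, CycleE, EarE, PathE]

theorem exists_hasEdgeCoverCohomology_pathJoin (k : ℕ) (hn : 3 ≤ n) (hm : 3 ≤ m) :
    ∃ W : Set ℕ, (∀ v ∈ W, v < n + m + k) ∧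
      HasEdgeCoverCohomology K (PathJoinE n m k) W (pathJoinRank n m k) := by
  by_cases h' : m % 3 = 1
  · exact exists_hasEdgeCoverCohomology_pathJoin_of_right K k hn hm h'
  by_cases h : n % 3 = 1
  · exact exists_hasEdgeCoverCohomology_pathJoin_of_left K k hn hm h h'
  obtain rfl | hk := Nat.eq_zero_or_pos k
  · exact exists_hasEdgeCoverCohomology_pathJoin_zero K hn hm h h'
  · exact exists_hasEdgeCoverCohomology_pathJoin_of_pos K hn hm hk h h'

end BicyclicCovers

section EdgeIdeal

theorem HasCoverCohomology.subtype {ι V K : Type*} [LinearOrder ι] [AddCommGroup K]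
    {inc : ι → V → Prop} {A : Set ι} {W : Set V} {q : ℕ} (h : HasCoverCohomology K inc A W q) :
    HasCoverCohomology K (fun k : A => inc k) Set.univ W q := by
  have hmap : coverings (fun k : A => inc k) Set.univ W =
      {T | T.map (OrderEmbedding.subtype (· ∈ A)).toEmbedding ∈ coverings inc A W} := by
    ext T
    simp [coverings]
  rw [HasCoverCohomology, hmap]
  refine (hasCohomology_preimage_map_iff (OrderEmbedding.subtype (· ∈ A)) fun S hS => ?_).2 h
  classical exact ⟨S.subtype (· ∈ A), Finset.subtype_map_of_mem hS.1⟩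

variable {σ V : Type}

/-- The edge ideal of the graph on `σ` in which `s` and `t` are adjacent when their labels `φ s`
and `φ t` are joined by an edge of `E`. -/
noncomputable def edgeIdeal (K : Type) [Field K] (φ : σ → V) (E : V → V → Prop) :
    Ideal (MvPolynomial σ K) :=
  Ideal.span {p | ∃ s t, E (φ s) (φ t) ∧ p = X s * X t}

open Classical in
/-- The endpoints in `σ` of an edge between labels. -/
noncomputable def endpoints [Fintype σ] (φ : σ → V) {E : V → V → Prop} (k : edgePairs E) :
    Finset σ :=
  Finset.univ.filter fun s => EdgeIncident k.1 (φ s)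

variable {K : Type} [Field K] {φ : σ → V} {E : V → V → Prop}

section Endpoints

variable [Fintype σ]

theorem mem_endpoints {k : edgePairs E} {s : σ} : s ∈ endpoints φ k ↔ EdgeIncident k.1 (φ s) := by
  simp [endpoints]

theorem endpoints_toLex [DecidableEq σ] (hφ : Function.Injective φ) {s t : σ}
    (h : toLex (φ s, φ t) ∈ edgePairs E) : endpoints φ ⟨_, h⟩ = {s, t} := by
  ext x
  simp [mem_endpoints, EdgeIncident, hφ.eq_iff]

variable (hφ : Function.Injective φ)
  (hE : ∀ u v, E u v → u ∈ Set.range φ ∧ v ∈ Set.range φ ∧ u ≠ v)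
include hφ hE

theorem edgeIdeal_eq_hyperedgeIdeal :
    edgeIdeal K φ E = hyperedgeIdeal K (endpoints φ (E := E)) := by
  classical
  have hmon {s t : σ} (h : toLex (φ s, φ t) ∈ edgePairs E) :
      squarefreeMonomial K (endpoints φ ⟨_, h⟩) = X s * X t := by
    rw [endpoints_toLex hφ, squarefreeMonomial, Finset.prod_pair]
    exact fun hst => (hE _ _ h).2.2 (congrArg φ hst)
  refine congrArg Ideal.span (Set.Subset.antisymm ?_ ?_)
  · rintro _ ⟨s, t, h, rfl⟩
    exact ⟨⟨toLex (φ s, φ t), h⟩, hmon h⟩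
  · rintro _ ⟨⟨k, hk⟩, rfl⟩
    obtain ⟨⟨s, hs⟩, ⟨t, ht⟩, -⟩ := hE _ _ hk
    obtain rfl : k = toLex (φ s, φ t) := ofLex.injective (Prod.ext hs.symm ht.symm)
    exact ⟨s, t, hk, hmon hk⟩

theorem hyperedgeIdeal_endpoints_eq_labelledIdeal :
    hyperedgeIdeal K (endpoints φ (E := E)) = labelledIdeal K φ ∅ E := by
  classical
  ext r
  rw [mem_hyperedgeIdeal_iff]
  refine forall₂_congr fun d _ => ?_
  rw [mem_labelledExponents]
  constructor
  · rintro ⟨⟨k, hk⟩, h⟩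
    obtain ⟨⟨s, hs⟩, ⟨t, ht⟩, -⟩ := hE _ _ hk
    obtain rfl : k = toLex (φ s, φ t) := ofLex.injective (Prod.ext hs.symm ht.symm)
    rw [endpoints_toLex hφ, Finset.insert_subset_iff, Finset.singleton_subset_iff] at h
    exact Or.inr ⟨s, t, hk, by simpa using h⟩
  · rintro (⟨s, hs, -⟩ | ⟨s, t, hst, h⟩)
    · exact absurd hs (Finset.notMem_empty _)
    · replace hst : toLex (φ s, φ t) ∈ edgePairs E := hst
      refine ⟨⟨_, hst⟩, ?_⟩
      rw [endpoints_toLex hφ, Finset.insert_subset_iff, Finset.singleton_subset_iff]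
      simpa using h

omit [Fintype σ] hφ in
theorem finite_edgePairs [Finite σ] : (edgePairs E).Finite :=
  (((Set.finite_range φ).prod (Set.finite_range φ)).preimage ofLex.injective.injOn).subset
    fun _ hk => ⟨(hE _ _ hk).1, (hE _ _ hk).2.1⟩

end Endpoints

variable [LinearOrder V] {W : Set V} {q : ℕ}

open Classical in
theorem HasEdgeCoverCohomology.endpoints {L : Type*} [AddCommGroup L] [Fintype σ]
    (hW : W ⊆ Set.range φ) (h : HasEdgeCoverCohomology L E W q) :
    HasCoverCohomology L (Incident (endpoints φ (E := E))) Set.univ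
      (Finset.univ.filter (φ · ∈ W) : Finset σ) q := by
  suffices coverings (Incident (_root_.endpoints φ (E := E))) Set.univ
      (Finset.univ.filter (φ · ∈ W) : Finset σ) =
      coverings (fun k : edgePairs E => EdgeIncident k.1) Set.univ W by
    rw [HasCoverCohomology, this]
    exact h.subtype
  ext S
  refine and_congr_right fun _ => ⟨fun h v hv => ?_, fun h s hs => ?_⟩
  · obtain ⟨s, rfl⟩ := hW hv
    exact (h s (by simpa using hv)).imp fun k hk => ⟨hk.1, mem_endpoints.1 hk.2⟩
  · exact (h (φ s) (by simpa using hs)).imp fun k hk => ⟨hk.1, mem_endpoints.2 hk.2⟩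

variable [Finite σ] (hφ : Function.Injective φ)
  (hE : ∀ u v, E u v → u ∈ Set.range φ ∧ v ∈ Set.range φ ∧ u ≠ v) (hW : W ⊆ Set.range φ)
include hφ hE hW

theorem HasEdgeCoverCohomology.le_araRank_edgeIdeal (h : HasEdgeCoverCohomology K E W q) :
    q ≤ araRank (edgeIdeal K φ E) := by
  have := Fintype.ofFinite σ
  have := (finite_edgePairs hE).to_subtype
  exact edgeIdeal_eq_hyperedgeIdeal (K := K) hφ hE ▸ (h.endpoints hW).le_araRank

theorem projDim_edgeIdeal (hb : Branching E (q + 2))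
    (h : HasEdgeCoverCohomology K E W (q + 2)) :
    projDim (MvPolynomial σ K) (MvPolynomial σ K ⧸ edgeIdeal K φ E) = (q + 2 : ℕ) := by
  have := Fintype.ofFinite σ
  have := (finite_edgePairs hE).to_subtype
  rw [edgeIdeal_eq_hyperedgeIdeal hφ hE]
  refine projDim_eq _ ?_ (h.endpoints hW).not_hasProjectiveDimensionLT
  rw [hyperedgeIdeal_endpoints_eq_labelledIdeal hφ hE]
  simpa using hb.hasProjectiveDimensionLT (K := K) hφ ∅

end EdgeIdeal

section RadicalGeneration

variable {R : Type*} [CommRing R] {I J J' A A' B P : Ideal R} {s t : ℕ}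

/-- Some `s` elements of `I` generate, together with `J`, an ideal whose radical contains `A`;
the radical is expressed through the prime ideals. -/
def RadicallyGenerates (I J A : Ideal R) (s : ℕ) : Prop :=
  ∃ F : List R, F.length = s ∧ (∀ x ∈ F, x ∈ I) ∧
    ∀ P : Ideal R, P.IsPrime → J ≤ P → (∀ x ∈ F, x ∈ P) → A ≤ P

/-- The ideal generated by the edges of the walk `v a, …, v b`. -/
def walkIdeal (v : ℕ → R) (a b : ℕ) : Ideal R :=
  Ideal.span {p | ∃ i, a ≤ i ∧ i < b ∧ p = v i * v (i + 1)}

theorem walkIdeal_le_iff {v : ℕ → R} {a b : ℕ} :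
    walkIdeal v a b ≤ I ↔ ∀ i, a ≤ i → i < b → v i * v (i + 1) ∈ I :=
  Ideal.span_le.trans ⟨fun h i ha hb => h ⟨i, ha, hb, rfl⟩, by
    rintro h _ ⟨i, ha, hb, rfl⟩
    exact h i ha hb⟩

theorem mul_mem_walkIdeal (v : ℕ → R) {a b i : ℕ} (ha : a ≤ i) (hb : i < b) :
    v i * v (i + 1) ∈ walkIdeal v a b :=
  walkIdeal_le_iff.1 le_rfl i ha hb

theorem walkIdeal_mono (v : ℕ → R) {a a' b b' : ℕ} (ha : a' ≤ a) (hb : b ≤ b') :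
    walkIdeal v a b ≤ walkIdeal v a' b' :=
  walkIdeal_le_iff.2 fun _ h h' => mul_mem_walkIdeal v (ha.trans h) (h'.trans_le hb)

/-- The Schmitt–Vogel step. -/
theorem mem_and_mem_of_add_mem (hP : P.IsPrime) {e a b : R} (he : e ∈ P) (h : e ∣ a * b)
    (hab : a + b ∈ P) : a ∈ P ∧ b ∈ P := by
  rcases hP.mem_or_mem (P.mem_of_dvd h he) with ha | hb
  · exact ⟨ha, (P.add_mem_iff_right ha).1 hab⟩
  · exact ⟨(P.add_mem_iff_left hb).1 hab, hb⟩

theorem mem_of_alternating_sums_mem (hP : P.IsPrime) {a b c d e : R} (h₁ : a * b + c * d ∈ P)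
    (h₂ : b * c + d * e ∈ P) (h : a * b ∈ P ∨ d * e ∈ P) :
    a * b ∈ P ∧ b * c ∈ P ∧ c * d ∈ P ∧ d * e ∈ P := by
  rcases h with hab | hde
  · have hcd := (P.add_mem_iff_right hab).1 h₁
    obtain ⟨hbc, hde⟩ := mem_and_mem_of_add_mem hP hcd ⟨b * e, by ring⟩ h₂
    exact ⟨hab, hbc, hcd, hde⟩
  · have hbc := (P.add_mem_iff_left hde).1 h₂
    obtain ⟨hab, hcd⟩ := mem_and_mem_of_add_mem hP hbc ⟨a * d, by ring⟩ h₁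
    exact ⟨hab, hbc, hcd, hde⟩

namespace RadicallyGenerates

theorem mono (h : RadicallyGenerates I J A s) (hJ : J ≤ J')
    (hA : ∀ P, A ≤ P → J' ≤ P → A' ≤ P) : RadicallyGenerates I J' A' s := by
  obtain ⟨F, hF, hI, hP⟩ := h
  exact ⟨F, hF, hI, fun P hp hJP hFP => hA P (hP P hp (hJ.trans hJP) hFP) hJP⟩

theorem trans (h : RadicallyGenerates I J A s) (h' : RadicallyGenerates I (J ⊔ A) B t) :
    RadicallyGenerates I J (A ⊔ B) (s + t) := by
  obtain ⟨F, hF, hI, hP⟩ := h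
  obtain ⟨F', hF', hI', hP'⟩ := h'
  refine ⟨F ++ F', by simp [hF, hF'], List.forall_mem_append.2 ⟨hI, hI'⟩, fun P hp hJ hx => ?_⟩
  obtain ⟨hx, hx'⟩ := List.forall_mem_append.1 hx
  have hA := hP P hp hJ hx
  exact sup_le hA (hP' P hp (sup_le hJ hA) hx')

theorem sup (h : RadicallyGenerates I J A s) (h' : RadicallyGenerates I J B t) :
    RadicallyGenerates I J (A ⊔ B) (s + t) :=
  h.trans (h'.mono le_sup_left fun _ h _ => h)

theorem bot (I J : Ideal R) : RadicallyGenerates I J ⊥ 0 :=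
  ⟨[], rfl, by simp, fun _ _ _ _ => bot_le⟩

theorem single (J : Ideal R) {x : R} (hx : x ∈ I) : RadicallyGenerates I J (Ideal.span {x}) 1 :=
  ⟨[x], rfl, by simpa using hx, fun P _ _ h => by simpa using h⟩

theorem pair {e a b : R} (ha : a ∈ I) (hb : b ∈ I) (h : e ∣ a * b) (he : e ∈ J) :
    RadicallyGenerates I J (Ideal.span {a, b}) 1 :=
  ⟨[a + b], rfl, by simpa using I.add_mem ha hb, fun P hp hJ hab => by
    simpa [Ideal.span_le, Set.insert_subset_iff] using
      mem_and_mem_of_add_mem hp (hJ he) h (hab _ (by simp))⟩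

theorem exists_radical_eq (h : RadicallyGenerates I ⊥ I s) :
    ∃ f : Fin s → R, (Ideal.span (Set.range f)).radical = I.radical := by
  obtain ⟨F, rfl, hI, hP⟩ := h
  refine ⟨F.get, le_antisymm (Ideal.radical_mono (Ideal.span_le.2 ?_))
    (Ideal.radical_le_radical_iff.2 ?_)⟩
  · rintro _ ⟨i, rfl⟩
    exact hI _ (F.get_mem i)
  · rw [Ideal.radical_eq_sInf]
    refine le_sInf fun P hp => hP P hp.2 bot_le fun x hx => ?_
    exact hp.1 (Ideal.subset_span (Set.range_list_get F ▸ hx))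

variable {v : ℕ → R}

theorem append {a b c : ℕ} (h : RadicallyGenerates I J (walkIdeal v a b) s)
    (h' : RadicallyGenerates I J (walkIdeal v b c) t) :
    RadicallyGenerates I J (walkIdeal v a c) (s + t) := by
  refine (h.sup h').mono le_rfl fun P hP _ => walkIdeal_le_iff.2 fun i ha hc => ?_
  obtain ⟨hab, hbc⟩ := sup_le_iff.1 hP
  rcases lt_or_ge i b with hb | hb
  · exact walkIdeal_le_iff.1 hab i ha hb
  · exact walkIdeal_le_iff.1 hbc i hb hc

theorem one_edge (J : Ideal R) {a : ℕ} (h : walkIdeal v a (a + 1) ≤ I) :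
    RadicallyGenerates I J (walkIdeal v a (a + 1)) 1 := by
  refine (single J (walkIdeal_le_iff.1 h a le_rfl a.lt_succ_self)).mono le_rfl fun P hP _ => ?_
  refine walkIdeal_le_iff.2 fun i ha hb => ?_
  obtain rfl : i = a := by omega
  exact (Ideal.span_singleton_le_iff_mem P).1 hP

theorem three_edges (J : Ideal R) {a : ℕ} (h : walkIdeal v a (a + 3) ≤ I) :
    RadicallyGenerates I J (walkIdeal v a (a + 3)) 2 := by
  rw [walkIdeal_le_iff] at h
  have hmid := h (a + 1) (by omega) (by omega)
  refine ((single J hmid).trans (pair (h a (by omega) (by omega))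
    (h (a + 2) (by omega) (by omega)) ⟨v a * v (a + 3), by ring⟩
    (Ideal.mem_sup_right (Ideal.mem_span_singleton_self _)))).mono le_rfl fun P hP _ => ?_
  simp only [sup_le_iff, Ideal.span_le, Set.insert_subset_iff, Set.singleton_subset_iff] at hP
  obtain ⟨h₁, h₀, h₂⟩ := hP
  refine walkIdeal_le_iff.2 fun i ha hb => ?_
  obtain rfl | rfl | rfl : i = a ∨ i = a + 1 ∨ i = a + 2 := by omega
  exacts [h₀, h₁, h₂]

theorem walk (J : Ideal R) (a l : ℕ) (h : walkIdeal v a (a + l) ≤ I) :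
    RadicallyGenerates I J (walkIdeal v a (a + l)) (l - l / 3) := by
  induction l using Nat.strong_induction_on generalizing a with | _ l ih
  have prefix_le {j : ℕ} (hj : j ≤ l) : walkIdeal v a (a + j) ≤ I :=
    (walkIdeal_mono v le_rfl (by omega)).trans h
  rcases Nat.lt_or_ge l 3 with hl | hl
  · rcases Nat.eq_zero_or_pos l with rfl | hpos
    · exact (bot I J).mono le_rfl fun P _ _ => walkIdeal_le_iff.2 fun i ha hb => by omega
    · have := (one_edge J (prefix_le hpos)).append (ih (l - 1) (by omega) (a + 1)
        ((walkIdeal_mono v (by omega) (by omega)).trans h))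
      convert this using 2 <;> omega
  · have := (three_edges J (prefix_le hl)).append (ih (l - 3) (by omega) (a + 3)
      ((walkIdeal_mono v (by omega) (by omega)).trans h))
    convert this using 2 <;> omega

theorem alternating_walk (v : ℕ → R) (b : ℕ) (h : walkIdeal v 0 (3 * b + 1) ≤ I) :
    RadicallyGenerates I (Ideal.span {v 0 * v 1 * (v (3 * b) * v (3 * b + 1))})
      (walkIdeal v 0 (3 * b + 1)) (2 * b) := by
  let e i := v i * v (i + 1)
  have he {i : ℕ} (hi : i < 3 * b + 1) : e i ∈ I := walkIdeal_le_iff.1 h i i.zero_le hi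
  refine ⟨(List.range b).map (fun i => e (3 * i) + e (3 * i + 2)) ++
    (List.range b).map (fun i => e (3 * i + 1) + e (3 * i + 3)), by simp; omega, ?_, ?_⟩
  · simp only [List.mem_append, List.mem_map, List.mem_range]
    rintro _ (⟨i, hi, rfl⟩ | ⟨i, hi, rfl⟩) <;> exact I.add_mem (he (by omega)) (he (by omega))
  intro P hP hends hF
  simp only [List.mem_append, List.mem_map, List.mem_range] at hF
  have link {i : ℕ} (hi : i < b) : e (3 * i) ∈ P ∨ e (3 * (i + 1)) ∈ P →
      e (3 * i) ∈ P ∧ e (3 * i + 1) ∈ P ∧ e (3 * i + 2) ∈ P ∧ e (3 * (i + 1)) ∈ P :=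
    mem_of_alternating_sums_mem hP (hF _ (.inl ⟨i, hi, rfl⟩)) (hF _ (.inr ⟨i, hi, rfl⟩))
  have iff_zero (i : ℕ) (hi : i ≤ b) : e (3 * i) ∈ P ↔ e 0 ∈ P := by
    induction i with
    | zero => rfl
    | succ i ih =>
      exact ⟨fun h => (ih (by omega)).1 (link hi (.inr h)).1,
        fun h => (link hi (.inl ((ih (by omega)).2 h))).2.2.2⟩
  have zero_mem : e 0 ∈ P :=
    (hP.mem_or_mem ((Ideal.span_singleton_le_iff_mem P).1 hends)).elim id (iff_zero b le_rfl).1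
  refine walkIdeal_le_iff.2 fun i _ hi => ?_
  obtain ⟨j, rfl | rfl | rfl⟩ : ∃ j, i = 3 * j ∨ i = 3 * j + 1 ∨ i = 3 * j + 2 :=
    ⟨i / 3, by omega⟩
  · exact (iff_zero j (by omega)).2 zero_mem
  · exact (link (by omega) (.inl ((iff_zero j (by omega)).2 zero_mem))).2.1
  · exact (link (by omega) (.inl ((iff_zero j (by omega)).2 zero_mem))).2.2.1

section Cycle

variable {n : ℕ} (hn : 3 ≤ n) (hv : v n = v 0) (h : walkIdeal v 0 n ≤ I)
include hn hv h

theorem cycle_neighbours : RadicallyGenerates I (Ideal.span {v 0 * v 1})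
    (walkIdeal v 0 2 ⊔ walkIdeal v (n - 1) n) 1 := by
  rw [walkIdeal_le_iff] at h
  obtain ⟨n, rfl⟩ := Nat.exists_eq_add_of_le' (Nat.zero_lt_of_lt hn)
  refine (pair (h 1 (by omega) (by omega)) (h n (by omega) (by omega))
    ⟨v 2 * v n, by rw [hv]; ring⟩ (Ideal.mem_span_singleton_self _)).mono le_rfl fun P hP h₀ => ?_
  simp only [Ideal.span_le, Set.insert_subset_iff, Set.singleton_subset_iff] at hP h₀
  refine sup_le (walkIdeal_le_iff.2 fun i _ hi => ?_) (walkIdeal_le_iff.2 fun i hi hi' => ?_)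
  · obtain rfl | rfl : i = 0 ∨ i = 1 := by omega
    exacts [h₀, hP.1]
  · obtain rfl : i = n := by omega
    exact hP.2

theorem cycle : RadicallyGenerates I (Ideal.span {v 0 * v 1}) (walkIdeal v 0 n)
    (2 * (n - 1) / 3) := by
  obtain ⟨a, rfl | rfl | rfl⟩ : ∃ a, n = 3 * a + 3 ∨ n = 3 * a + 1 ∨ n = 3 * a + 2 :=
    ⟨(n - 1) / 3, by omega⟩
  · have := (cycle_neighbours hn hv h).sup (walk (Ideal.span {v 0 * v 1}) 2 (3 * a)
      ((walkIdeal_mono v (by omega) (by omega)).trans h))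
    convert this.mono le_rfl fun P hP _ => ?_ using 1
    · omega
    · simp only [sup_le_iff, walkIdeal_le_iff] at hP ⊢
      grind
  · convert (alternating_walk v a h).mono ?_ fun _ hP _ => hP using 1
    · omega
    · exact Ideal.span_singleton_le_span_singleton.2 (Dvd.intro _ rfl)
  · have hends : v 0 * v 1 ∣ v 1 * v 2 * (v (3 * a + 1) * v (3 * a + 2)) :=
      ⟨v 2 * v (3 * a + 1), by rw [hv]; ring⟩
    have := alternating_walk (I := I) (fun i => v (i + 1)) a
      (walkIdeal_le_iff.2 fun i _ hi => walkIdeal_le_iff.1 h (i + 1) (by omega) (by omega))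
    convert this.mono (Ideal.span_singleton_le_span_singleton.2 hends) fun P hP h₀ => ?_ using 1
    · omega
    · refine walkIdeal_le_iff.2 fun i _ hi => ?_
      rcases i with _ | i
      · exact (Ideal.span_singleton_le_iff_mem P).1 h₀
      · exact walkIdeal_le_iff.1 hP i (by omega) (by omega)

theorem cycle_with_leader (h1 : n % 3 = 1) {y : R} (hy : y ∈ I) (hvy : v 0 ∣ y) :
    RadicallyGenerates I J (walkIdeal v 0 n ⊔ Ideal.span {y}) (1 + 2 * (n - 1) / 3) := by
  obtain ⟨a, rfl⟩ : ∃ a, n = 3 * a + 4 := ⟨(n - 4) / 3, by omega⟩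
  have hleader : v (3 * a + 3) * v (3 * a + 4) ∣ v (3 * a + 2) * v (3 * a + 3) * y := by
    obtain ⟨c, rfl⟩ := hvy
    exact ⟨v (3 * a + 2) * c, by rw [hv]; ring⟩
  have mem {i : ℕ} (hi : i < 3 * a + 4) : v i * v (i + 1) ∈ I :=
    walkIdeal_le_iff.1 h i (by omega) hi
  have hthree := ((single J (mem (show 0 < 3 * a + 4 by omega))).trans
    ((cycle_neighbours hn hv h).mono le_sup_right fun _ h _ => h)).trans
    (pair (mem (show 3 * a + 2 < 3 * a + 4 by omega)) hy hleader <| Ideal.mem_sup_right <|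
      Ideal.mem_sup_right <| Ideal.mem_sup_right <| mul_mem_walkIdeal v (by omega) (by omega))
  have hwalk := walk J 2 (3 * a) ((walkIdeal_mono v (by omega) (by omega)).trans h)
  convert (hthree.sup hwalk).mono le_rfl fun P hP _ => ?_ using 1
  · omega
  · simp only [sup_le_iff, walkIdeal_le_iff, Ideal.span_le, Set.insert_subset_iff,
      Set.singleton_subset_iff, SetLike.mem_coe] at hP ⊢
    grind

end Cycle

section TwoCycles

variable {x y : ℕ → R} {n m : ℕ} (hn : 3 ≤ n) (hm : 3 ≤ m) (hx : x n = x 0) (hy : y m = y 0)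
include hn hm hx hy

theorem two_cycles (hxI : walkIdeal x 0 n ≤ I) (hyI : walkIdeal y 0 m ≤ I)
    (h : RadicallyGenerates I ⊥ A s) (hxA : x 0 * x 1 ∈ A) (hyA : y 0 * y 1 ∈ A) :
    RadicallyGenerates I ⊥ (A ⊔ (walkIdeal x 0 n ⊔ walkIdeal y 0 m))
      (s + (2 * (n - 1) / 3 + 2 * (m - 1) / 3)) :=
  h.trans <| ((cycle hn hx hxI).mono (by simpa using hxA) fun _ h _ => h).sup
    ((cycle hm hy hyI).mono (by simpa using hyA) fun _ h _ => h)

theorem cycles_of_leader (hxI : walkIdeal x 0 n ≤ I) (hyI : walkIdeal y 0 m ≤ I) (h1 : n % 3 = 1)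
    (hxy : x 0 = y 0) :
    RadicallyGenerates I ⊥ (walkIdeal x 0 n ⊔ walkIdeal y 0 m)
      (1 + 2 * (n - 1) / 3 + 2 * (m - 1) / 3) := by
  have hedge := walkIdeal_le_iff.1 hyI 0 le_rfl (by omega)
  refine ((cycle_with_leader hn hx hxI h1 hedge ⟨y 1, by rw [hxy]⟩).trans
    ((cycle hm hy hyI).mono (by simp) fun _ h _ => h)).mono
    le_rfl fun P hP _ => ?_
  exact sup_le (le_sup_left.trans (le_sup_left.trans hP)) (le_sup_right.trans hP)

theorem vertexJoin (hxy : x 0 = y 0) :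
    RadicallyGenerates (walkIdeal x 0 n ⊔ walkIdeal y 0 m) ⊥ (walkIdeal x 0 n ⊔ walkIdeal y 0 m)
      (vertexJoinRank n m) := by
  set I := walkIdeal x 0 n ⊔ walkIdeal y 0 m
  have hxI : walkIdeal x 0 n ≤ I := le_sup_left
  have hyI : walkIdeal y 0 m ≤ I := le_sup_right
  by_cases h : n % 3 = 1
  · convert cycles_of_leader hn hm hx hy hxI hyI h hxy using 1
    unfold vertexJoinRank
    omega
  by_cases h' : m % 3 = 1
  · convert cycles_of_leader hm hn hy hx hyI hxI h' hxy.symm using 1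
    · exact sup_comm _ _
    · unfold vertexJoinRank
      omega
  · have hedges := (single ⊥ (walkIdeal_le_iff.1 hxI 0 le_rfl (by omega))).sup
      (single ⊥ (walkIdeal_le_iff.1 hyI 0 le_rfl (by omega)))
    convert (two_cycles hn hm hx hy hxI hyI hedges (by simp [Ideal.mem_sup_left])
      (by simp [Ideal.mem_sup_right])).mono le_rfl fun P hP _ => le_sup_right.trans hP using 1
    unfold vertexJoinRank
    omega

section PathJoin

variable {v : ℕ → R} {k : ℕ} (hyv₀ : v 0 = y 1) (hyv₁ : v 1 = y 0) (hxv₀ : v (k + 2) = x 0)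
  (hxv₁ : v (k + 3) = x 1) (hxI : walkIdeal x 0 n ≤ I) (hyI : walkIdeal y 0 m ≤ I)
  (hvI : walkIdeal v 0 (k + 3) ≤ I)
include hyv₀ hyv₁ hxv₀ hxv₁ hxI hyI hvI

theorem pathJoin_of_walk : RadicallyGenerates I ⊥
    (walkIdeal x 0 n ⊔ walkIdeal y 0 m ⊔ walkIdeal v 1 (k + 2))
    (k + 3 - (k + 3) / 3 + (2 * (n - 1) / 3 + 2 * (m - 1) / 3)) := by
  have hwalk := walk ⊥ 0 (k + 3) (by simpa using hvI)
  rw [zero_add] at hwalk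
  refine (two_cycles hn hm hx hy hxI hyI hwalk ?_ ?_).mono le_rfl fun P hP _ => ?_
  · rw [← hxv₀, ← hxv₁]
    exact mul_mem_walkIdeal v (by omega) (by omega)
  · rw [← hyv₀, ← hyv₁, mul_comm]
    exact mul_mem_walkIdeal v (by omega) (by omega)
  · obtain ⟨hvP, hP⟩ := sup_le_iff.1 hP
    exact sup_le hP ((walkIdeal_mono v (by omega) (by omega)).trans hvP)

omit hxv₁ in
theorem pathJoin_of_leader_left (h : n % 3 = 1) : RadicallyGenerates I ⊥
    (walkIdeal x 0 n ⊔ walkIdeal y 0 m ⊔ walkIdeal v 1 (k + 2))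
    (1 + 2 * (n - 1) / 3 + (k + 1 - (k + 1) / 3) + 2 * (m - 1) / 3) := by
  have hleader := cycle_with_leader (J := ⊥) hn hx hxI h
    (walkIdeal_le_iff.1 hvI (k + 1) (by omega) (by omega)) ⟨v (k + 1), by rw [hxv₀, mul_comm]⟩
  have hwalk := walk ⊥ 0 (k + 1) ((walkIdeal_mono v (by omega) (by omega)).trans hvI)
  have hyw : y 0 * y 1 ∈ walkIdeal v 0 (0 + (k + 1)) := by
    rw [← hyv₀, ← hyv₁, mul_comm]
    exact mul_mem_walkIdeal v le_rfl (by omega)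
  refine ((hleader.sup hwalk).trans ((cycle hm hy hyI).mono
    (by simpa using Ideal.mem_sup_right hyw) fun _ h _ => h)).mono le_rfl fun P hP _ => ?_
  simp only [sup_le_iff, walkIdeal_le_iff, Ideal.span_singleton_le_iff_mem] at hP ⊢
  grind

omit hyv₀ in
theorem pathJoin_of_leader_right (h : m % 3 = 1) : RadicallyGenerates I ⊥
    (walkIdeal x 0 n ⊔ walkIdeal y 0 m ⊔ walkIdeal v 1 (k + 2))
    (1 + 2 * (m - 1) / 3 + (k + 1 - (k + 1) / 3) + 2 * (n - 1) / 3) := by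
  have hleader := cycle_with_leader (J := ⊥) hm hy hyI h
    (walkIdeal_le_iff.1 hvI 1 (by omega) (by omega)) ⟨v 2, by rw [hyv₁]⟩
  have hwalk := walk ⊥ 2 (k + 1) ((walkIdeal_mono v (by omega) (by omega)).trans hvI)
  have hxw : x 0 * x 1 ∈ walkIdeal v 2 (2 + (k + 1)) := by
    rw [← hxv₀, ← hxv₁]
    exact mul_mem_walkIdeal v (by omega) (by omega)
  refine ((hleader.sup hwalk).trans ((cycle hn hx hxI).mono
    (by simpa using Ideal.mem_sup_right hxw) fun _ h _ => h)).mono le_rfl fun P hP _ => ?_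
  simp only [sup_le_iff, walkIdeal_le_iff, Ideal.span_singleton_le_iff_mem] at hP ⊢
  grind

omit hyv₀ hxv₁ in
theorem pathJoin_of_leaders (hk : 0 < k) (h : n % 3 = 1) (h' : m % 3 = 1) : RadicallyGenerates I ⊥
    (walkIdeal x 0 n ⊔ walkIdeal y 0 m ⊔ walkIdeal v 1 (k + 2))
    (1 + 2 * (n - 1) / 3 + (1 + 2 * (m - 1) / 3) + (k - 1 - (k - 1) / 3)) := by
  have hleader := cycle_with_leader (J := ⊥) hn hx hxI h
    (walkIdeal_le_iff.1 hvI (k + 1) (by omega) (by omega)) ⟨v (k + 1), by rw [hxv₀, mul_comm]⟩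
  have hleader' := cycle_with_leader (J := ⊥) hm hy hyI h'
    (walkIdeal_le_iff.1 hvI 1 (by omega) (by omega)) ⟨v 2, by rw [hyv₁]⟩
  have hwalk := walk ⊥ 2 (k - 1) ((walkIdeal_mono v (by omega) (by omega)).trans hvI)
  refine ((hleader.sup hleader').sup hwalk).mono le_rfl fun P hP _ => ?_
  simp only [sup_le_iff, walkIdeal_le_iff, Ideal.span_singleton_le_iff_mem] at hP ⊢
  grind

end PathJoin

theorem pathJoin {v : ℕ → R} {k : ℕ} (hyv₀ : v 0 = y 1) (hyv₁ : v 1 = y 0)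
    (hxv₀ : v (k + 2) = x 0) (hxv₁ : v (k + 3) = x 1) :
    RadicallyGenerates (walkIdeal x 0 n ⊔ walkIdeal y 0 m ⊔ walkIdeal v 1 (k + 2)) ⊥
      (walkIdeal x 0 n ⊔ walkIdeal y 0 m ⊔ walkIdeal v 1 (k + 2)) (pathJoinRank n m k) := by
  have hxI : walkIdeal x 0 n ≤ walkIdeal x 0 n ⊔ walkIdeal y 0 m ⊔ walkIdeal v 1 (k + 2) :=
    le_sup_left.trans le_sup_left
  have hyI : walkIdeal y 0 m ≤ walkIdeal x 0 n ⊔ walkIdeal y 0 m ⊔ walkIdeal v 1 (k + 2) :=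
    le_sup_right.trans le_sup_left
  have hvI : walkIdeal v 0 (k + 3) ≤
      walkIdeal x 0 n ⊔ walkIdeal y 0 m ⊔ walkIdeal v 1 (k + 2) := by
    refine walkIdeal_le_iff.2 fun i _ hi => ?_
    obtain rfl | rfl | hi : i = 0 ∨ i = k + 2 ∨ 1 ≤ i ∧ i < k + 2 := by omega
    · rw [hyv₀, hyv₁, mul_comm]
      exact hyI (mul_mem_walkIdeal y le_rfl (by omega))
    · rw [hxv₀, hxv₁]
      exact hxI (mul_mem_walkIdeal x le_rfl (by omega))
    · exact Ideal.mem_sup_right (mul_mem_walkIdeal v hi.1 hi.2)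
  by_cases hleaders : k % 3 = 1 ∧ n % 3 = 1 ∧ m % 3 = 1
  · convert pathJoin_of_leaders hn hm hx hy hyv₁ hxv₀ hxI hyI hvI
      (by omega) hleaders.2.1 hleaders.2.2 using 1
    unfold pathJoinRank
    split_ifs <;> omega
  by_cases hleft : k % 3 = 2 ∧ n % 3 = 1
  · convert pathJoin_of_leader_left hn hm hx hy hyv₀ hyv₁ hxv₀ hxI hyI hvI hleft.2 using 1
    unfold pathJoinRank
    split_ifs <;> omega
  by_cases hright : k % 3 = 2 ∧ m % 3 = 1
  · convert pathJoin_of_leader_right hn hm hx hy hyv₁ hxv₀ hxv₁ hxI hyI hvI hright.2 using 1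
    unfold pathJoinRank
    split_ifs <;> omega
  · convert pathJoin_of_walk hn hm hx hy hyv₀ hyv₁ hxv₀ hxv₁ hxI hyI hvI using 1
    unfold pathJoinRank
    split_ifs <;> omega

end TwoCycles

end RadicallyGenerates

end RadicalGeneration

section Bicyclic

section ValEdgeIdeal

variable {K : Type} [Field K] {N : ℕ} {E : ℕ → ℕ → Prop}
  (hE : ∀ u v, E u v → u < N ∧ v < N ∧ u ≠ v)
include hE

theorem edgeIdeal_val_le_iff [NeZero N] {P : Ideal (MvPolynomial (ZMod N) K)} :
    edgeIdeal K (ZMod.val (n := N)) E ≤ P ↔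
      ∀ u v : ℕ, E u v → X (u : ZMod N) * X (v : ZMod N) ∈ P := by
  refine Ideal.span_le.trans ⟨fun h u v huv => ?_, ?_⟩
  · obtain ⟨hu, hv, -⟩ := hE u v huv
    refine h ⟨u, v, ?_, rfl⟩
    rwa [ZMod.val_natCast_of_lt hu, ZMod.val_natCast_of_lt hv]
  · rintro h _ ⟨s, t, hst, rfl⟩
    simpa using h _ _ hst

theorem projDim_and_araRank_edgeIdeal_val [NeZero N] {W : Set ℕ} {q : ℕ} (hq : 2 ≤ q)
    (hW : ∀ v ∈ W, v < N) (hb : Branching E q) (h : HasEdgeCoverCohomology K E W q)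
    (hf : ∃ f : Fin q → MvPolynomial (ZMod N) K,
      (Ideal.span (Set.range f)).radical = (edgeIdeal K (ZMod.val (n := N)) E).radical) :
    projDim (MvPolynomial (ZMod N) K)
        (MvPolynomial (ZMod N) K ⧸ edgeIdeal K (ZMod.val (n := N)) E) = q ∧
      araRank (edgeIdeal K (ZMod.val (n := N)) E) = q := by
  obtain ⟨q, rfl⟩ := Nat.exists_eq_add_of_le' hq
  have mem_range {u : ℕ} (hu : u < N) : u ∈ Set.range (ZMod.val (n := N)) :=
    ⟨u, ZMod.val_natCast_of_lt hu⟩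
  have hφ := ZMod.val_injective N
  have hrange := fun u v huv => (hE u v huv).imp mem_range (And.imp_left mem_range)
  have hW := fun v hv => mem_range (hW v hv)
  exact ⟨projDim_edgeIdeal hφ hrange hW hb h,
    le_antisymm (Nat.sInf_le hf) (h.le_araRank_edgeIdeal hφ hrange hW)⟩

end ValEdgeIdeal

/-- The vertices of the closed walk around the cycle on `lo, …, lo + n - 1`. -/
def cycleWalk (lo n i : ℕ) : ℕ := if i < n then lo + i else lo

/-- The vertices of the closed walk from `0` around the second cycle of the vertex join. -/
def secondCycleWalk (n m i : ℕ) : ℕ := if i = 0 ∨ m ≤ i then 0 else n + i - 1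

/-- The vertices of the connecting path of the path join, extended at either end by one edge of
the adjacent cycle. -/
def bridgeWalk (n m k i : ℕ) : ℕ :=
  if i = 0 then n + 1 else if i = 1 then n else if i < k + 2 then n + m + (i - 2) else
    if i = k + 2 then 0 else 1

theorem cycleE_iff {lo n u v : ℕ} (hn : 0 < n) :
    CycleE lo n u v ↔ ∃ i < n, u = cycleWalk lo n i ∧ v = cycleWalk lo n (i + 1) := by
  simp only [CycleE, PathE, cycleWalk]
  constructor
  · rintro (⟨rfl, h⟩ | ⟨rfl, rfl⟩)
    · exact ⟨u - lo, by grind⟩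
    · exact ⟨n - 1, by grind⟩
  · grind

theorem forall_cycleE_iff {p : ℕ → ℕ → Prop} {lo n : ℕ} : (∀ u v, CycleE lo n u v → p u v) ↔
    (∀ u, lo ≤ u ∧ u < lo + n - 1 → p u (u + 1)) ∧ p (lo + n - 1) lo := by
  simp only [CycleE, PathE]
  grind

theorem vertexJoinE_iff {n m u v : ℕ} (hn : 0 < n) (hm : 2 ≤ m) : VertexJoinE n m u v ↔
    (∃ i < n, u = cycleWalk 0 n i ∧ v = cycleWalk 0 n (i + 1)) ∨
      ∃ i < m, u = secondCycleWalk n m i ∧ v = secondCycleWalk n m (i + 1) := by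
  rw [VertexJoinE, cycleE_iff hn]
  refine or_congr_right ?_
  simp only [PathE, secondCycleWalk]
  constructor
  · rintro (⟨rfl, rfl⟩ | ⟨rfl, h⟩ | ⟨rfl, rfl⟩)
    · exact ⟨0, by grind⟩
    · exact ⟨u + 1 - n, by grind⟩
    · exact ⟨m - 1, by grind⟩
  · grind

theorem exists_bridgeWalk_iff {n m k u v : ℕ} :
    (∃ i, 1 ≤ i ∧ i < k + 2 ∧ u = bridgeWalk n m k i ∧ v = bridgeWalk n m k (i + 1)) ↔
      (PathE (n + m) k u v ∨ 0 < k ∧ u = n + m + k - 1 ∧ v = 0) ∨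
        0 < k ∧ u = n ∧ v = n + m ∨ k = 0 ∧ u = n ∧ v = 0 := by
  simp only [PathE, bridgeWalk]
  constructor
  · rintro ⟨i, hi⟩
    grind
  · rintro ((⟨rfl, h⟩ | ⟨hk, rfl, rfl⟩) | ⟨hk, rfl, rfl⟩ | ⟨rfl, rfl, rfl⟩)
    · exact ⟨u - (n + m) + 2, by grind⟩
    · exact ⟨k + 1, by grind⟩
    · exact ⟨1, by grind⟩
    · exact ⟨1, by grind⟩

theorem pathJoinE_iff {n m k u v : ℕ} : PathJoinE n m k u v ↔
    CycleE 0 n u v ∨ CycleE n m u v ∨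
      ∃ i, 1 ≤ i ∧ i < k + 2 ∧ u = bridgeWalk n m k i ∧ v = bridgeWalk n m k (i + 1) := by
  rw [PathJoinE, LolliE, exists_bridgeWalk_iff]
  tauto

theorem pathJoinVertex_eq_bridgeWalk {n m k j : ℕ} (hj : j < k + 2) :
    pathJoinVertex n m k j = (bridgeWalk n m k (j + 1) : ℕ) := by
  rcases j with _ | j
  · simp [pathJoinVertex, bridgeWalk]
  · obtain rfl | hjk : j = k ∨ j < k := by omega
    · simp [pathJoinVertex, bridgeWalk]
    · simp [pathJoinVertex, bridgeWalk, hjk, hjk.ne, ← add_assoc]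

variable {n m : ℕ} (hn : 3 ≤ n) (hm : 3 ≤ m)
include hn hm

theorem VertexJoinE.bounds {u v : ℕ} (h : VertexJoinE n m u v) :
    u < n + m - 1 ∧ v < n + m - 1 ∧ u ≠ v := by
  simp only [VertexJoinE, CycleE, PathE] at h
  omega

theorem PathJoinE.bounds {k u v : ℕ} (h : PathJoinE n m k u v) :
    u < n + m + k ∧ v < n + m + k ∧ u ≠ v := by
  simp only [PathJoinE, LolliE, CycleE, PathE] at h
  omega

variable (K : Type) [Field K]

theorem edgeIdeal_vertexJoinE [NeZero (n + m - 1)] :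
    edgeIdeal K (ZMod.val (n := n + m - 1)) (VertexJoinE n m) =
      walkIdeal (fun i => X (cycleWalk 0 n i : ZMod (n + m - 1))) 0 n ⊔
      walkIdeal (fun i => X (secondCycleWalk n m i : ZMod (n + m - 1))) 0 m := by
  refine eq_of_forall_ge_iff fun P => ?_
  rw [edgeIdeal_val_le_iff fun u v => VertexJoinE.bounds hn hm]
  simp only [sup_le_iff, walkIdeal_le_iff, vertexJoinE_iff (by omega : 0 < n) (by omega : 2 ≤ m)]
  grind

theorem edgeIdeal_pathJoinE (k : ℕ) [NeZero (n + m + k)] :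
    edgeIdeal K (ZMod.val (n := n + m + k)) (PathJoinE n m k) =
      walkIdeal (fun i => X (cycleWalk 0 n i : ZMod (n + m + k))) 0 n ⊔
      walkIdeal (fun i => X (cycleWalk n m i : ZMod (n + m + k))) 0 m ⊔
      walkIdeal (fun i => X (bridgeWalk n m k i : ZMod (n + m + k))) 1 (k + 2) := by
  refine eq_of_forall_ge_iff fun P => ?_
  rw [edgeIdeal_val_le_iff fun u v => PathJoinE.bounds hn hm]
  simp only [sup_le_iff, walkIdeal_le_iff, pathJoinE_iff, cycleE_iff (by omega : 0 < n),
    cycleE_iff (by omega : 0 < m)]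
  grind

theorem vertexJoinIdeal_eq_edgeIdeal [NeZero (n + m - 1)] :
    vertexJoinIdeal K n m = edgeIdeal K (ZMod.val (n := n + m - 1)) (VertexJoinE n m) := by
  refine eq_of_forall_ge_iff fun P => ?_
  rw [edgeIdeal_val_le_iff fun u v => VertexJoinE.bounds hn hm, vertexJoinIdeal, Ideal.span_le]
  have h0 : (0 : ZMod (n + m - 1)) = (0 : ℕ) := Nat.cast_zero.symm
  obtain ⟨x, hx⟩ : ∃ x : ℕ → MvPolynomial (ZMod (n + m - 1)) K, ∀ u : ℕ, X (u : ZMod _) = x u :=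
    ⟨_, fun _ => rfl⟩
  simp only [h0, hx, Set.union_subset_iff, Set.image_subset_iff, Set.singleton_subset_iff,
    SetLike.mem_coe, VertexJoinE, CycleE, PathE]
  simp only [Set.subset_def, Set.mem_preimage, Set.mem_Iio, Set.mem_Ico, SetLike.mem_coe]
  grind

theorem pathJoinIdeal_eq_edgeIdeal (k : ℕ) [NeZero (n + m + k)] :
    pathJoinIdeal K n m k = edgeIdeal K (ZMod.val (n := n + m + k)) (PathJoinE n m k) := by
  refine eq_of_forall_ge_iff fun P => ?_
  rw [edgeIdeal_val_le_iff fun u v => PathJoinE.bounds hn hm, pathJoinIdeal, Ideal.span_le]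
  have h0 : (0 : ZMod (n + m + k)) = (0 : ℕ) := Nat.cast_zero.symm
  obtain ⟨x, hx⟩ : ∃ x : ℕ → MvPolynomial (ZMod (n + m + k)) K, ∀ u : ℕ, X (u : ZMod _) = x u :=
    ⟨_, fun _ => rfl⟩
  have hbridge (j : ℕ) (hj : j < k + 2) :
      X (pathJoinVertex n m k j) = x (bridgeWalk n m k (j + 1)) := by
    rw [pathJoinVertex_eq_bridgeWalk hj, hx]
  have hpath : (∀ j < k + 1, X (pathJoinVertex n m k j) * X (pathJoinVertex n m k (j + 1)) ∈ P) ↔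
      ∀ i, 1 ≤ i → i < k + 2 → x (bridgeWalk n m k i) * x (bridgeWalk n m k (i + 1)) ∈ P := by
    refine ⟨fun h i hi hik => ?_, fun h j hj => ?_⟩
    · obtain ⟨j, rfl⟩ := Nat.exists_eq_add_of_le' hi
      simpa only [hbridge j (by omega), hbridge (j + 1) hik] using h j (by omega)
    · rw [hbridge j (by omega), hbridge (j + 1) (by omega)]
      exact h (j + 1) (by omega) (by omega)
  simp only [h0, hx, Set.union_subset_iff, Set.image_subset_iff, Set.singleton_subset_iff,
    SetLike.mem_coe, pathJoinE_iff, or_imp, forall_and]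
  simp only [Set.subset_def, Set.mem_preimage, Set.mem_Iio, Set.mem_Ico, SetLike.mem_coe, hpath,
    forall_cycleE_iff, zero_le, zero_add, true_and, and_assoc]
  grind

omit hn in
theorem two_le_vertexJoinRank : 2 ≤ vertexJoinRank n m := by
  unfold vertexJoinRank
  omega

theorem two_le_pathJoinRank (k : ℕ) : 2 ≤ pathJoinRank n m k := by
  unfold pathJoinRank
  omega

theorem projDim_and_araRank_vertexJoinIdeal :
    projDim (MvPolynomial (ZMod (n + m - 1)) K)
        (MvPolynomial (ZMod (n + m - 1)) K ⧸ vertexJoinIdeal K n m) = vertexJoinRank n m ∧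
      araRank (vertexJoinIdeal K n m) = vertexJoinRank n m := by
  have : NeZero (n + m - 1) := ⟨by omega⟩
  obtain ⟨W, hW, hcoh⟩ := exists_hasEdgeCoverCohomology_vertexJoin K hn hm
  rw [vertexJoinIdeal_eq_edgeIdeal hn hm]
  refine projDim_and_araRank_edgeIdeal_val (fun u v => VertexJoinE.bounds hn hm)
    (two_le_vertexJoinRank hm) hW (branching_vertexJoin hn hm) hcoh ?_
  rw [edgeIdeal_vertexJoinE hn hm]
  refine (RadicallyGenerates.vertexJoin hn hm ?_ ?_ ?_).exists_radical_eq <;>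
    simp [cycleWalk, secondCycleWalk]

theorem projDim_and_araRank_pathJoinIdeal (k : ℕ) :
    projDim (MvPolynomial (ZMod (n + m + k)) K)
        (MvPolynomial (ZMod (n + m + k)) K ⧸ pathJoinIdeal K n m k) = pathJoinRank n m k ∧
      araRank (pathJoinIdeal K n m k) = pathJoinRank n m k := by
  have : NeZero (n + m + k) := ⟨by omega⟩
  obtain ⟨W, hW, hcoh⟩ := exists_hasEdgeCoverCohomology_pathJoin K k hn hm
  rw [pathJoinIdeal_eq_edgeIdeal hn hm]
  refine projDim_and_araRank_edgeIdeal_val (fun u v => PathJoinE.bounds hn hm)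
    (two_le_pathJoinRank hn hm k) hW (branching_pathJoin hn hm) hcoh ?_
  rw [edgeIdeal_pathJoinE hn hm]
  refine (RadicallyGenerates.pathJoin hn hm ?_ ?_ ?_ ?_ ?_ ?_).exists_radical_eq <;>
    simp [cycleWalk, bridgeWalk] <;> grind

end Bicyclic

/-- For any bicyclic graph `G` — two cycles `Cₙ`, `C_m` (`n, m ≥ 3`) either sharing
exactly one vertex, or connected by a path (with `k ≥ 0` internal vertices) — the
arithmetical rank of the edge ideal `I(G)` equals the projective dimension of
`R/I(G)`; in particular the projective dimension does not depend on the field. -/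
theorem bicyclic_ara_eq_pd (K K' : Type) [Field K] [Field K'] (n m k : ℕ)
    (hn : 3 ≤ n) (hm : 3 ≤ m) :
    (((araRank (vertexJoinIdeal K n m) : ℕ) : ℕ∞) =
        projDim (MvPolynomial (ZMod (n + m - 1)) K)
          (MvPolynomial (ZMod (n + m - 1)) K ⧸ vertexJoinIdeal K n m)) ∧
      (projDim (MvPolynomial (ZMod (n + m - 1)) K)
          (MvPolynomial (ZMod (n + m - 1)) K ⧸ vertexJoinIdeal K n m) =
        projDim (MvPolynomial (ZMod (n + m - 1)) K')
          (MvPolynomial (ZMod (n + m - 1)) K' ⧸ vertexJoinIdeal K' n m)) ∧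
      (((araRank (pathJoinIdeal K n m k) : ℕ) : ℕ∞) =
        projDim (MvPolynomial (ZMod (n + m + k)) K)
          (MvPolynomial (ZMod (n + m + k)) K ⧸ pathJoinIdeal K n m k)) ∧
      (projDim (MvPolynomial (ZMod (n + m + k)) K)
          (MvPolynomial (ZMod (n + m + k)) K ⧸ pathJoinIdeal K n m k) =
        projDim (MvPolynomial (ZMod (n + m + k)) K')
          (MvPolynomial (ZMod (n + m + k)) K' ⧸ pathJoinIdeal K' n m k)) := by
  obtain ⟨hpd, hara⟩ := projDim_and_araRank_vertexJoinIdeal hn hm K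
  obtain ⟨hpd', -⟩ := projDim_and_araRank_vertexJoinIdeal hn hm K'
  obtain ⟨hpd_path, hara_path⟩ := projDim_and_araRank_pathJoinIdeal hn hm K k
  obtain ⟨hpd_path', -⟩ := projDim_and_araRank_pathJoinIdeal hn hm K' k
  rw [hpd, hpd', hara, hpd_path, hpd_path', hara_path]
  exact ⟨rfl, rfl, rfl, rfl⟩
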